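/- arXiv:2402.09647 — 2 statements merged into one kernel-verified Lean document; each statement's English description precedes it below -/
import Mathlib

section
/- Let α, β ∈ ℝ with β ≠ 0 and such that 1, α, α² are linearly independent over ℚ, and let g : ℤ → ℤ be given by g(n) = ⌊β·n·⌊α·n⌉⌉. Then the first-order theory of the structure (ℤ; +, 1, g) is undecidable; that is, the set of sentences of the first-order language with one binary function symbol +, one constant symbol 1, and one unary function symbol g that are true in ℤ (with the standard addition, the constant interpreted as 1, and g interpreted as above) is not a computable set of sentences (under an effective encoding of sentences). -/
/-!
STATEMENT 1: Let α, β ∈ ℝ with β ≠ 0 and 1, α, α² linearly independent over ℚ, and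
g : ℤ → ℤ given by g(n) = ⌊β·n·⌊α·n⌉⌉ (nearest integers). Then the first-order theory
of (ℤ; +, 1, g) is undecidable.
-/

open FirstOrder Language

namespace Stmt1

/-- The language with one constant `1`, one binary function `+`,
and one unary function `g`. -/
def L : Language :=
  ⟨fun n => match n with | 0 => Unit | 1 => Unit | 2 => Unit | _ => Empty,
   fun _ => Empty⟩

instance instEncF : (n : ℕ) → Encodable (L.Functions n)
  | 0 => inferInstanceAs (Encodable Unit)
  | 1 => inferInstanceAs (Encodable Unit)
  | 2 => inferInstanceAs (Encodable Unit)
  | (_ + 3) => inferInstanceAs (Encodable Empty)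

instance instEncR : (n : ℕ) → Encodable (L.Relations n) :=
  fun _ => inferInstanceAs (Encodable Empty)

/-- Partial inverse to `BoundedFormula.listEncode` on sentences. -/
def decodeSentence
    (l : List ((Σ k, L.Term (Empty ⊕ Fin k)) ⊕ ((Σ n, L.Relations n) ⊕ ℕ))) :
    Option L.Sentence :=
  (BoundedFormula.listDecode l)[0]?.bind
    (fun x => if h : x.1 = 0 then
      some (cast (congrArg (L.BoundedFormula Empty) h) x.2) else none)

/-- An effective encoding of sentences (via their encodings as lists of symbols). -/
instance instEncSentence : Encodable L.Sentence :=
  Encodable.ofLeftInjection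
    (fun φ => BoundedFormula.listEncode φ)
    decodeSentence
    (fun φ => by
      have h := BoundedFormula.listDecode_encode_list (L := L) (α := Empty) [⟨0, φ⟩]
      rw [List.flatMap_singleton] at h
      have h' : BoundedFormula.listDecode (BoundedFormula.listEncode φ) =
          [⟨0, φ⟩] := h
      simp [decodeSentence, h'])

/-- The structure on ℤ interpreting `+`, `1` and `g`. -/
def S (g : ℤ → ℤ) : L.Structure ℤ where
  funMap {n} f x :=
    match n, f with
    | 0, _ => 1
    | 1, _ => g (x 0)
    | 2, _ => x 0 + x 1
  RelMap {n} r _ := nomatch r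

/-- The first-order theory of (ℤ; +, 1, g), as a set of codes of sentences. -/
def theoryCodes (g : ℤ → ℤ) : Set ℕ :=
  {c | ∃ φ : L.Sentence, Encodable.encode φ = c ∧ @Sentence.Realize L ℤ (S g) φ}

/-! ### Definability framework -/

/-- Definability of a predicate on valuations `ℕ → M`, where `M` is embedded in `ℤ` by `e`. -/
def DP (g : ℤ → ℤ) {M : Type} (e : M → ℤ) (P : (ℕ → M) → Prop) : Prop :=
  ∃ φ : L.Formula ℕ, ∀ v : ℕ → M, @Formula.Realize L ℤ (S g) ℕ φ (fun i => e (v i)) ↔ P v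

/-- The range of the embedding is definable. -/
class HR (g : ℤ → ℤ) {M : Type} (e : M → ℤ) : Prop where
  out : ∃ φ : L.Formula ℕ, ∀ v : ℕ → ℤ, @Formula.Realize L ℤ (S g) ℕ φ v ↔ ∃ m, e m = v 0

section fw

variable {g : ℤ → ℤ} {M : Type} {e : M → ℤ}

theorem DP.not {P : (ℕ → M) → Prop} (h : DP g e P) : DP g e (fun v => ¬ P v) := by
  obtain ⟨φ, h⟩ := h
  let _ := S g
  exact ⟨φ.not, fun v => by rw [Formula.realize_not, h]⟩

theorem DP.and {P Q : (ℕ → M) → Prop} (h : DP g e P) (h' : DP g e Q) :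
    DP g e (fun v => P v ∧ Q v) := by
  obtain ⟨φ, h⟩ := h
  obtain ⟨ψ, h'⟩ := h'
  let _ := S g
  exact ⟨φ ⊓ ψ, fun v => by rw [Formula.realize_inf, h, h']⟩

theorem DP.congr {P Q : (ℕ → M) → Prop} (h : DP g e P) (h' : ∀ v, P v ↔ Q v) : DP g e Q := by
  obtain ⟨φ, h⟩ := h
  exact ⟨φ, fun v => (h v).trans (h' v)⟩

theorem DP.or {P Q : (ℕ → M) → Prop} (h : DP g e P) (h' : DP g e Q) :
    DP g e (fun v => P v ∨ Q v) :=
  (h.not.and h'.not).not.congr fun v => by tauto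

theorem DP.imp {P Q : (ℕ → M) → Prop} (h : DP g e P) (h' : DP g e Q) :
    DP g e (fun v => P v → Q v) :=
  (h.and h'.not).not.congr fun v => by tauto

theorem DP.iff {P Q : (ℕ → M) → Prop} (h : DP g e P) (h' : DP g e Q) :
    DP g e (fun v => P v ↔ Q v) :=
  ((h.imp h').and (h'.imp h)).congr fun v => by tauto

theorem DP.re {P : (ℕ → M) → Prop} (h : DP g e P) (σ : ℕ → ℕ) :
    DP g e (fun v => P (fun i => v (σ i))) := by
  obtain ⟨φ, h⟩ := h
  let _ := S g
  refine ⟨φ.relabel σ, fun v => ?_⟩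
  rw [Formula.realize_relabel]
  exact h (fun i => v (σ i))

theorem DP.ex [hr : HR g e] {P : (ℕ → M) → M → Prop}
    (h : DP g e (fun v => P (fun i => v (i + 1)) (v 0))) : DP g e (fun v => ∃ x, P v x) := by
  obtain ⟨φ, h⟩ := h
  obtain ⟨ψ, hψ⟩ := hr.out
  let _ := S g
  let σ : ℕ → ℕ ⊕ Fin 1 := fun i => Nat.casesOn i (Sum.inr 0) (fun j => Sum.inl j)
  refine ⟨((φ ⊓ ψ).relabel σ).iExs (Fin 1), fun v => ?_⟩
  rw [Formula.realize_iExs]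
  simp only [Formula.realize_relabel, Formula.realize_inf]
  constructor
  · rintro ⟨i, h1, h2⟩
    obtain ⟨m, hm⟩ := (hψ _).1 h2
    refine ⟨m, ?_⟩
    refine (h (fun i => Nat.casesOn i m v)).1 ?_
    convert h1 using 1
    funext k
    cases k with
    | zero => exact hm
    | succ k => rfl
  · rintro ⟨x, hx⟩
    refine ⟨fun _ => e x, ?_, (hψ _).2 ⟨x, rfl⟩⟩
    have := (h (fun i => Nat.casesOn i x v)).2 hx
    convert this using 1
    funext k
    cases k with
    | zero => rfl
    | succ k => rfl

theorem DP.all [hr : HR g e] {P : (ℕ → M) → M → Prop}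
    (h : DP g e (fun v => P (fun i => v (i + 1)) (v 0))) : DP g e (fun v => ∀ x, P v x) :=
  (DP.ex (P := fun v x => ¬ P v x) h.not).not.congr fun v => by push Not; rfl

/-- Definable functions of a valuation. -/
def DF (g : ℤ → ℤ) {M : Type} (e : M → ℤ) (f : (ℕ → M) → M) : Prop :=
  DP g e (fun v => v 0 = f (fun i => v (i + 1)))

/-- Definable relations of small arity. -/
def R1 (g : ℤ → ℤ) {M : Type} (e : M → ℤ) (Q : M → Prop) : Prop := DP g e (fun v => Q (v 0))
/-- Definable relations of small arity. -/
def R2 (g : ℤ → ℤ) {M : Type} (e : M → ℤ) (Q : M → M → Prop) : Prop :=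
  DP g e (fun v => Q (v 0) (v 1))
/-- Definable relations of small arity. -/
def R3 (g : ℤ → ℤ) {M : Type} (e : M → ℤ) (Q : M → M → M → Prop) : Prop :=
  DP g e (fun v => Q (v 0) (v 1) (v 2))

theorem DP.eq0 (he : Function.Injective e) (i j : ℕ) : DP g e (fun v => v i = v j) := by
  let _ := S g
  refine ⟨Term.equal (Term.var i) (Term.var j), fun v => ?_⟩
  simp [Formula.realize_equal, he.eq_iff]

theorem DF.var (he : Function.Injective e) (i : ℕ) : DF g e (fun v => v i) := DP.eq0 he 0 (i + 1)

variable [HR g e]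

theorem DP.app1 {Q : M → Prop} (hQ : R1 g e Q) {f : (ℕ → M) → M} (hf : DF g e f) :
    DP g e (fun v => Q (f v)) :=
  (DP.ex (P := fun v x => x = f v ∧ Q x) (DP.and hf hQ)).congr fun v => by simp

theorem DF.shift {f : (ℕ → M) → M} (hf : DF g e f) : DF g e (fun v => f (fun i => v (i + 1))) :=
  DP.re hf (fun i => if i = 0 then 0 else i + 1)

theorem DP.app2 {Q : M → M → Prop} (hQ : R2 g e Q) {f h : (ℕ → M) → M} (hf : DF g e f)
    (hh : DF g e h) : DP g e (fun v => Q (f v) (h v)) :=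
  (DP.ex (P := fun v y => y = h v ∧ ∃ x, x = f v ∧ Q x y) (DP.and hh
    (DP.ex (P := fun v x => x = f (fun i => v (i + 1)) ∧ Q x (v 0))
      (DP.and hf.shift hQ)))).congr fun v => by simp

theorem DP.app3 {Q : M → M → M → Prop} (hQ : R3 g e Q) {f h k : (ℕ → M) → M} (hf : DF g e f)
    (hh : DF g e h) (hk : DF g e k) : DP g e (fun v => Q (f v) (h v) (k v)) :=
  (DP.ex (P := fun v z => z = k v ∧ ∃ y, y = h v ∧ ∃ x, x = f v ∧ Q x y z) (DP.and hk
    (DP.ex (P := fun v y => y = h (fun i => v (i + 1)) ∧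
        ∃ x, x = f (fun i => v (i + 1)) ∧ Q x y (v 0))
      (DP.and hh.shift
       (DP.ex (P := fun v x => x = f (fun i => v (i + 1 + 1)) ∧ Q x (v 0) (v 1))
        (DP.and hf.shift.shift hQ)))))).congr fun v => by simp

/-- Definable unary functions. -/
def F1 (g : ℤ → ℤ) {M : Type} (e : M → ℤ) (f : M → M) : Prop := R2 g e (fun y x => y = f x)
/-- Definable binary functions. -/
def F2 (g : ℤ → ℤ) {M : Type} (e : M → ℤ) (f : M → M → M) : Prop :=
  R3 g e (fun z x y => z = f x y)

theorem DF.app1 (he : Function.Injective e) {F : M → M} (hF : F1 g e F) {f : (ℕ → M) → M}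
    (hf : DF g e f) : DF g e (fun v => F (f v)) :=
  DP.app2 hF (DF.var he 0) hf.shift

theorem DF.app2 (he : Function.Injective e) {F : M → M → M} (hF : F2 g e F)
    {f h : (ℕ → M) → M} (hf : DF g e f) (hh : DF g e h) : DF g e (fun v => F (f v) (h v)) :=
  DP.app3 hF (DF.var he 0) hf.shift hh.shift

theorem DP.eq (he : Function.Injective e) {f h : (ℕ → M) → M} (hf : DF g e f) (hh : DF g e h) :
    DP g e (fun v => f v = h v) :=
  DP.app2 (Q := fun x y => x = y) (DP.eq0 he 0 1) hf hh

theorem DF.const (he : Function.Injective e) {c : M} (hc : R1 g e (fun x => x = c)) :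
    DF g e (fun _ => c) :=
  DP.app1 hc (DF.var he 0)

end fw

instance HRid (g : ℤ → ℤ) : HR g (id : ℤ → ℤ) := by
  refine ⟨?_⟩
  let _ := S g
  exact ⟨⊤, fun v => by simp⟩

/-! ### Arithmetic definability of partial recursive functions -/

section natdef

variable {g : ℤ → ℤ} {e : ℕ → ℤ} [HR g e]

theorem nat_zero (he : Function.Injective e) (hadd : F2 g e (fun x y => x + y)) :
    DF g e (fun _ => 0) := by
  refine DF.const he ?_
  refine (DP.eq he (DF.app2 he hadd (DF.var he 0) (DF.var he 0)) (DF.var he 0)).congr fun v => ?_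
  omega

theorem nat_one (he : Function.Injective e) (hadd : F2 g e (fun x y => x + y))
    (hmul : F2 g e (fun x y => x * y)) : DF g e (fun _ => 1) := by
  refine DF.const he ?_
  refine ((DP.eq he (DF.app2 he hmul (DF.var he 0) (DF.var he 0)) (DF.var he 0)).and
    (DP.eq he (DF.var he 0) (nat_zero he hadd)).not).congr fun v => ?_
  constructor
  · rintro ⟨h1, h2⟩
    exact Nat.eq_of_mul_eq_mul_left (Nat.pos_of_ne_zero h2) (by rw [h1, mul_one])
  · intro h
    rw [h]
    simp

theorem nat_lt (he : Function.Injective e) (hadd : F2 g e (fun x y => x + y))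
    (hmul : F2 g e (fun x y => x * y)) : R2 g e (fun x y => x < y) := by
  have h1 := nat_one he hadd hmul
  refine DP.congr (P := fun v => ∃ z, v 0 + z + 1 = v 1) ?_ fun v => ?_
  · apply DP.ex
    exact DP.eq he (DF.app2 he hadd (DF.app2 he hadd (DF.var he _) (DF.var he _)) h1) (DF.var he _)
  · constructor
    · rintro ⟨z, hz⟩
      omega
    · intro h
      exact ⟨v 1 - v 0 - 1, by omega⟩

theorem nat_pair (he : Function.Injective e) (hadd : F2 g e (fun x y => x + y))
    (hmul : F2 g e (fun x y => x * y)) : F2 g e (fun x y => Nat.pair x y) := by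
  have h1 := nat_one he hadd hmul
  have hl := nat_lt he hadd hmul
  refine DP.congr (P := fun v => (v 1 < v 2 ∧ v 0 = v 2 * v 2 + v 1) ∨
    (¬ v 1 < v 2 ∧ v 0 = v 1 * v 1 + v 1 + v 2)) ?_ fun v => ?_
  · repeat' first
      | with_reducible apply DP.or | with_reducible apply DP.and
      | with_reducible apply DP.not | with_reducible apply DP.app2 hl
      | with_reducible apply DP.eq he | with_reducible apply DF.app2 he hadd
      | with_reducible apply DF.app2 he hmul | with_reducible exact DF.var he _
  · show _ ↔ v 0 = Nat.pair (v 1) (v 2)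
    unfold Nat.pair
    split_ifs with h <;> simp [h]

theorem nat_beta (he : Function.Injective e) (hadd : F2 g e (fun x y => x + y))
    (hmul : F2 g e (fun x y => x * y)) : F2 g e (fun x y => Nat.beta x y) := by
  have h1 := nat_one he hadd hmul
  have hl := nat_lt he hadd hmul
  have hp := nat_pair he hadd hmul
  refine DP.congr (P := fun v => ∃ a b, v 1 = Nat.pair a b ∧ v 0 < (v 2 + 1) * b + 1 ∧
    ∃ q, a = ((v 2 + 1) * b + 1) * q + v 0) ?_ fun v => ?_
  · repeat' first
      | with_reducible apply DP.ex | with_reducible apply DP.and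
      | with_reducible apply DP.app2 hl | with_reducible apply DP.eq he
      | with_reducible apply DF.app2 he hadd | with_reducible apply DF.app2 he hmul
      | with_reducible apply DF.app2 he hp | with_reducible exact DF.var he _
      | with_reducible exact h1
  · constructor
    · rintro ⟨a, b, h, hlt, q, hq⟩
      show v 0 = Nat.beta (v 1) (v 2)
      rw [Nat.beta, h, Nat.unpair_pair, hq]
      simp only
      rw [Nat.mul_add_mod, Nat.mod_eq_of_lt hlt]
    · intro h
      refine ⟨(v 1).unpair.1, (v 1).unpair.2, by rw [Nat.pair_unpair], ?_,
        (v 1).unpair.1 / ((v 2 + 1) * (v 1).unpair.2 + 1), ?_⟩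
      · rw [h]
        exact Nat.mod_lt _ (Nat.succ_pos _)
      · rw [h]
        exact (Nat.div_add_mod _ _).symm

theorem exists_beta (s : ℕ → ℕ) (n : ℕ) : ∃ c, ∀ i ≤ n, Nat.beta c i = s i := by
  refine ⟨Nat.unbeta ((List.range (n + 1)).map s), fun i hi => ?_⟩
  have := Nat.beta_unbeta_coe ((List.range (n + 1)).map s) ⟨i, by simp; omega⟩
  simpa using this

theorem prec_mem (f h : ℕ →. ℕ) (a n y : ℕ) :
    y ∈ (n.rec (f a) fun y IH => do let i ← IH; h (Nat.pair a (Nat.pair y i)) : Part ℕ) ↔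
    ∃ c, Nat.beta c 0 ∈ f a ∧ (∀ j, j < n →
      Nat.beta c (j + 1) ∈ h (Nat.pair a (Nat.pair j (Nat.beta c j)))) ∧ y = Nat.beta c n := by
  have key : y ∈ (n.rec (f a) fun y IH => do let i ← IH; h (Nat.pair a (Nat.pair y i)) : Part ℕ) ↔
    ∃ s : ℕ → ℕ, s 0 ∈ f a ∧ (∀ j, j < n →
      s (j + 1) ∈ h (Nat.pair a (Nat.pair j (s j)))) ∧ y = s n := by
    induction n generalizing y with
    | zero =>
      constructor
      · intro hy
        exact ⟨fun _ => y, hy, by simp, rfl⟩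
      · rintro ⟨s, h0, -, rfl⟩
        exact h0
    | succ n ih =>
      simp only [Part.bind_eq_bind, Part.mem_bind_iff]
      constructor
      · rintro ⟨i, hi, hy⟩
        obtain ⟨s, h0, h1, rfl⟩ := (ih i).1 hi
        refine ⟨fun k => if k ≤ n then s k else y, by simpa using h0, ?_, by simp⟩
        intro j hj
        rcases Nat.lt_succ_iff_lt_or_eq.1 hj with hj | rfl
        · have := h1 j hj
          simp only [hj.le, Nat.succ_le_of_lt hj, if_true]
          simpa [Nat.succ_le_of_lt hj] using this
        · simpa using hy
      · rintro ⟨s, h0, h1, rfl⟩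
        exact ⟨s n, (ih _).2 ⟨s, h0, fun j hj => h1 j (hj.trans (Nat.lt_succ_self n)), rfl⟩,
          h1 n (Nat.lt_succ_self n)⟩
  rw [key]
  constructor
  · rintro ⟨s, h0, h1, rfl⟩
    obtain ⟨c, hc⟩ := exists_beta s n
    refine ⟨c, by rwa [hc 0 (Nat.zero_le _)], fun j hj => ?_, (hc n le_rfl).symm⟩
    rw [hc (j + 1) hj, hc j hj.le]
    exact h1 j hj
  · rintro ⟨c, h⟩
    exact ⟨Nat.beta c, h⟩

theorem partrec_def (he : Function.Injective e) (hadd : F2 g e (fun x y => x + y))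
    (hmul : F2 g e (fun x y => x * y)) {f : ℕ →. ℕ} (hf : Nat.Partrec f) :
    R2 g e (fun x y => y ∈ f x) := by
  have h1 := nat_one he hadd hmul
  have h0 := nat_zero he hadd
  have hl := nat_lt he hadd hmul
  have hp := nat_pair he hadd hmul
  have hb := nat_beta he hadd hmul
  induction hf with
  | zero =>
    refine DP.congr (P := fun v => v 1 = 0) (DP.eq he (DF.var he _) h0) fun v => ?_
    exact Iff.symm Part.mem_some_iff
  | succ =>
    refine DP.congr (P := fun v => v 1 = v 0 + 1)
      (DP.eq he (DF.var he _) (DF.app2 he hadd (DF.var he _) h1)) fun v => ?_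
    exact Iff.symm Part.mem_some_iff
  | left =>
    refine DP.congr (P := fun v => ∃ y, v 0 = Nat.pair (v 1) y) ?_ fun v => ?_
    · repeat' first
        | with_reducible apply DP.ex | with_reducible apply DP.eq he
        | with_reducible apply DF.app2 he hp | with_reducible exact DF.var he _
    · refine Iff.trans ?_ (Iff.symm Part.mem_some_iff)
      constructor
      · rintro ⟨y, h⟩
        show v 1 = (Nat.unpair (v 0)).1
        rw [h, Nat.unpair_pair]
      · intro h
        change v 1 = (Nat.unpair (v 0)).1 at h
        exact ⟨(v 0).unpair.2, by rw [h, Nat.pair_unpair]⟩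
  | right =>
    refine DP.congr (P := fun v => ∃ y, v 0 = Nat.pair y (v 1)) ?_ fun v => ?_
    · repeat' first
        | with_reducible apply DP.ex | with_reducible apply DP.eq he
        | with_reducible apply DF.app2 he hp | with_reducible exact DF.var he _
    · refine Iff.trans ?_ (Iff.symm Part.mem_some_iff)
      constructor
      · rintro ⟨y, h⟩
        show v 1 = (Nat.unpair (v 0)).2
        rw [h, Nat.unpair_pair]
      · intro h
        change v 1 = (Nat.unpair (v 0)).2 at h
        exact ⟨(v 0).unpair.1, by rw [h, Nat.pair_unpair]⟩
  | @pair f k _ _ ihf ihk =>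
    refine DP.congr (P := fun v => ∃ a, a ∈ f (v 0) ∧ ∃ b, b ∈ k (v 0) ∧ v 1 = Nat.pair a b) ?_
      fun v => ?_
    · repeat' first
        | with_reducible apply DP.ex | with_reducible apply DP.and
        | with_reducible apply DP.eq he | with_reducible apply DP.app2 ihf
        | with_reducible apply DP.app2 ihk | with_reducible apply DF.app2 he hp
        | with_reducible exact DF.var he _
    · simp [Seq.seq, eq_comm]
  | @comp f k _ _ ihf ihk =>
    refine DP.congr (P := fun v => ∃ a, a ∈ k (v 0) ∧ v 1 ∈ f a) ?_
      fun v => ?_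
    · repeat' first
        | with_reducible apply DP.ex | with_reducible apply DP.and
        | with_reducible apply DP.eq he | with_reducible apply DP.app2 ihf
        | with_reducible apply DP.app2 ihk | with_reducible apply DF.app2 he hp
        | with_reducible exact DF.var he _
    · exact Part.mem_bind_iff.symm
  | @prec f k _ _ ihf ihk =>
    refine DP.congr (P := fun v => ∃ a n, v 0 = Nat.pair a n ∧
      ∃ c, Nat.beta c 0 ∈ f a ∧ (∀ j, j < n →
      Nat.beta c (j + 1) ∈ k (Nat.pair a (Nat.pair j (Nat.beta c j)))) ∧ v 1 = Nat.beta c n) ?_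
      fun v => ?_
    · repeat' first
        | with_reducible apply DP.ex | with_reducible apply DP.all
        | with_reducible apply DP.and | with_reducible apply DP.imp
        | with_reducible apply DP.app2 hl | with_reducible apply DP.eq he
        | with_reducible apply DP.app2 ihf | with_reducible apply DP.app2 ihk
        | with_reducible apply DF.app2 he hp | with_reducible apply DF.app2 he hb
        | with_reducible apply DF.app2 he hadd | with_reducible exact DF.var he _
        | with_reducible exact h1 | with_reducible exact h0
    · simp only [Nat.unpaired]
      rw [prec_mem]
      constructor
      · rintro ⟨a, n, h, h'⟩
        rw [h, Nat.unpair_pair]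
        exact h'
      · intro h
        exact ⟨_, _, by rw [Nat.pair_unpair], h⟩
  | @rfind f _ ihf =>
    refine DP.congr (P := fun v => 0 ∈ f (Nat.pair (v 0) (v 1)) ∧
      ∀ j, j < v 1 → ∃ z, ¬ z = 0 ∧ z ∈ f (Nat.pair (v 0) j)) ?_
      fun v => ?_
    · repeat' first
        | with_reducible apply DP.ex | with_reducible apply DP.all
        | with_reducible apply DP.and | with_reducible apply DP.not
        | with_reducible apply DP.app2 hl | with_reducible apply DP.app2 ihf
        | with_reducible apply DP.imp | with_reducible apply DP.eq he
        | with_reducible apply DF.app2 he hp | with_reducible apply DF.app2 he hb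
        | with_reducible apply DF.app2 he hadd | with_reducible exact DF.var he _
        | with_reducible exact h1 | with_reducible exact h0
    · show _ ↔ v 1 ∈ Nat.rfind fun n => (fun m => decide (m = 0)) <$> f (Nat.pair (v 0) n)
      refine Iff.trans ?_ Nat.mem_rfind.symm
      simp only [Part.map_eq_map, Part.mem_map_iff, decide_eq_true_eq, decide_eq_false_iff_not]
      constructor
      · rintro ⟨h1, h2⟩
        refine ⟨⟨0, h1, rfl⟩, fun {j} hj => ?_⟩
        obtain ⟨z, hz, hz'⟩ := h2 j hj
        exact ⟨z, hz', hz⟩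
      · rintro ⟨⟨a, h1, rfl⟩, h2⟩
        refine ⟨h1, fun j hj => ?_⟩
        obtain ⟨z, hz, hz'⟩ := h2 hj
        exact ⟨z, hz', hz⟩

end natdef


/-! ### The reduction from the halting problem -/

section red

/-- The constant symbol. -/
def oneF : L.Functions 0 := (() : Unit)

/-- The addition symbol. -/
def addF : L.Functions 2 := (() : Unit)

/-- The term denoting `1`. -/
def t1 : L.Term (Empty ⊕ Fin 1) := Term.func oneF (fun i => i.elim0)

/-- The term denoting `n + 1`. -/
def tm : ℕ → L.Term (Empty ⊕ Fin 1)
  | 0 => t1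
  | n + 1 => Term.func addF ![t1, tm n]

/-- The term `x + 1`. -/
def tx : L.Term (Empty ⊕ Fin 1) := Term.func addF ![Term.var (Sum.inr 0), t1]

/-- The sentence expressing `φ n`. -/
def sen (φ : L.BoundedFormula Empty 1) (n : ℕ) : L.Sentence :=
  ((tx.bdEqual (tm n)).imp φ).all

theorem t1_realize (g : ℤ → ℤ) (v : Empty ⊕ Fin 1 → ℤ) :
    @Term.realize L ℤ (S g) _ v t1 = 1 := rfl

theorem add_realize (g : ℤ → ℤ) (v : Empty ⊕ Fin 1 → ℤ) (s t : L.Term (Empty ⊕ Fin 1)) :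
    @Term.realize L ℤ (S g) _ v (Term.func addF ![s, t]) =
      @Term.realize L ℤ (S g) _ v s + @Term.realize L ℤ (S g) _ v t := rfl

theorem tm_realize (g : ℤ → ℤ) (v : Empty ⊕ Fin 1 → ℤ) (n : ℕ) :
    @Term.realize L ℤ (S g) _ v (tm n) = n + 1 := by
  induction n with
  | zero => simp [tm, t1_realize]
  | succ n ih =>
    rw [tm, add_realize, ih, t1_realize]
    push_cast
    ring

theorem tm_list (n : ℕ) : Term.listEncode (tm (n + 1)) =
    Sum.inr ⟨2, addF⟩ :: Sum.inr ⟨0, oneF⟩ :: Term.listEncode (tm n) := by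
  simp [tm, t1, Term.listEncode, List.finRange_succ]

theorem tm_encode : ∃ A B C : ℕ, ∀ n, Encodable.encode (tm n) =
    Nat.rec C (fun _ E => Nat.succ (Nat.pair A (Nat.succ (Nat.pair B E)))) n := by
  refine ⟨Encodable.encode (Sum.inr ⟨2, addF⟩ : (Empty ⊕ Fin 1) ⊕ (Σ i, L.Functions i)),
    Encodable.encode (Sum.inr ⟨0, oneF⟩ : (Empty ⊕ Fin 1) ⊕ (Σ i, L.Functions i)),
    Encodable.encode (tm 0), fun n => ?_⟩
  induction n with
  | zero => rfl
  | succ n ih =>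
    simp only
    rw [← ih]
    show Encodable.encode (Term.listEncode (tm (n + 1))) = _
    rw [tm_list, Encodable.encode_list_cons, Encodable.encode_list_cons]
    rfl

theorem sen_list (φ : L.BoundedFormula Empty 1) (n : ℕ) :
    BoundedFormula.listEncode (sen φ n) = Sum.inr (Sum.inr 1) :: Sum.inr (Sum.inr 0) ::
      Sum.inl ⟨1, tx⟩ :: Sum.inl ⟨1, tm n⟩ :: BoundedFormula.listEncode φ := by
  simp [sen, BoundedFormula.listEncode, Term.bdEqual]

theorem sen_encode (φ : L.BoundedFormula Empty 1) : ∃ A B C D : ℕ, ∀ n,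
    Encodable.encode (sen φ n) = Nat.succ (Nat.pair A (Nat.succ (Nat.pair B (Nat.succ (Nat.pair C
      (Nat.succ (Nat.pair (2 * Nat.pair 1 (Encodable.encode (tm n))) D))))))) := by
  have h : ∀ n, Encodable.encode (sen φ n) =
    Encodable.encode (BoundedFormula.listEncode (sen φ n)) := fun n => rfl
  have h2 : ∀ n, Encodable.encode (Sum.inl ⟨1, tm n⟩ :
      (Σ k, L.Term (Empty ⊕ Fin k)) ⊕ ((Σ n, L.Relations n) ⊕ ℕ)) =
      2 * Nat.pair 1 (Encodable.encode (tm n)) := fun n => rfl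
  simp only [h, sen_list, Encodable.encode_list_cons, h2]
  exact ⟨_, _, _, _, fun n => rfl⟩

theorem sen_primrec (φ : L.BoundedFormula Empty 1) :
    Primrec (fun n => Encodable.encode (sen φ n)) := by
  obtain ⟨A, B, C, D, h⟩ := sen_encode φ
  obtain ⟨A', B', C', h'⟩ := tm_encode
  have h2 : Primrec (fun n => Encodable.encode (tm n)) := by
    simp only [h']
    refine Primrec.nat_rec₁ (α := ℕ) C' (f := fun _ E => Nat.succ (Nat.pair A' (Nat.succ (Nat.pair B' E)))) ?_
    have : Primrec (fun E => Nat.succ (Nat.pair A' (Nat.succ (Nat.pair B' E)))) :=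
      Primrec.succ.comp (Primrec₂.natPair.comp (Primrec.const _)
        (Primrec.succ.comp (Primrec₂.natPair.comp (Primrec.const _) Primrec.id)))
    exact this.comp Primrec.snd
  simp only [h]
  exact Primrec.succ.comp (Primrec₂.natPair.comp (Primrec.const _)
    (Primrec.succ.comp (Primrec₂.natPair.comp (Primrec.const _)
    (Primrec.succ.comp (Primrec₂.natPair.comp (Primrec.const _)
    (Primrec.succ.comp (Primrec₂.natPair.comp (Primrec.nat_mul.comp (Primrec.const _)
      (Primrec₂.natPair.comp (Primrec.const _) h2)) (Primrec.const _))))))))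

theorem sen_realize (g : ℤ → ℤ) (φ : L.BoundedFormula Empty 1) (n : ℕ) :
    @Sentence.Realize L ℤ (S g) (sen φ n) ↔
      @BoundedFormula.Realize L ℤ (S g) _ _ φ default (fun _ => (n : ℤ)) := by
  let _ := S g
  unfold sen Sentence.Realize Formula.Realize
  rw [BoundedFormula.realize_all]
  simp only [BoundedFormula.realize_imp, BoundedFormula.realize_bdEqual, tm_realize]
  have h2 : ∀ (u : Fin 0 → ℤ) (x : ℤ), (Fin.snoc u x : Fin 1 → ℤ) = fun _ => x := by
    intro u x
    funext i
    simp [Fin.snoc]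
  have h4 : ∀ (a : ℤ) (u : Empty → ℤ) (w : Fin 1 → ℤ), w = (fun _ => a) →
    ((Term.realize (Sum.elim u w) tx = ↑n + 1 → φ.Realize u w) ↔
    (Term.realize (Sum.elim default (fun _ => a)) tx = (n : ℤ) + 1 →
      φ.Realize default (fun _ => a))) := by
    rintro a u w rfl
    rw [Subsingleton.elim u default]
  refine (forall_congr' fun a => h4 a _ _ ?_).trans ?_
  · exact h2 _ a
  have : ∀ (w : Empty → ℤ) (x : Fin 1 → ℤ), Term.realize (Sum.elim w x) tx = x 0 + 1 := by
    intro w x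
    rw [tx, add_realize, t1_realize]
    rfl
  constructor
  · intro h
    exact h n (this _ _)
  · intro h a ha
    have h3 := this (default : Empty → ℤ) (fun _ => a)
    have : a = n := by
      have := h3.symm.trans ha
      linarith
    rwa [this]

theorem undec_of_arith (g : ℤ → ℤ) [HR g (fun n : ℕ => (n : ℤ))]
    (hadd : F2 g (fun n : ℕ => (n : ℤ)) (fun x y => x + y))
    (hmul : F2 g (fun n : ℕ => (n : ℤ)) (fun x y => x * y)) :
    ¬ ComputablePred (fun c => c ∈ theoryCodes g) := by
  intro hc
  apply ComputablePred.halting_problem 0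
  have he : Function.Injective (fun n : ℕ => (n : ℤ)) := fun a b h => by simpa using h
  let f : ℕ →. ℕ := fun n => Nat.Partrec.Code.eval (Denumerable.ofNat Nat.Partrec.Code n) 0
  have hf : Nat.Partrec f := by
    rw [← Partrec.nat_iff]
    exact Nat.Partrec.Code.eval_part.comp (Computable.ofNat _) (Computable.const 0)
  have h1 := partrec_def he hadd hmul hf
  have h2 : DP g (fun n : ℕ => (n : ℤ)) (fun v => ∃ y, y ∈ f (v 0)) := by
    apply DP.ex
    exact DP.app2 h1 (DF.var he _) (DF.var he _)
  obtain ⟨φ, hφ⟩ := h2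
  let φ' : L.BoundedFormula Empty 1 :=
    BoundedFormula.relabel (n := 1) (k := 0) (fun _ : ℕ => (Sum.inr 0 : Empty ⊕ Fin 1)) φ
  have h3 : ∀ n : ℕ, @BoundedFormula.Realize L ℤ (S g) _ _ φ' default (fun _ => (n : ℤ)) ↔
      (f n).Dom := by
    intro n
    let _ := S g
    have := hφ (fun _ => n)
    refine Iff.trans ?_ (this.trans Part.dom_iff_mem.symm)
    show (BoundedFormula.relabel (n := 1) (k := 0)
      (fun _ : ℕ => (Sum.inr 0 : Empty ⊕ Fin 1)) φ).Realize _ _ ↔ _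
    rw [BoundedFormula.realize_relabel]
    unfold Formula.Realize
    apply iff_of_eq
    congr 1
    · exact Subsingleton.elim _ _
  have h4 : ∀ c : Nat.Partrec.Code, (Encodable.encode (sen φ' (Encodable.encode c))) ∈
      theoryCodes g ↔ (Nat.Partrec.Code.eval c 0).Dom := by
    intro c
    have : (f (Encodable.encode c)) = Nat.Partrec.Code.eval c 0 := by
      simp [f]
    rw [← this, ← h3, ← sen_realize]
    constructor
    · rintro ⟨ψ, h, h'⟩
      rwa [← Encodable.encode_injective h]
    · intro h
      exact ⟨_, rfl, h⟩
  have h5 : Computable (fun c : Nat.Partrec.Code =>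
      Encodable.encode (sen φ' (Encodable.encode c))) :=
    ((sen_primrec φ').comp Primrec.encode).to_comp
  obtain ⟨hd, hc⟩ := hc
  refine ⟨fun c => decidable_of_iff _ (h4 c), ?_⟩
  refine (hc.comp h5).of_eq fun c => ?_
  exact decide_eq_decide.2 (h4 c)

end red

/-! ### Kronecker's theorem in dimension two -/

section kro

open MeasureTheory Filter Topology UnitAddTorus

instance probT : IsProbabilityMeasure (volume : Measure (UnitAddTorus (Fin 2))) := by
  have : IsProbabilityMeasure (volume : Measure UnitAddCircle) := ⟨UnitAddCircle.measure_univ⟩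
  exact inferInstanceAs (IsProbabilityMeasure
    (Measure.pi fun _ : Fin 2 => (volume : Measure UnitAddCircle)))

theorem weyl_poly (x : UnitAddTorus (Fin 2)) (hx : ∀ k : Fin 2 → ℤ, k ≠ 0 → mFourier k x ≠ 1)
    (p : C(UnitAddTorus (Fin 2), ℂ)) (hp : p ∈ Submodule.span ℂ (Set.range (mFourier (d := Fin 2)))) :
    Tendsto (fun N : ℕ => (N : ℂ)⁻¹ * ∑ n ∈ Finset.range N, p (n • x)) atTop (𝓝 (∫ y, p y)) := by
  have hpow : ∀ (k : Fin 2 → ℤ) (n : ℕ), mFourier k (n • x) = (mFourier k x) ^ n := by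
    intro k n
    simp [mFourier, ContinuousMap.coe_mk, fourier_apply,
      smul_comm (M := ℤ) (N := ℕ), AddCircle.toCircle_nsmul]
    ring
  induction hp using Submodule.span_induction with
  | mem f hf =>
    obtain ⟨k, rfl⟩ := hf
    by_cases hk : k = 0
    · subst hk
      simp only [mFourier_zero, ContinuousMap.one_apply]
      refine Tendsto.congr' ?_ tendsto_const_nhds
      filter_upwards [eventually_gt_atTop 0] with N hN
      simp [hN.ne', probReal_univ]
    · have hne := hx k hk
      have hi : ∫ y, mFourier k y = 0 := by
        have h1 : ∫ y, mFourier k (y + x) = ∫ y, mFourier k y :=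
          integral_add_right_eq_self (fun y => mFourier k y) x
        have h2 : ∀ y, mFourier k (y + x) = mFourier k x * mFourier k y := by
          intro y
          simp [mFourier, fourier_apply, AddCircle.toCircle_add]
          ring
        simp only [h2] at h1
        rw [integral_const_mul] at h1
        have : (mFourier k x - 1) * ∫ y, mFourier k y = 0 := by
          rw [sub_mul, h1]; ring
        exact (mul_eq_zero.1 this).resolve_left (sub_ne_zero.2 hne)
      rw [hi]
      simp only [hpow]
      have hn1 : ‖mFourier k x‖ = 1 := by
        simp only [mFourier, ContinuousMap.coe_mk, fourier_apply, norm_prod, Circle.norm_coe,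
          Finset.prod_const_one]
      have hb : ∀ N : ℕ, ‖(N : ℂ)⁻¹ * ∑ n ∈ Finset.range N, (mFourier k x) ^ n‖ ≤
          (N : ℝ)⁻¹ * (2 / ‖mFourier k x - 1‖) := by
        intro N
        rw [norm_mul, norm_inv, geom_sum_eq hne, norm_div]
        simp only [Complex.norm_natCast]
        gcongr
        refine (norm_sub_le _ _).trans ?_
        rw [norm_pow, hn1]
        norm_num
      refine squeeze_zero_norm hb ?_
      have := (tendsto_inv_atTop_nhds_zero_nat (𝕜 := ℝ)).mul_const (2 / ‖mFourier k x - 1‖)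
      simpa using this
  | zero => simp
  | add f h _ _ ihf ihh =>
    have := ihf.add ihh
    simp only [ContinuousMap.add_apply, Finset.sum_add_distrib, mul_add]
    rwa [integral_add]
    · exact f.continuous.integrable_of_hasCompactSupport (HasCompactSupport.of_compactSpace _)
    · exact h.continuous.integrable_of_hasCompactSupport (HasCompactSupport.of_compactSpace _)
  | smul c f _ ih =>
    simp only [ContinuousMap.smul_apply, smul_eq_mul, ← Finset.mul_sum]
    rw [integral_const_mul]
    refine (ih.const_mul c).congr fun N => ?_
    ring

theorem weyl_dense (x : UnitAddTorus (Fin 2)) (hx : ∀ k : Fin 2 → ℤ, k ≠ 0 → mFourier k x ≠ 1)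
    (z : UnitAddTorus (Fin 2)) (ε : ℝ) (hε : 0 < ε) : ∃ n : ℕ, ‖n • x - z‖ < ε := by
  by_contra hcon
  push Not at hcon
  let f : UnitAddTorus (Fin 2) → ℝ := fun y => max 0 (ε - ‖y - z‖)
  have hfc : Continuous f := by
    have : Continuous fun y : UnitAddTorus (Fin 2) => ‖y - z‖ := by fun_prop
    exact continuous_const.max (continuous_const.sub this)
  have hI : 0 < ∫ y, f y := by
    refine hfc.integral_pos_of_hasCompactSupport_nonneg_nonzero
      (HasCompactSupport.of_compactSpace _) (fun y => le_max_left _ _) (x := z) ?_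
    simp [f, hε.ne', hε.le]
  set I := ∫ y, f y with hIdef
  let F : C(UnitAddTorus (Fin 2), ℂ) := ⟨fun y => (f y : ℂ), by fun_prop⟩
  have hF : F ∈ (Submodule.span ℂ (Set.range (mFourier (d := Fin 2)))).topologicalClosure := by
    rw [span_mFourier_closure_eq_top]; trivial
  obtain ⟨p, hp, hpF⟩ := Metric.mem_closure_iff.1 hF (I / 3) (by positivity)
  have hd : ∀ y, ‖F y - p y‖ ≤ I / 3 := by
    intro y
    rw [← dist_eq_norm]
    exact (ContinuousMap.dist_apply_le_dist y).trans hpF.le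
  have ht := weyl_poly x hx p hp
  have h1 : ‖∫ y, p y‖ ≤ I / 3 := by
    refine le_of_tendsto ht.norm ?_
    filter_upwards [eventually_gt_atTop 0] with N hN
    have hN' : (0 : ℝ) < N := by exact_mod_cast hN
    rw [norm_mul, norm_inv, Complex.norm_natCast, inv_mul_le_iff₀ hN']
    refine (norm_sum_le _ _).trans ?_
    refine (Finset.sum_le_card_nsmul _ _ (I / 3) fun n _ => ?_).trans ?_
    · have := hd (n • x)
      have h0 : F (n • x) = 0 := by
        have : f (n • x) = 0 := max_eq_left (by linarith [hcon n])
        simp [F, this]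
      rwa [h0, zero_sub, norm_neg] at this
    · simp
  have h2 : ‖∫ y, (F y - p y)‖ ≤ I / 3 := by
    refine (norm_integral_le_of_norm_le_const (C := I / 3) (Eventually.of_forall hd)).trans ?_
    rw [probReal_univ, mul_one]
  rw [integral_sub] at h2
  · have h3 : ∫ y, F y = (I : ℂ) := by
      simp only [F, ContinuousMap.coe_mk]
      rw [integral_complex_ofReal]
    rw [h3] at h2
    have h4 : ‖(I : ℂ)‖ = I := by simp [abs_of_pos hI]
    have h5 := norm_sub_norm_le (I : ℂ) (∫ y, p y)
    linarith
  · exact F.continuous.integrable_of_hasCompactSupport (HasCompactSupport.of_compactSpace _)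
  · exact p.continuous.integrable_of_hasCompactSupport (HasCompactSupport.of_compactSpace _)

theorem kronecker {α : ℝ} (hind : LinearIndependent ℚ ![(1 : ℝ), α, α ^ 2]) (x y ε : ℝ)
    (hε : 0 < ε) : ∃ m a b : ℤ, |α * m - x - a| < ε ∧ |α ^ 2 * m - y - b| < ε := by
  have hrel : ∀ p q r : ℤ, p * α + q * α ^ 2 = r → p = 0 ∧ q = 0 := by
    intro p q r h
    rw [Fintype.linearIndependent_iff] at hind
    have := hind ![-(r : ℚ), p, q] (by
      simp [Fin.sum_univ_three, Rat.smul_def]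
      linarith)
    have h1 := this 1
    have h2 := this 2
    simp at h1 h2
    exact ⟨h1, h2⟩
  let X : UnitAddTorus (Fin 2) := ![(α : UnitAddCircle), ((α ^ 2 : ℝ) : UnitAddCircle)]
  obtain ⟨n, hn⟩ := weyl_dense X (by
    intro k hk h
    apply hk
    have h' : AddCircle.toCircle (((k 0 : ℝ) * α + k 1 * α ^ 2 : ℝ) : UnitAddCircle) = 1 := by
      have : mFourier k X = (AddCircle.toCircle (((k 0 : ℝ) * α + k 1 * α ^ 2 : ℝ) : UnitAddCircle) : ℂ) := by
        simp only [mFourier, ContinuousMap.coe_mk, fourier_apply, Fin.prod_univ_two, X]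
        rw [← Circle.coe_mul, ← AddCircle.toCircle_add]
        simp only [Matrix.cons_val_zero, Matrix.cons_val_one]
        rw [← AddCircle.coe_zsmul, zsmul_eq_mul, ← AddCircle.coe_zsmul, zsmul_eq_mul,
          ← AddCircle.coe_add]
      rw [this] at h
      exact Circle.ext (by rw [h, Circle.coe_one])
    rw [← AddCircle.toCircle_zero] at h'
    have h2 := AddCircle.injective_toCircle one_ne_zero h'
    rw [AddCircle.coe_eq_zero_iff] at h2
    obtain ⟨r, hr⟩ := h2
    have := hrel (k 0) (k 1) r (by rw [← hr]; simp)
    funext i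
    fin_cases i
    · exact this.1
    · exact this.2) ![(x : UnitAddCircle), (y : UnitAddCircle)] ε hε
  rw [pi_norm_lt_iff hε] at hn
  have h0 := hn 0
  have h1 := hn 1
  have e0 : (n • X - ![(x : UnitAddCircle), (y : UnitAddCircle)]) 0 =
      ((α * n - x : ℝ) : UnitAddCircle) := by
    have : ∀ a : ℝ, n • (a : UnitAddCircle) = ((a * n : ℝ) : UnitAddCircle) := fun a => by
      rw [← AddCircle.coe_nsmul, nsmul_eq_mul, mul_comm]
    simp only [X, Pi.sub_apply, Pi.smul_apply, Matrix.cons_val_zero, Matrix.cons_val_one, this]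
    rw [← AddCircle.coe_sub]
  have e1 : (n • X - ![(x : UnitAddCircle), (y : UnitAddCircle)]) 1 =
      ((α ^ 2 * n - y : ℝ) : UnitAddCircle) := by
    have : ∀ a : ℝ, n • (a : UnitAddCircle) = ((a * n : ℝ) : UnitAddCircle) := fun a => by
      rw [← AddCircle.coe_nsmul, nsmul_eq_mul, mul_comm]
    simp only [X, Pi.sub_apply, Pi.smul_apply, Matrix.cons_val_zero, Matrix.cons_val_one, this]
    rw [← AddCircle.coe_sub]
  rw [e0, UnitAddCircle.norm_eq] at h0
  rw [e1, UnitAddCircle.norm_eq] at h1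
  exact ⟨n, _, _, by exact_mod_cast h0, by exact_mod_cast h1⟩

end kro

/-! ### Nearest integers to multiples of `α` -/

/-- The nearest integer to `α n`. -/
noncomputable def rr (α : ℝ) (n : ℤ) : ℤ := round (α * n)

/-- The signed distance of `α n` to the nearest integer. -/
noncomputable def fr (α : ℝ) (n : ℤ) : ℝ := α * n - rr α n

section frs

variable {α : ℝ}

theorem fr_spec (n : ℤ) : α * n = rr α n + fr α n := by unfold fr; ring

theorem fr_ge (n : ℤ) : -(1 / 2) ≤ fr α n := by
  unfold fr rr
  rw [round_eq]
  have := Int.floor_le (α * n + 1 / 2)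
  linarith

theorem fr_lt (n : ℤ) : fr α n < 1 / 2 := by
  unfold fr rr
  rw [round_eq]
  have := Int.lt_floor_add_one (α * n + 1 / 2)
  linarith

theorem fr_abs (n : ℤ) : |fr α n| ≤ 1 / 2 := abs_le.2 ⟨by linarith [fr_ge (α := α) n], (fr_lt n).le⟩

theorem rr_eq {n k : ℤ} {x : ℝ} (h : α * n = k + x) (h1 : -(1 / 2) ≤ x) (h2 : x < 1 / 2) :
    rr α n = k := by
  unfold rr
  rw [round_eq, Int.floor_eq_iff]
  constructor <;> linarith

theorem fr_eq {n k : ℤ} {x : ℝ} (h : α * n = k + x) (h1 : -(1 / 2) ≤ x) (h2 : x < 1 / 2) :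
    fr α n = x := by
  unfold fr
  rw [rr_eq h h1 h2]
  linarith

theorem fr_eq' {n k : ℤ} {x : ℝ} (h : α * n = k + x) (h1 : |x| < 1 / 2) : fr α n = x :=
  fr_eq h (by linarith [(abs_lt.1 h1).1]) (abs_lt.1 h1).2

theorem rr_add {m n : ℤ} (h1 : -(1 / 2) ≤ fr α m + fr α n) (h2 : fr α m + fr α n < 1 / 2) :
    rr α (m + n) = rr α m + rr α n :=
  rr_eq (x := fr α m + fr α n) (by push_cast; linarith [fr_spec (α := α) m, fr_spec (α := α) n])
    h1 h2

theorem fr_zero : fr α 0 = 0 := fr_eq (k := 0) (by simp) (by norm_num) (by norm_num)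

theorem rr_zero : rr α 0 = 0 := by simp [rr]

theorem fr_eq_zero (hir : ∀ n k : ℤ, α * n = k → n = 0) {n : ℤ} (h : fr α n = 0) : n = 0 :=
  hir n (rr α n) (by rw [fr_spec n, h, add_zero])

theorem fr_abs_lt (hir : ∀ n k : ℤ, α * n = k → n = 0) (n : ℤ) : |fr α n| < 1 / 2 := by
  refine lt_of_le_of_ne (fr_abs n) fun h => ?_
  have h1 : fr α n = -(1 / 2) := by
    rcases abs_choice (fr α n) with h' | h'
    · linarith [fr_lt (α := α) n]
    · linarith
  have h2 := hir (2 * n) (2 * rr α n - 1) (by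
    push_cast
    linarith [fr_spec (α := α) n])
  have : n = 0 := by omega
  rw [this, fr_zero] at h1
  norm_num at h1

theorem density (hind : LinearIndependent ℚ ![(1 : ℝ), α, α ^ 2]) (x y δ : ℝ)
    (hx : |x| < 1 / 2) (hδ : 0 < δ) : ∃ m b : ℤ, |fr α m - x| < δ ∧
      |α * ((rr α m + m * rr α 1 : ℤ) : ℝ) - y - b| < δ := by
  set δ' := min (δ / 2) (1 / 2 - |x|) with hδ'
  have hpos : 0 < δ' := lt_min (by linarith) (by linarith)
  have hl1 : δ' ≤ δ / 2 := min_le_left _ _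
  have hl2 : δ' ≤ 1 / 2 - |x| := min_le_right _ _
  obtain ⟨m, a, b, h1, h2⟩ := kronecker hind x (y + fr α 1 * x) δ' hpos
  have hf : fr α m = α * m - a := by
    refine fr_eq' (k := a) (by ring) ?_
    have := abs_add_le (α * m - x - a) x
    rw [show α * m - x - a + x = α * m - a by ring] at this
    linarith
  refine ⟨m, b + rr α 1 * rr α m, ?_, ?_⟩
  · rw [hf, show α * m - a - x = α * m - x - a by ring]
    linarith
  · have e1 : fr α 1 = α - rr α 1 := by simp [fr]
    have e2 : (rr α m : ℝ) = α * m - fr α m := by unfold fr; ring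
    have e : α * ((rr α m + m * rr α 1 : ℤ) : ℝ) - y - ((b + rr α 1 * rr α m : ℤ) : ℝ) =
        (α ^ 2 * m - (y + fr α 1 * x) - b) - fr α 1 * (fr α m - x) := by
      push_cast
      rw [e2, e1]
      ring
    rw [e]
    refine (abs_sub _ _).trans_lt ?_
    have h3 : |fr α m - x| < δ' := by
      rw [hf, show α * m - a - x = α * m - x - a by ring]; exact h1
    have h4 : |fr α 1 * (fr α m - x)| ≤ 1 / 2 * δ' := by
      rw [abs_mul]
      exact mul_le_mul (fr_abs 1) h3.le (abs_nonneg _) (by norm_num)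
    linarith

theorem irr (hind : LinearIndependent ℚ ![(1 : ℝ), α, α ^ 2]) (n k : ℤ) (h : α * n = k) :
    n = 0 := by
  rw [Fintype.linearIndependent_iff] at hind
  have := hind ![-(k : ℚ), n, 0] (by
    simp [Fin.sum_univ_three, Rat.smul_def]
    linarith)
  have h1 := this 1
  simpa using h1

theorem dens1 (hind : LinearIndependent ℚ ![(1 : ℝ), α, α ^ 2]) (x y : ℝ) (hxy : x < y)
    (hx : -(1 / 2) ≤ x) (hy : y ≤ 1 / 2) : ∃ m : ℤ, x < fr α m ∧ fr α m < y := by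
  obtain ⟨m, b, h, -⟩ := density hind ((x + y) / 2) 0 ((y - x) / 2)
    (abs_lt.2 ⟨by linarith, by linarith⟩) (by linarith)
  rw [abs_lt] at h
  exact ⟨m, by linarith, by linarith⟩

end frs

/-! ### Basic definability in `(ℤ; +, 1, g)` -/

section zdef

variable {g : ℤ → ℤ}

theorem idinj : Function.Injective (id : ℤ → ℤ) := Function.injective_id

theorem z_g : F1 g (id : ℤ → ℤ) g := by
  let _ := S g
  let gF : L.Functions 1 := (() : Unit)
  refine ⟨Term.equal (Term.var 0) (Term.func gF ![Term.var 1]), fun v => ?_⟩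
  rw [Formula.realize_equal]
  rfl

theorem z_add : F2 g (id : ℤ → ℤ) (fun x y => x + y) := by
  let _ := S g
  refine ⟨Term.equal (Term.var 0) (Term.func addF ![Term.var 1, Term.var 2]), fun v => ?_⟩
  rw [Formula.realize_equal]
  rfl

theorem z_sub : F2 g (id : ℤ → ℤ) (fun x y => x - y) := by
  refine (DP.eq idinj (DF.app2 idinj z_add (DF.var idinj 0) (DF.var idinj 2))
    (DF.var idinj 1)).congr fun v => ?_
  show v 0 + v 2 = v 1 ↔ v 0 = v 1 - v 2
  omega

theorem z_c1 : DF g (id : ℤ → ℤ) (fun _ => 1) := by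
  let _ := S g
  refine DF.const idinj ⟨Term.equal (Term.var 0) (Term.func oneF (fun i => i.elim0)), fun v => ?_⟩
  rw [Formula.realize_equal]
  rfl

theorem DF.add {f h : (ℕ → ℤ) → ℤ} (hf : DF g id f) (hh : DF g id h) :
    DF g id (fun v => f v + h v) := DF.app2 idinj z_add hf hh

theorem DF.sub {f h : (ℕ → ℤ) → ℤ} (hf : DF g id f) (hh : DF g id h) :
    DF g id (fun v => f v - h v) := DF.app2 idinj z_sub hf hh

theorem DF.gg {f : (ℕ → ℤ) → ℤ} (hf : DF g id f) :
    DF g id (fun v => g (f v)) := DF.app1 idinj z_g hf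

theorem z_v (i : ℕ) : DF g (id : ℤ → ℤ) (fun v => v i) := DF.var idinj i

theorem z_c0 : DF g (id : ℤ → ℤ) (fun _ => 0) := by
  have : DF g (id : ℤ → ℤ) (fun _ => 1 - 1) := DF.sub z_c1 z_c1
  simpa using this

theorem DF.neg {f : (ℕ → ℤ) → ℤ} (hf : DF g id f) :
    DF g id (fun v => - f v) := by
  have := DF.sub z_c0 hf
  simpa using this

theorem z_nat_mul (n : ℕ) {f : (ℕ → ℤ) → ℤ} (hf : DF g id f) :
    DF g (id : ℤ → ℤ) (fun v => n * f v) := by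
  induction n with
  | zero => simpa using z_c0
  | succ n ih =>
    have := DF.add ih hf
    simpa [add_mul] using this

theorem DF.cmul (c : ℤ) {f : (ℕ → ℤ) → ℤ} (hf : DF g id f) :
    DF g (id : ℤ → ℤ) (fun v => c * f v) := by
  obtain ⟨n, rfl | rfl⟩ := c.eq_nat_or_neg
  · exact z_nat_mul n hf
  · have := DF.neg (z_nat_mul n hf)
    simpa using this

theorem z_c (c : ℤ) : DF g (id : ℤ → ℤ) (fun _ => c) := by
  have := DF.cmul c (z_c1 (g := g))
  simpa using this

theorem DP.zeq {f h : (ℕ → ℤ) → ℤ} (hf : DF g id f) (hh : DF g id h) :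
    DP g id (fun v => f v = h v) := DP.eq idinj hf hh

theorem DP.false : DP g (id : ℤ → ℤ) (fun _ => False) :=
  (DP.zeq z_c0 z_c1).congr fun v => by simp

theorem z_fin (s : Finset ℤ) : R1 g (id : ℤ → ℤ) (fun x => x ∈ s) := by
  classical
  induction s using Finset.induction_on with
  | empty => exact DP.false.congr fun v => by simp
  | insert a s _ ih =>
    exact ((DP.zeq (z_v 0) (z_c a)).or ih).congr fun v => by simp

theorem z_absle (C : ℤ) : R1 g (id : ℤ → ℤ) (fun x => |x| ≤ C) :=
  (z_fin (Finset.Icc (-C) C)).congr fun v => by simp [abs_le]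

/-- Definability is insensitive to changes on a bounded set. -/
theorem z_modfin {Q Q' : ℤ → Prop} (h : R1 g (id : ℤ → ℤ) Q) (N : ℤ)
    (hQ : ∀ x, N < |x| → (Q x ↔ Q' x)) : R1 g (id : ℤ → ℤ) Q' := by
  classical
  have h1 := z_fin (g := g) ((Finset.Icc (-N) N).filter Q')
  refine ((h1.or (h.and (DP.not (z_absle N)))).congr fun v => ?_)
  have := hQ (v 0)
  simp only [Finset.mem_filter, Finset.mem_Icc, ← abs_le, not_le]
  by_cases hN : N < |v 0|
  · simp [hN, this hN, not_le.2 hN]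
  · simp [hN, not_lt.1 hN]

end zdef

/-! ### Arcs, small elements, and the basic ternary relation -/

section arcs

variable {α β : ℝ} {g : ℤ → ℤ}

/-- Elements whose multiple of `α` is not too close to a half-integer. -/
def BB (α a : ℝ) (n : ℤ) : Prop := -(1 / 2) + a ≤ fr α n ∧ fr α n < 1 / 2 - a

theorem g_approx (hg : ∀ n : ℤ, g n = round (β * n * round (α * n))) (n : ℤ) :
    |(g n : ℝ) - β * (n * rr α n : ℤ)| ≤ 1 / 2 := by
  rw [hg, abs_sub_comm]
  have := abs_sub_round (β * n * round (α * n))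
  push_cast
  rw [← mul_assoc]
  exact this

theorem second_diff_in {a : ℝ} {h n : ℤ} (ha : fr α h = a) (ha0 : 0 < a) (hn : BB α a n) :
    (n + h) * rr α (n + h) + (n - h) * rr α (n - h) - 2 * (n * rr α n) = 2 * (h * rr α h) := by
  obtain ⟨h1, h2⟩ := hn
  have e1 : rr α (n + h) = rr α n + rr α h := rr_add (by linarith) (by linarith)
  have e2 : rr α (n - h) = rr α n - rr α h := rr_eq (x := fr α n - a) (by
    push_cast; linarith [fr_spec (α := α) n, fr_spec (α := α) h]) (by linarith) (by linarith)
  rw [e1, e2]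
  ring

theorem second_diff_out {a : ℝ} {h n : ℤ} (ha : fr α h = a) (ha0 : 0 < a) (ha4 : a < 1 / 4)
    (hn : ¬ BB α a n) : ∃ s : ℤ, |s| = 1 ∧ ∃ u : ℤ, |u| = 1 ∧
    (n + h) * rr α (n + h) + (n - h) * rr α (n - h) - 2 * (n * rr α n) =
      2 * (h * rr α h) + s * n + u * h := by
  unfold BB at hn
  have f1 := fr_lt (α := α) n
  have f2 := fr_ge (α := α) n
  by_cases h1 : fr α n < 1 / 2 - a
  · have h2 : fr α n < -(1 / 2) + a := by
      by_contra hc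
      exact hn ⟨not_lt.1 hc, h1⟩
    have e1 : rr α (n + h) = rr α n + rr α h := rr_add (by linarith) (by linarith)
    have e2 : rr α (n - h) = rr α n - rr α h - 1 := rr_eq (x := fr α n - a + 1) (by
      push_cast; linarith [fr_spec (α := α) n, fr_spec (α := α) h]) (by linarith) (by linarith)
    refine ⟨-1, by simp, 1, by simp, ?_⟩
    rw [e1, e2]
    ring
  · push Not at h1
    have e1 : rr α (n + h) = rr α n + rr α h + 1 := rr_eq (x := fr α n + a - 1) (by
      push_cast; linarith [fr_spec (α := α) n, fr_spec (α := α) h]) (by linarith) (by linarith)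
    have e2 : rr α (n - h) = rr α n - rr α h := rr_eq (x := fr α n - a) (by
      push_cast; linarith [fr_spec (α := α) n, fr_spec (α := α) h]) (by linarith) (by linarith)
    refine ⟨1, by simp, 1, by simp, ?_⟩
    rw [e1, e2]
    ring

theorem BB_def (hβ : β ≠ 0) (hg : ∀ n : ℤ, g n = round (β * n * round (α * n)))
    {a : ℝ} {h : ℤ} (ha : fr α h = a) (ha0 : 0 < a) (ha4 : a < 1 / 4) :
    R1 g id (BB α a) := by
  obtain ⟨C, hC⟩ := exists_nat_ge (|β * (2 * (h * rr α h) : ℤ)| + 2)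
  have hβ' : 0 < |β| := abs_pos.2 hβ
  obtain ⟨N, hN⟩ := exists_nat_gt ((C + 2 + |β * (2 * (h * rr α h) : ℤ)|) / |β| + |h|)
  have key : ∀ n : ℤ, |((g (n + h) + g (n - h) - 2 * g n : ℤ) : ℝ) - β *
      ((n + h) * rr α (n + h) + (n - h) * rr α (n - h) - 2 * (n * rr α n) : ℤ)| ≤ 2 := by
    intro n
    have h1 := abs_le.1 (g_approx hg (n + h))
    have h2 := abs_le.1 (g_approx hg (n - h))
    have h3 := abs_le.1 (g_approx hg n)
    push_cast at h1 h2 h3 ⊢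
    refine abs_le.2 ⟨?_, ?_⟩ <;> linarith [h1.1, h1.2, h2.1, h2.2, h3.1, h3.2]
  refine z_modfin (Q := fun n => |g (n + h) + g (n - h) - 2 * g n| ≤ C) ?_ N fun n hn => ?_
  · refine DP.app1 (z_absle (C : ℤ)) ?_
    exact DF.sub (DF.add (DF.gg (DF.add (z_v 0) (z_c h))) (DF.gg (DF.sub (z_v 0) (z_c h))))
      (DF.cmul 2 (DF.gg (z_v 0)))
  · have k := key n
    have hcast : |g (n + h) + g (n - h) - 2 * g n| ≤ C ↔
        |((g (n + h) + g (n - h) - 2 * g n : ℤ) : ℝ)| ≤ C := by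
      rw [← Int.cast_abs]
      norm_cast
    rw [hcast]
    constructor
    · intro hle
      by_contra hB
      obtain ⟨s, hs, u, hu, e⟩ := second_diff_out ha ha0 ha4 hB
      rw [e] at k
      set G := ((g (n + h) + g (n - h) - 2 * g n : ℤ) : ℝ)
      set A : ℤ := 2 * (h * rr α h)
      have h1 : |β * ((A + s * n + u * h : ℤ) : ℝ)| ≤ C + 2 := by
        have := abs_sub_abs_le_abs_sub (β * ((A + s * n + u * h : ℤ) : ℝ)) G
        rw [abs_sub_comm] at this
        linarith
      have h2 : |β * (s * n : ℤ)| ≤ C + 2 + |β * A| + |β * (u * h : ℤ)| := by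
        have e3 : β * (s * n : ℤ) = β * ((A + s * n + u * h : ℤ) : ℝ) - β * A - β * (u * h : ℤ) := by
          push_cast; ring
        rw [e3]
        refine (abs_sub _ _).trans ?_
        have := abs_sub (β * ((A + s * n + u * h : ℤ) : ℝ)) (β * A)
        linarith
      have e4 : |β * (s * n : ℤ)| = |β| * |n| := by
        rw [abs_mul, ← Int.cast_abs, abs_mul s, hs, one_mul]
      have e5 : |β * (u * h : ℤ)| = |β| * |h| := by
        rw [abs_mul, ← Int.cast_abs, abs_mul u, hu, one_mul]
      rw [e4, e5] at h2
      have h6 : (N : ℝ) < ((|n| : ℤ) : ℝ) := by exact_mod_cast hn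
      have h7 : (C + 2 + |β * A|) / |β| < ((|n| : ℤ) : ℝ) - ((|h| : ℤ) : ℝ) := by linarith
      rw [div_lt_iff₀ hβ'] at h7
      linarith
    · intro hB
      rw [second_diff_in ha ha0 hB] at k
      have := abs_sub_abs_le_abs_sub ((g (n + h) + g (n - h) - 2 * g n : ℤ) : ℝ)
        (β * (2 * (h * rr α h) : ℤ))
      linarith

theorem arc_iff {a : ℝ} (ha0 : 0 < a) (ha4 : a < 1 / 4) (n : ℤ) :
    ¬ BB α a n ↔ ∃ j : ℤ, -a ≤ α * n - 1 / 2 - j ∧ α * n - 1 / 2 - j < a := by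
  have f1 := fr_lt (α := α) n
  have f2 := fr_ge (α := α) n
  have f3 := fr_spec (α := α) n
  unfold BB
  constructor
  · intro hn
    by_cases h1 : fr α n < 1 / 2 - a
    · have h2 : fr α n < -(1 / 2) + a := by
        by_contra hc
        exact hn ⟨not_lt.1 hc, h1⟩
      exact ⟨rr α n - 1, by push_cast; linarith, by push_cast; linarith⟩
    · push Not at h1
      exact ⟨rr α n, by linarith, by linarith⟩
  · rintro ⟨j, h1, h2⟩ ⟨h3, h4⟩
    have h5 : (j : ℝ) < rr α n := by linarith
    have h6 : (rr α n : ℝ) < j + 1 := by linarith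
    have h7 : j < rr α n := by exact_mod_cast h5
    have h8 : rr α n < j + 1 := by exact_mod_cast h6
    omega

theorem pos_def (hind : LinearIndependent ℚ ![(1 : ℝ), α, α ^ 2])
    {a : ℝ} {h : ℤ} (ha : fr α h = a) (ha0 : 0 < a) (ha8 : a < 1 / 8)
    (hB : R1 g id (BB α a)) : R1 g id (fun n => 0 < fr α n ∧ fr α n < 4 * a) := by
  refine DP.congr (P := fun v => ∃ k, ¬ BB α a (k + 2 * h) ∧ ¬ BB α a (k + v 0)) ?_ fun v => ?_
  · refine DP.ex (DP.and (DP.not (DP.app1 hB ?_)) (DP.not (DP.app1 hB ?_)))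
    · exact DF.add (z_v 0) (z_c (2 * h))
    · exact DF.add (z_v 0) (z_v 1)
  · set n := v 0
    have s1 := fr_spec (α := α) n
    have s2 := fr_spec (α := α) h
    constructor
    · rintro ⟨k, h1, h2⟩
      rw [arc_iff ha0 (by linarith)] at h1 h2
      obtain ⟨i, h1, h1'⟩ := h1
      obtain ⟨j, h2, h2'⟩ := h2
      push_cast at h1 h1' h2 h2'
      have : fr α n = α * n - (j - i + 2 * rr α h : ℤ) := by
        refine fr_eq (k := (j - i + 2 * rr α h : ℤ)) (by ring) ?_ ?_ <;> push_cast <;> linarith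
      rw [this]
      push_cast
      constructor <;> linarith
    · rintro ⟨h1, h2⟩
      obtain ⟨k, k1, k2⟩ := dens1 hind (max (1 / 2 - 3 * a) (1 / 2 - a - fr α n))
        (min (1 / 2 - a) (1 / 2 + a - fr α n))
        (max_lt (lt_min (by linarith) (by linarith)) (lt_min (by linarith) (by linarith)))
        (le_trans (by linarith) (le_max_left _ _)) (le_trans (min_le_left _ _) (by linarith))
      rw [max_lt_iff] at k1
      rw [lt_min_iff] at k2
      have s3 := fr_spec (α := α) k
      refine ⟨k, (arc_iff ha0 (by linarith) _).2 ⟨rr α k + 2 * rr α h, ?_, ?_⟩,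
        (arc_iff ha0 (by linarith) _).2 ⟨rr α k + rr α n, ?_, ?_⟩⟩ <;> push_cast <;> linarith

theorem small_def (hir : ∀ n k : ℤ, α * n = k → n = 0) {a : ℝ} (ha8 : a < 1 / 8)
    (hP : R1 g id (fun n => 0 < fr α n ∧ fr α n < 4 * a)) :
    R2 g id (fun m t => (0 < fr α t ∧ fr α t < 4 * a) ∧ |fr α m| < fr α t) := by
  set P : ℤ → Prop := fun n => 0 < fr α n ∧ fr α n < 4 * a with hPdef
  refine DP.congr (P := fun v => P (v 1) ∧ (v 0 = 0 ∨ (P (v 0) ∧ P (v 1 - v 0)) ∨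
    (P (-v 0) ∧ P (v 1 + v 0)))) ?_ fun v => ?_
  · refine DP.and (DP.app1 hP (z_v 1)) (DP.or (DP.zeq (z_v 0) z_c0) (DP.or (DP.and
      (DP.app1 hP (z_v 0)) (DP.app1 hP (DF.sub (z_v 1) (z_v 0)))) (DP.and
      (DP.app1 hP (DF.neg (z_v 0))) (DP.app1 hP (DF.add (z_v 1) (z_v 0))))))
  · refine and_congr_right fun ht => ?_
    set m := v 0
    set t := v 1
    have s1 := fr_spec (α := α) m
    have s2 := fr_spec (α := α) t
    have hneg : fr α (-m) = -fr α m := fr_eq' (k := -rr α m) (by push_cast; linarith)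
      (by rw [abs_neg]; exact fr_abs_lt hir m)
    have hp : ∀ m, P m → fr α (t - m) = fr α t - fr α m := by
      intro m hm
      have s1 := fr_spec (α := α) m
      refine fr_eq' (k := rr α t - rr α m) (by push_cast; linarith) ?_
      exact abs_lt.2 ⟨by linarith [hm.2, ht.1], by linarith [hm.1, ht.2]⟩
    have main : ∀ m, P m ∧ P (t - m) ↔ 0 < fr α m ∧ fr α m < fr α t := by
      intro m
      constructor
      · rintro ⟨h1, h2⟩
        have h3 := h2.1
        rw [hp m h1] at h3
        exact ⟨h1.1, by linarith⟩
      · rintro ⟨h1, h2⟩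
        have hm : P m := ⟨h1, h2.trans ht.2⟩
        refine ⟨hm, ?_⟩
        show 0 < fr α (t - m) ∧ fr α (t - m) < 4 * a
        rw [hp m hm]
        exact ⟨by linarith, by linarith [ht.2]⟩
    have main2 := main (-m)
    rw [sub_neg_eq_add, hneg] at main2
    rw [main m, main2]
    constructor
    · rintro (h | h | h)
      · rw [h, fr_zero, abs_zero]; exact ht.1
      · rw [abs_of_pos h.1]; exact h.2
      · rw [abs_of_neg (by linarith [h.1])]; exact h.2
    · intro h
      rcases lt_trichotomy (fr α m) 0 with h0 | h0 | h0
      · rw [abs_of_neg h0] at h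
        exact Or.inr (Or.inr ⟨by linarith, h⟩)
      · exact Or.inl (fr_eq_zero hir h0)
      · rw [abs_of_pos h0] at h
        exact Or.inr (Or.inl ⟨h0, h⟩)

end arcs

section setup

variable {α β : ℝ} {g : ℤ → ℤ}

theorem b_approx (hg : ∀ n : ℤ, g n = round (β * n * round (α * n))) {h : ℤ}
    (h3 : 3 / 10 < fr α h) (h4 : fr α h < 4 / 10) (x : ℤ) (hx : |fr α x| < 1 / 10) :
    |((g (x + 2 * h) - 2 * g (x + h) + g x : ℤ) : ℝ) - β * x| ≤
      |β * (2 * h * rr α h + 2 * h : ℤ)| + 2 := by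
  rw [abs_lt] at hx
  have s1 := fr_spec (α := α) x
  have s2 := fr_spec (α := α) h
  have e1 : rr α (x + h) = rr α x + rr α h := rr_add (by linarith) (by linarith)
  have e2 : rr α (x + 2 * h) = rr α x + 2 * rr α h + 1 :=
    rr_eq (x := fr α x + 2 * fr α h - 1) (by push_cast; linarith) (by linarith) (by linarith)
  have g1 := abs_le.1 (g_approx hg (x + 2 * h))
  have g2 := abs_le.1 (g_approx hg (x + h))
  have g3 := abs_le.1 (g_approx hg x)
  rw [e2] at g1
  rw [e1] at g2
  have e : ((g (x + 2 * h) - 2 * g (x + h) + g x : ℤ) : ℝ) - β * x =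
      β * (2 * h * rr α h + 2 * h : ℤ) +
      ((g (x + 2 * h) - β * ((x + 2 * h) * (rr α x + 2 * rr α h + 1) : ℤ)) -
      2 * (g (x + h) - β * ((x + h) * (rr α x + rr α h) : ℤ)) + (g x - β * (x * rr α x : ℤ))) := by
    push_cast
    ring
  rw [e]
  refine (abs_add_le _ _).trans ?_
  gcongr
  refine abs_le.2 ⟨?_, ?_⟩ <;> linarith [g1.1, g1.2, g2.1, g2.2, g3.1, g3.2]

theorem rr_nat_mul {K m : ℤ} (h : |(K : ℝ) * fr α m| < 1 / 2) :
    rr α (K * m) = K * rr α m ∧ fr α (K * m) = K * fr α m := by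
  have e : α * (K * m : ℤ) = (K * rr α m : ℤ) + K * fr α m := by
    have := fr_spec (α := α) m
    push_cast
    rw [show α * (K * m) = K * (α * m) by ring, this]
    ring
  refine ⟨rr_eq e ?_ (abs_lt.1 h).2, fr_eq' e h⟩
  linarith [(abs_lt.1 h).1]

theorem setup (hβ : β ≠ 0) (hind : LinearIndependent ℚ ![(1 : ℝ), α, α ^ 2])
    (hg : ∀ n : ℤ, g n = round (β * n * round (α * n))) :
    ∃ (a ε K : ℝ) (T : ℤ → ℤ → ℤ → Prop), 0 < a ∧ a < 1 / 8 ∧ 2 * a ≤ |fr α 1| ∧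
      a < 1 / 2 - |fr α 1| ∧ 0 < ε ∧ ε < 1 / 10 ∧ 0 < K ∧ K * ε < a ∧
      R1 g id (BB α a) ∧
      R2 g id (fun m t => (0 < fr α t ∧ fr α t < ε) ∧ |fr α m| < fr α t) ∧
      R3 g id T ∧ (∀ m n w, T m n w → |fr α m| < ε ∧ |fr α w| < ε) ∧
      (∀ m n w, |fr α m| < ε → |fr α w| < ε → K * |fr α m| + |fr α n| < 1 / 2 →
        (T m n w ↔ w = n * rr α m + m * rr α n)) := by
  have hir := irr hind
  obtain ⟨h₁, h3, h4⟩ := dens1 hind (3 / 10) (4 / 10) (by norm_num) (by norm_num) (by norm_num)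
  set C₁ : ℝ := |β * (2 * h₁ * rr α h₁ + 2 * h₁ : ℤ)| + 2 with hC₁
  have hβ' : 0 < |β| := abs_pos.2 hβ
  obtain ⟨C₂, hC₂⟩ := exists_nat_gt (C₁ + 3 / 2)
  obtain ⟨K, hK⟩ := exists_nat_gt ((C₂ + C₁ + 3 / 2) / |β| + 1)
  have hC₁0 : 0 ≤ C₁ := by positivity
  have hK1 : (1 : ℝ) < K := by
    have : 0 ≤ (C₂ + C₁ + 3 / 2) / |β| := by positivity
    linarith
  have hK2 : C₂ + C₁ + 3 / 2 < K * |β| := by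
    have : (C₂ + C₁ + 3 / 2) / |β| < K := by linarith
    rwa [div_lt_iff₀ hβ'] at this
  have hf1 : 0 < |fr α 1| := abs_pos.2 fun h => by simpa using fr_eq_zero hir h
  have hf2 := fr_abs_lt hir 1
  set μ := min (1 / 8) (min (|fr α 1| / 2) (1 / 2 - |fr α 1|)) with hμ
  have hμ0 : 0 < μ := lt_min (by norm_num) (lt_min (by linarith) (by linarith))
  have hμ1 : μ ≤ 1 / 8 := min_le_left _ _
  have hμ2 : μ ≤ |fr α 1| / 2 := (min_le_right _ _).trans (min_le_left _ _)
  have hμ3 : μ ≤ 1 / 2 - |fr α 1| := (min_le_right _ _).trans (min_le_right _ _)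
  obtain ⟨h, ha0, ha1⟩ := dens1 hind 0 μ hμ0 (by norm_num) (by linarith)
  obtain ⟨a, ha⟩ : ∃ a, fr α h = a := ⟨_, rfl⟩
  rw [ha] at ha0 ha1
  set μ' := min (1 / 10) a / K with hμ'
  have hK0 : (0 : ℝ) < K := by linarith
  have hm0 : 0 < min (1 / 10) a := lt_min (by norm_num) ha0
  have hμ'0 : 0 < μ' := div_pos hm0 hK0
  have hμ'1 : K * μ' = min (1 / 10) a := by rw [hμ']; field_simp
  have hμ'2 : μ' ≤ min (1 / 10) a := div_le_self hm0.le hK1.le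
  have hma : min (1 / 10) a ≤ 1 / 10 := min_le_left _ _
  have hmb : min (1 / 10) a ≤ a := min_le_right _ _
  obtain ⟨t, ht0, ht1⟩ := dens1 hind 0 μ' hμ'0 (by norm_num) (by linarith)
  obtain ⟨ε, hε⟩ : ∃ ε, fr α t = ε := ⟨_, rfl⟩
  rw [hε] at ht0 ht1
  have hKε : K * ε < min (1 / 10) a := by
    rw [← hμ'1]
    exact mul_lt_mul_of_pos_left ht1 hK0
  have hB := BB_def hβ hg ha ha0 (by linarith)
  have hP := pos_def hind ha ha0 (by linarith) hB
  have hS := small_def hir (by linarith) hP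
  have hE : R1 g id (fun m => |fr α m| < ε) := by
    refine (DP.app2 hS (z_v 0) (z_c t)).congr fun v => ?_
    rw [hε]
    refine ⟨fun h => h.2, fun h => ⟨⟨ht0, by linarith⟩, h⟩⟩
  let T : ℤ → ℤ → ℤ → Prop := fun m n w => |fr α m| < ε ∧ |fr α w| < ε ∧
    |(g ((K : ℤ) * w + 2 * h₁) - 2 * g ((K : ℤ) * w + h₁) + g ((K : ℤ) * w)) -
      (g ((K : ℤ) * m + n) - g ((K : ℤ) * m) - g n)| ≤ C₂
  refine ⟨a, ε, K, T, ha0, by linarith, by linarith, by linarith, ht0, by linarith, hK0,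
    by linarith, hB, ?_, ?_, fun m n w hT => ⟨hT.1, hT.2.1⟩, ?_⟩
  · refine ((DP.app1 hE (z_v 1)).and (DP.app2 hS (z_v 0) (z_v 1))).congr fun v => ?_
    constructor
    · rintro ⟨h1, ⟨h2, h3⟩, h4⟩
      exact ⟨⟨h2, (abs_lt.1 h1).2⟩, h4⟩
    · rintro ⟨⟨h1, h2⟩, h3⟩
      exact ⟨by rwa [abs_of_pos h1], ⟨h1, by linarith⟩, h3⟩
  · have hKw : ∀ i, DF g id (fun v => (K : ℤ) * v i) := fun i => DF.cmul _ (z_v i)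
    refine DP.and (DP.app1 hE (z_v 0)) (DP.and (DP.app1 hE (z_v 2)) (DP.app1 (z_absle (C₂ : ℤ)) ?_))
    refine DF.sub (DF.add (DF.sub (DF.gg (DF.add (hKw 2) (z_c _))) (DF.cmul 2
      (DF.gg (DF.add (hKw 2) (z_c _))))) (DF.gg (hKw 2))) ?_
    exact DF.sub (DF.sub (DF.gg (DF.add (hKw 0) (z_v 1))) (DF.gg (hKw 0))) (DF.gg (z_v 1))
  · intro m n w hm hw hn
    have hmul : ∀ x, |fr α x| < ε → |((K : ℤ) : ℝ) * fr α x| < 1 / 10 := by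
      intro x hx
      rw [abs_mul]
      simp only [Int.cast_natCast, Nat.abs_cast]
      have : K * |fr α x| < K * ε := mul_lt_mul_of_pos_left hx hK0
      linarith
    obtain ⟨m1, m2⟩ := rr_nat_mul (K := K) (m := m) ((hmul m hm).trans (by norm_num))
    obtain ⟨w1, w2⟩ := rr_nat_mul (K := K) (m := w) ((hmul w hw).trans (by norm_num))
    have hb := b_approx hg h3 h4 ((K : ℤ) * w) (by rw [w2]; exact hmul w hw)
    rw [← hC₁] at hb
    have hadd : rr α ((K : ℤ) * m + n) = K * rr α m + rr α n := by
      rw [← m1]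
      have : |fr α ((K : ℤ) * m) + fr α n| < 1 / 2 := by
        refine (abs_add_le _ _).trans_lt ?_
        rw [m2, abs_mul]
        simpa using hn
      rw [abs_lt] at this
      exact rr_add (by linarith [this.1]) this.2
    have g1 := abs_le.1 (g_approx hg ((K : ℤ) * m + n))
    have g2 := abs_le.1 (g_approx hg ((K : ℤ) * m))
    have g3 := abs_le.1 (g_approx hg n)
    rw [hadd] at g1
    rw [m1] at g2
    set W := n * rr α m + m * rr α n with hW
    set D : ℤ := (g ((K : ℤ) * w + 2 * h₁) - 2 * g ((K : ℤ) * w + h₁) + g ((K : ℤ) * w)) -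
      (g ((K : ℤ) * m + n) - g ((K : ℤ) * m) - g n) with hD
    have main : |(D : ℝ) - β * K * (w - W : ℤ)| ≤ C₁ + 3 / 2 := by
      have e : (D : ℝ) - β * K * (w - W : ℤ) =
          (((g ((K : ℤ) * w + 2 * h₁) - 2 * g ((K : ℤ) * w + h₁) + g ((K : ℤ) * w) : ℤ) : ℝ) -
            β * ((K : ℤ) * w : ℤ)) -
          ((g ((K : ℤ) * m + n) - β * (((K : ℤ) * m + n) * (K * rr α m + rr α n) : ℤ)) -
           (g ((K : ℤ) * m) - β * ((K : ℤ) * m * (K * rr α m) : ℤ)) -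
           (g n - β * (n * rr α n : ℤ))) := by
        rw [hD, hW]
        push_cast
        ring
      rw [e]
      refine (abs_sub _ _).trans ?_
      refine add_le_add hb ?_
      refine abs_le.2 ⟨?_, ?_⟩ <;> linarith [g1.1, g1.2, g2.1, g2.2, g3.1, g3.2]
    have hT : T m n w ↔ |(D : ℝ)| ≤ C₂ := by
      have : |(D : ℝ)| ≤ C₂ ↔ |D| ≤ C₂ := by
        rw [← Int.cast_abs]
        norm_cast
      rw [this]
      exact ⟨fun h => h.2.2, fun h => ⟨hm, hw, h⟩⟩
    rw [hT]
    constructor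
    · intro hle
      by_contra hne
      have h1 : (1 : ℝ) ≤ |((w - W : ℤ) : ℝ)| := by
        rw [← Int.cast_abs]
        exact_mod_cast Int.one_le_abs (sub_ne_zero.2 hne)
      have h2 : K * |β| ≤ |β * K * (w - W : ℤ)| := by
        rw [abs_mul, abs_mul, Nat.abs_cast]
        have := mul_le_mul_of_nonneg_left h1 (by positivity : 0 ≤ |β| * K)
        linarith
      have h3 := abs_sub_abs_le_abs_sub (β * K * (w - W : ℤ)) (D : ℝ)
      rw [abs_sub_comm] at h3
      linarith
    · intro he
      rw [he] at main
      simp only [sub_self, Int.cast_zero, mul_zero, sub_zero] at main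
      linarith

end setup

/-! ### Order and divisibility -/

section ord

variable {α : ℝ} {g : ℤ → ℤ}

/-- `s n = r n - n r 1`. -/
noncomputable def ss (α : ℝ) (n : ℤ) : ℤ := rr α n - n * rr α 1

/-- The first multiplier. -/
noncomputable def w1 (α : ℝ) (m : ℤ) : ℤ := rr α m + m * rr α 1

/-- The main bilinear-type expression. -/
noncomputable def WW (α : ℝ) (m n : ℤ) : ℤ := n * rr α m + m * rr α n

/-- The height. -/
noncomputable def nu (α : ℝ) (n : ℤ) : ℝ := |(n : ℝ)| + |(ss α n : ℝ)|

/-- Uniform smallness. -/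
def II (α ε η : ℝ) (n : ℤ) : Prop :=
  ∀ m, |fr α m| < η → |fr α (w1 α m)| < η → |fr α (WW α m n)| < ε

theorem WW_one (m : ℤ) : WW α m 1 = w1 α m := by simp [WW, w1]

theorem WW_spec (m n : ℤ) : α * (WW α m n : ℤ) = n * (α * (w1 α m : ℤ)) + ss α n * (α * m) := by
  simp only [WW, w1, ss]; push_cast; ring

theorem ss_spec (n : ℤ) : (ss α n : ℝ) = n * fr α 1 - fr α n := by
  have h1 := fr_spec (α := α) n
  have h2 := fr_spec (α := α) 1
  simp only [ss]; push_cast at *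
  rw [mul_one] at h2
  have : α * n = n * (rr α 1 + fr α 1) := by rw [← h2]; ring
  linarith

theorem nu_lt {x y : ℤ} (h1 : 0 < |fr α 1|) (h : |x| < |y|) : nu α x < nu α y := by
  unfold nu
  rw [ss_spec, ss_spec]
  have h' : (|(x : ℝ)|) + 1 ≤ |(y : ℝ)| := by exact_mod_cast h
  have e1 := abs_sub (x * fr α 1) (fr α x)
  have e2 := abs_sub_abs_le_abs_sub (y * fr α 1) (fr α y)
  rw [abs_mul] at e1 e2
  have := fr_abs (α := α) x
  have := fr_abs (α := α) y
  nlinarith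

theorem err_le (n : ℤ) {u v δ : ℝ} (hu : |u| ≤ δ) (hv : |v| ≤ δ) :
    |n * v + ss α n * u| ≤ nu α n * δ := by
  refine (abs_add_le _ _).trans ?_
  rw [abs_mul, abs_mul, nu, add_mul]
  gcongr

theorem II_of {ε η : ℝ} (hε : ε < 1 / 2) {n : ℤ} (h : nu α n * η < ε) : II α ε η n := by
  intro m hm hw
  have he := err_le (α := α) n hm.le hw.le
  have := fr_eq' (α := α) (n := WW α m n) (k := n * rr α (w1 α m) + ss α n * rr α m)
    (x := n * fr α (w1 α m) + ss α n * fr α m)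
    (by rw [WW_spec, fr_spec (w1 α m), fr_spec m]; push_cast; ring) (by linarith)
  rw [this]; linarith

theorem sgn_ex (x : ℝ) : ∃ σ : ℝ, |σ| = 1 ∧ x * σ = |x| := by
  rcases le_total 0 x with h | h
  · exact ⟨1, by simp, by simp [abs_of_nonneg h]⟩
  · exact ⟨-1, by simp, by simp [abs_of_nonpos h]⟩

theorem of_II (hind : LinearIndependent ℚ ![(1 : ℝ), α, α ^ 2]) {ε η : ℝ} (hε0 : 0 < ε)
    (hε : ε < 1 / 10) (hηε : η < ε) {n : ℤ} (h : II α ε η n) :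
    nu α n * η ≤ ε := by
  by_contra! hc
  have hν0 : 0 ≤ nu α n := by unfold nu; positivity
  have hν : 0 < nu α n := by
    rcases hν0.lt_or_eq with h | h
    · exact h
    · rw [← h] at hc; linarith
  set ν := nu α n with hνd
  obtain ⟨σ, hσ, hσ'⟩ := sgn_ex n
  obtain ⟨τ, hτ, hτ'⟩ := sgn_ex (ss α n)
  set A := ε / ν with hA
  set B := min η (1 / (2 * ν)) with hB
  have hA' : ν * A = ε := by rw [hA]; field_simp
  have hB1 : B ≤ η := min_le_left _ _
  have hB2 : ν * B ≤ 1 / 2 := by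
    have : B ≤ 1 / (2 * ν) := min_le_right _ _
    calc ν * B ≤ ν * (1 / (2 * ν)) := by gcongr
      _ = 1 / 2 := by field_simp
  have hAB : A < B := by
    refine lt_min ?_ ?_
    · rw [hA, div_lt_iff₀ hν]; linarith
    · rw [hA, div_lt_div_iff₀ hν (by positivity)]; nlinarith
  have hA0 : 0 < A := by positivity
  set l := (A + B) / 2 with hl
  set δ := (B - A) / 2 with hδ
  have hδ0 : 0 < δ := by rw [hδ]; linarith
  have hl0 : 0 < l := by rw [hl]; linarith
  have hl1 : l < η := by rw [hl]; linarith
  have e1 : ν * (l - δ) = ε := by rw [← hA', hl, hδ]; ring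
  have e2 : l + δ = B := by rw [hl, hδ]; ring
  obtain ⟨m, b, hm, hb⟩ := density hind (τ * l) (σ * l) δ
    (by rw [abs_mul, hτ, abs_of_pos hl0]; linarith) hδ0
  change |α * (w1 α m : ℤ) - σ * l - b| < δ at hb
  have hσl : |σ * l| = l := by rw [abs_mul, hσ, abs_of_pos hl0, one_mul]
  have hτl : |τ * l| = l := by rw [abs_mul, hτ, abs_of_pos hl0, one_mul]
  set u := fr α m with hu
  set v := α * (w1 α m : ℤ) - b with hv
  have hb' : |v - σ * l| < δ := by
    rw [hv]; convert hb using 2; ring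
  have hvl : |v| < η := by
    have := abs_sub_abs_le_abs_sub v (σ * l)
    linarith
  have hul : |u| < η := by
    have := abs_sub_abs_le_abs_sub u (τ * l)
    linarith
  have hfv : fr α (w1 α m) = v := fr_eq' (k := b) (by rw [hv]; ring) (by linarith)
  have hW := h m hul (by rw [hfv]; exact hvl)
  have hnd : |(n * v + ss α n * u) - ν * l| < ν * δ := by
    have e : (n * v + ss α n * u) - ν * l = n * (v - σ * l) + ss α n * (u - τ * l) := by
      rw [hνd, nu, ← hσ', ← hτ']; ring
    rw [e]
    refine (abs_add_le _ _).trans_lt ?_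
    rw [abs_mul, abs_mul]
    have hs : ν = |(n : ℝ)| + |(ss α n : ℝ)| := rfl
    rcases (abs_nonneg (n : ℝ)).lt_or_eq with h0 | h0
    · have := mul_lt_mul_of_pos_left hb' h0
      have := mul_le_mul_of_nonneg_left hm.le (abs_nonneg (ss α n : ℝ))
      rw [hs, add_mul]; linarith
    · have h00 : 0 < |(ss α n : ℝ)| := by rw [hs, ← h0] at hν; linarith
      have := mul_lt_mul_of_pos_left hm h00
      rw [hs, ← h0]; linarith
  rw [abs_lt] at hnd
  have e3 : ν * (l + δ) ≤ 1 / 2 := by rw [e2]; exact hB2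
  have hx1 : ε < n * v + ss α n * u := by linarith
  have hx2 : n * v + ss α n * u < 1 / 2 := by linarith
  have := fr_eq' (α := α) (n := WW α m n) (k := n * b + ss α n * rr α m)
    (x := n * v + ss α n * u)
    (by rw [WW_spec, fr_spec m, hv]; push_cast; ring) (by rw [abs_lt]; constructor <;> linarith)
  rw [this, abs_of_pos (by linarith)] at hW
  linarith

/-- Comparison of absolute values. -/
def LT (α ε : ℝ) (x y : ℤ) : Prop :=
  ∃ t, (0 < fr α t ∧ fr α t < ε) ∧ II α ε (fr α t) x ∧ ¬ II α ε (fr α t) y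

theorem LT_le (hind : LinearIndependent ℚ ![(1 : ℝ), α, α ^ 2]) {ε : ℝ} (hε0 : 0 < ε)
    (hε : ε < 1 / 10) (h1 : 0 < |fr α 1|) {x y : ℤ} (h : LT α ε x y) : |x| ≤ |y| := by
  obtain ⟨t, ⟨h0, ht⟩, hx, hy⟩ := h
  by_contra! hc
  have := nu_lt h1 hc
  have hx' := of_II hind hε0 hε ht hx
  exact hy (II_of (by linarith) (by nlinarith))

theorem LT_of (hind : LinearIndependent ℚ ![(1 : ℝ), α, α ^ 2]) {ε : ℝ} (hε0 : 0 < ε)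
    (hε : ε < 1 / 10) (h1 : 0 < |fr α 1|) {x y : ℤ} (h : |x| < |y|) (hy : 2 ≤ |y|) :
    LT α ε x y := by
  have hν := nu_lt h1 h
  have hν2 : 2 ≤ nu α y := by
    have : (2 : ℝ) ≤ |(y : ℝ)| := by exact_mod_cast hy
    unfold nu
    linarith [abs_nonneg (ss α y : ℝ)]
  set M := max (nu α x) 1 with hM
  have hM1 : 1 ≤ M := le_max_right _ _
  have hMx : nu α x ≤ M := le_max_left _ _
  have hMy : M < nu α y := max_lt hν (by linarith)
  obtain ⟨t, ht1, ht2⟩ := dens1 hind (ε / nu α y) (ε / M) (by gcongr)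
    (by have : 0 ≤ ε / nu α y := by positivity
        linarith)
    (by rw [div_le_iff₀ (by linarith)]; linarith)
  rw [div_lt_iff₀ (by linarith)] at ht1
  rw [lt_div_iff₀ (by linarith)] at ht2
  have ht0 : 0 < fr α t := by
    by_contra! hc
    nlinarith
  have htε : fr α t < ε := by nlinarith
  refine ⟨t, ⟨ht0, htε⟩, II_of (by linarith) (by nlinarith), fun hI => ?_⟩
  have := of_II hind hε0 hε htε hI
  linarith

theorem div_ex (hind : LinearIndependent ℚ ![(1 : ℝ), α, α ^ 2]) {ε K : ℝ} (hε0 : 0 < ε)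
    (hε : ε < 1 / 10) (hK : 0 < K) (k : ℤ) (hk : 1 ≤ k) (N : ℕ) :
    ∃ m t, (0 < fr α t ∧ fr α t < ε) ∧ |fr α m| < ε ∧ ∀ n : ℤ, 0 ≤ n → n ≤ N →
      K * |fr α m| + |fr α n| < 1 / 2 ∧ (|fr α (WW α m n)| < fr α t ↔ k ∣ n) := by
  have hir := irr hind
  have hγ : ∃ γ : ℝ, 0 < γ ∧ ∀ n : ℤ, 0 ≤ n → n ≤ N → |fr α n| + γ ≤ 1 / 2 := by
    induction N with
    | zero =>
      refine ⟨1 / 2, by norm_num, fun n h1 h2 => ?_⟩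
      obtain rfl : n = 0 := by push_cast at h2; omega
      simp [fr_zero]
    | succ N ih =>
      obtain ⟨γ, h0, h⟩ := ih
      have hl := fr_abs_lt hir (N + 1 : ℤ)
      refine ⟨min γ (1 / 2 - |fr α (N + 1 : ℤ)|), lt_min h0 (by linarith), fun n h1 h2 => ?_⟩
      rcases eq_or_ne n (N + 1 : ℤ) with rfl | hne
      · linarith [min_le_right γ (1 / 2 - |fr α (N + 1 : ℤ)|)]
      · have := h n h1 (by push_cast at h2; omega)
        linarith [min_le_left γ (1 / 2 - |fr α (N + 1 : ℤ)|)]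
  obtain ⟨γ, hγ0, hγ⟩ := hγ
  have hk0 : (1 : ℝ) ≤ k := by exact_mod_cast hk
  have hkp : (0 : ℝ) < k := by linarith
  obtain ⟨t, ht0, ht⟩ := dens1 hind 0 (min ε (1 / (2 * k)))
    (lt_min hε0 (by positivity)) (by norm_num) ((min_le_left _ _).trans (by linarith))
  have htε := ht.trans_le (min_le_left _ _)
  have htk := ht.trans_le (min_le_right _ _)
  rw [lt_div_iff₀ (by positivity)] at htk
  set η := fr α t with hη
  obtain ⟨δ, hδ0, hδ⟩ : ∃ δ : ℝ, 0 < δ ∧ δ < min (min (η / (2 * N + 2)) (γ / K)) ε :=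
    exists_between (lt_min (lt_min (by positivity) (by positivity)) hε0)
  have hδ1 := (hδ.trans_le (min_le_left _ _)).trans_le (min_le_left _ _)
  have hδ2 := (hδ.trans_le (min_le_left _ _)).trans_le (min_le_right _ _)
  have hδ3 := hδ.trans_le (min_le_right _ _)
  rw [lt_div_iff₀ (by positivity)] at hδ1 hδ2
  obtain ⟨m, b, hm, hb⟩ := density hind 0 (1 / k) δ (by norm_num) hδ0
  change |α * (w1 α m : ℤ) - 1 / k - b| < δ at hb
  rw [sub_zero] at hm
  refine ⟨m, t, ⟨ht0, htε⟩, by linarith, fun n hn0 hnN => ⟨?_, ?_⟩⟩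
  · have := hγ n hn0 hnN
    nlinarith
  set v := α * (w1 α m : ℤ) - 1 / k - b with hv
  set u := fr α m with hu
  have hn0' : (0 : ℝ) ≤ n := by exact_mod_cast hn0
  have hnN' : (n : ℝ) ≤ N := by exact_mod_cast hnN
  have hνn : nu α n ≤ 2 * N + 2 := by
    unfold nu
    rw [ss_spec]
    have e1 := abs_sub (n * fr α 1) (fr α n)
    rw [abs_mul, abs_of_nonneg hn0'] at e1
    rw [abs_of_nonneg hn0']
    have := fr_abs (α := α) n
    have := fr_abs (α := α) 1
    nlinarith
  have herr : |n * v + ss α n * u| < η := by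
    have := err_le (α := α) n hm.le hb.le
    nlinarith
  have hW : α * (WW α m n : ℤ) = (n * b + ss α n * rr α m : ℤ) + n / k + (n * v + ss α n * u) := by
    rw [WW_spec, fr_spec m, hv]; push_cast; ring
  constructor
  · intro hsm
    have h2 := fr_spec (α := α) (WW α m n)
    set j : ℤ := rr α (WW α m n) - (n * b + ss α n * rr α m) with hj
    have hj' : (n : ℝ) / k - j = fr α (WW α m n) - (n * v + ss α n * u) := by
      rw [hj]; push_cast at *; linarith
    have hj2 : |(n : ℝ) / k - j| < 2 * η := by
      rw [hj']
      have := abs_sub (fr α (WW α m n)) (n * v + ss α n * u)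
      linarith
    have hj3 : |(n : ℝ) - k * j| < 1 := by
      have : (n : ℝ) - k * j = k * ((n : ℝ) / k - j) := by field_simp
      rw [this, abs_mul, abs_of_pos hkp]
      nlinarith
    have hj4 : |n - k * j| < 1 := by exact_mod_cast hj3
    rw [Int.abs_lt_one_iff] at hj4
    exact ⟨j, by linarith⟩
  · rintro ⟨q, rfl⟩
    have hq : ((k * q : ℤ) : ℝ) / k = q := by push_cast; field_simp
    rw [hq] at hW
    have := fr_eq' (α := α) (n := WW α m (k * q))
      (k := (k * q) * b + ss α (k * q) * rr α m + q)
      (x := (k * q : ℤ) * v + ss α (k * q) * u) (by rw [hW]; push_cast; ring) (by linarith)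
    rw [this]
    exact herr

end ord

section fin

variable {α β : ℝ} {g : ℤ → ℤ}

/-- Semantic description of `T`. -/
def Tsem (α ε K : ℝ) (T : ℤ → ℤ → ℤ → Prop) : Prop :=
  (∀ m n w, T m n w → |fr α m| < ε ∧ |fr α w| < ε) ∧
  (∀ m n w, |fr α m| < ε → |fr α w| < ε → K * |fr α m| + |fr α n| < 1 / 2 →
        (T m n w ↔ w = n * rr α m + m * rr α n))

/-- Smallness relation. -/
def Sm (α ε : ℝ) (m t : ℤ) : Prop := (0 < fr α t ∧ fr α t < ε) ∧ |fr α m| < fr α t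

theorem T_ex {ε K : ℝ} {T : ℤ → ℤ → ℤ → Prop} (hT : Tsem α ε K T) {m n : ℤ}
    (hm : |fr α m| < ε) (hn : K * |fr α m| + |fr α n| < 1 / 2) :
    (∃ w, T m n w) ↔ |fr α (WW α m n)| < ε := by
  constructor
  · rintro ⟨w, hw⟩
    have h1 := (hT.1 _ _ _ hw).2
    have := (hT.2 m n w hm h1 hn).1 hw
    rw [WW, ← this]; exact h1
  · intro h
    exact ⟨_, (hT.2 m n _ hm h hn).2 rfl⟩

theorem T_ex_sm {ε K : ℝ} {T : ℤ → ℤ → ℤ → Prop} (hT : Tsem α ε K T) {m n t : ℤ}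
    (ht : 0 < fr α t ∧ fr α t < ε)
    (hm : |fr α m| < ε) (hn : K * |fr α m| + |fr α n| < 1 / 2) :
    (∃ w, Sm α ε w t ∧ T m n w) ↔ |fr α (WW α m n)| < fr α t := by
  constructor
  · rintro ⟨w, hs, hw⟩
    have h1 := (hT.1 _ _ _ hw).2
    have := (hT.2 m n w hm h1 hn).1 hw
    rw [WW, ← this]; exact hs.2
  · intro h
    exact ⟨_, ⟨ht, h⟩, (hT.2 m n _ hm (h.trans ht.2) hn).2 rfl⟩

theorem II_iff {a ε K : ℝ} {T : ℤ → ℤ → ℤ → Prop} (hT : Tsem α ε K T) (hK : 0 < K)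
    (hKa : K * ε < a) (h1 : BB α a 1) {n t : ℤ} (hn : BB α a n)
    (ht : 0 < fr α t ∧ fr α t < ε) :
    (∀ m, Sm α ε m t → (∃ w, Sm α ε w t ∧ T m 1 w) → ∃ w, T m n w) ↔ II α ε (fr α t) n := by
  have key : ∀ m x, |fr α m| < ε → BB α a x → K * |fr α m| + |fr α x| < 1 / 2 := by
    intro m x hm hx
    have e1 : |fr α x| ≤ 1 / 2 - a := abs_le.2 ⟨by linarith [hx.1], hx.2.le⟩
    nlinarith
  refine forall_congr' fun m => ?_
  constructor
  · intro h hm hw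
    have hmε := hm.trans ht.2
    exact (T_ex hT hmε (key m n hmε hn)).1 (h ⟨ht, hm⟩
      ((T_ex_sm hT ht hmε (key m 1 hmε h1)).2 (by rw [WW_one]; exact hw)))
  · intro h hm hw
    have hmε := hm.2.trans ht.2
    refine (T_ex hT hmε (key m n hmε hn)).2 (h hm.2 ?_)
    have := (T_ex_sm hT ht hmε (key m 1 hmε h1)).1 hw
    rwa [WW_one] at this

theorem BB_or {a : ℝ} (ha0 : 0 < a) (ha8 : a < 1 / 8) (ha1 : 2 * a ≤ |fr α 1|) (x : ℤ) :
    BB α a x ∨ BB α a (x + 1) := by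
  by_contra! h
  obtain ⟨i, i1, i2⟩ := (arc_iff ha0 (by linarith) _).1 h.1
  obtain ⟨j, j1, j2⟩ := (arc_iff ha0 (by linarith) _).1 h.2
  have e : fr α 1 = α - (j - i : ℤ) := fr_eq' (k := j - i) (by push_cast; ring) (by
    rw [abs_lt]; push_cast at *; constructor <;> linarith)
  have : |fr α 1| < 2 * a := by
    rw [e, abs_lt]; push_cast at *; constructor <;> linarith
  linarith

theorem order_def (hind : LinearIndependent ℚ ![(1 : ℝ), α, α ^ 2]) {a ε K : ℝ}
    {T : ℤ → ℤ → ℤ → Prop} (ha0 : 0 < a) (ha8 : a < 1 / 8) (ha1 : 2 * a ≤ |fr α 1|)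
    (ha2 : a < 1 / 2 - |fr α 1|) (hε0 : 0 < ε) (hε : ε < 1 / 10) (hK : 0 < K)
    (hKa : K * ε < a) (hB : R1 g id (BB α a)) (hS : R2 g id (Sm α ε)) (hTd : R3 g id T)
    (hT : Tsem α ε K T) : R1 g id (fun x => 0 ≤ x) := by
  have hf1 : 0 < |fr α 1| := by linarith
  have hB1 : BB α a 1 := by
    have h1 := neg_abs_le (fr α 1)
    have h2 := le_abs_self (fr α 1)
    exact ⟨by linarith, by linarith⟩
  have hM : R2 g id (fun m t => Sm α ε m t ∧ ∃ w, Sm α ε w t ∧ T m 1 w) :=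
    DP.and hS (DP.ex (P := fun v w => Sm α ε w (v 1) ∧ T (v 0) 1 w)
      (DP.and (DP.app2 hS (z_v 0) (z_v 2)) (DP.app3 hTd (z_v 1) z_c1 (z_v 0))))
  have hTe : R2 g id (fun m x => ∃ w, T m x w) :=
    DP.ex (P := fun v w => T (v 0) (v 1) w) (DP.app3 hTd (z_v 1) (z_v 2) (z_v 0))
  have hI : R2 g id (fun t x => ∀ m, (Sm α ε m t ∧ ∃ w, Sm α ε w t ∧ T m 1 w) → ∃ w, T m x w) :=
    DP.all (P := fun v m => (Sm α ε m (v 0) ∧ ∃ w, Sm α ε w (v 0) ∧ T m 1 w) → ∃ w, T m (v 1) w)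
      (DP.imp (DP.app2 hM (z_v 0) (z_v 1)) (DP.app2 hTe (z_v 0) (z_v 2)))
  have hL : R2 g id (fun x y => ∃ t, Sm α ε 0 t ∧
      (∀ m, (Sm α ε m t ∧ ∃ w, Sm α ε w t ∧ T m 1 w) → ∃ w, T m x w) ∧
      ¬ (∀ m, (Sm α ε m t ∧ ∃ w, Sm α ε w t ∧ T m 1 w) → ∃ w, T m y w)) :=
    DP.ex (P := fun v t => Sm α ε 0 t ∧
      (∀ m, (Sm α ε m t ∧ ∃ w, Sm α ε w t ∧ T m 1 w) → ∃ w, T m (v 0) w) ∧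
      ¬ (∀ m, (Sm α ε m t ∧ ∃ w, Sm α ε w t ∧ T m 1 w) → ∃ w, T m (v 1) w))
      (DP.and (DP.app2 hS z_c0 (z_v 0)) (DP.and (DP.app2 hI (z_v 0) (z_v 1))
        (DP.not (DP.app2 hI (z_v 0) (z_v 2)))))
  have hL2 : R2 g id (fun x y => BB α a x ∧ BB α a y ∧ LT α ε x y) := by
    refine (DP.and (DP.app1 hB (z_v 0)) (DP.and (DP.app1 hB (z_v 1)) hL)).congr fun v => ?_
    refine and_congr_right fun hx => and_congr_right fun hy => ?_
    refine exists_congr fun t => ?_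
    have e0 : Sm α ε 0 t ↔ (0 < fr α t ∧ fr α t < ε) := by
      rw [Sm, fr_zero, abs_zero]; tauto
    rw [e0]
    refine and_congr_right fun ht => ?_
    rw [← II_iff hT hK hKa hB1 hx ht, ← II_iff hT hK hKa hB1 hy ht]
    simp only [and_imp]
  have hQ : ∀ c d : ℤ, R1 g id (fun x => BB α a (x + c) ∧ BB α a (x + d) ∧
      LT α ε (x + c) (x + d)) := fun c d =>
    DP.app2 hL2 (DF.add (z_v 0) (z_c c)) (DF.add (z_v 0) (z_c d))
  have hQQ : R1 g id (fun x =>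
      ((BB α a (x + 0) ∧ BB α a (x + 2) ∧ LT α ε (x + 0) (x + 2)) ∨
        (BB α a (x + 0) ∧ BB α a (x + 3) ∧ LT α ε (x + 0) (x + 3))) ∨
      ((BB α a (x + 1) ∧ BB α a (x + 2) ∧ LT α ε (x + 1) (x + 2)) ∨
        (BB α a (x + 1) ∧ BB α a (x + 3) ∧ LT α ε (x + 1) (x + 3)))) :=
    DP.or (DP.or (hQ 0 2) (hQ 0 3)) (DP.or (hQ 1 2) (hQ 1 3))
  refine z_modfin hQQ 2 fun x hx => ?_
  constructor
  · have hle : ∀ x y : ℤ, LT α ε x y → |x| ≤ |y| := fun x y h => LT_le hind hε0 hε hf1 h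
    rintro ((⟨-, -, h⟩ | ⟨-, -, h⟩) | (⟨-, -, h⟩ | ⟨-, -, h⟩)) <;>
    · have := hle _ _ h
      simp only [Int.abs_eq_natAbs] at this hx
      omega
  · intro h0
    have hl : ∀ x y : ℤ, |x| < |y| → 2 ≤ |y| → LT α ε x y :=
      fun x y h h' => LT_of hind hε0 hε hf1 h h'
    have habs : ∀ y z : ℤ, 0 ≤ y → y < z → |y| < |z| := fun y z h h' => by
      rw [Int.abs_eq_natAbs, Int.abs_eq_natAbs]; omega
    have habs2 : ∀ y : ℤ, 2 ≤ y → 2 ≤ |y| := fun y h => h.trans (le_abs_self y)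
    have b1 := BB_or ha0 ha8 ha1 x
    have b2 := BB_or ha0 ha8 ha1 (x + 2)
    rw [show x + 2 + 1 = x + 3 by ring] at b2
    rw [← add_zero x] at b1
    rw [show x + 0 + 1 = x + 1 by ring] at b1
    rcases b1 with b1 | b1 <;> rcases b2 with b2 | b2
    · exact Or.inl (Or.inl ⟨b1, b2, hl _ _ (habs _ _ (by omega) (by omega)) (habs2 _ (by omega))⟩)
    · exact Or.inl (Or.inr ⟨b1, b2, hl _ _ (habs _ _ (by omega) (by omega)) (habs2 _ (by omega))⟩)
    · exact Or.inr (Or.inl ⟨b1, b2, hl _ _ (habs _ _ (by omega) (by omega)) (habs2 _ (by omega))⟩)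
    · exact Or.inr (Or.inr ⟨b1, b2, hl _ _ (habs _ _ (by omega) (by omega)) (habs2 _ (by omega))⟩)

theorem dvd_of_period {X : ℤ → Prop} {k : ℤ} (hk : 1 ≤ k) (N : ℕ) :
    ∀ n : ℤ, n = N → (∀ x, 0 < x ∧ x < k → ¬ X x) →
      (∀ x, 0 ≤ x ∧ x + k ≤ n → (X x ↔ X (x + k))) → X n → k ∣ n := by
  induction N using Nat.strong_induction_on with
  | _ N ih =>
    intro n hn h1 h2 h3
    by_cases hnk : n < k
    · by_cases h0 : n = 0
      · rw [h0]; exact dvd_zero _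
      · exact absurd h3 (h1 n ⟨by omega, hnk⟩)
    · have := ih (n - k).toNat (by omega) (n - k) (by omega) h1
        (fun x hx => h2 x ⟨hx.1, by omega⟩)
        ((h2 (n - k) ⟨by omega, by omega⟩).2 (by rwa [sub_add_cancel]))
      have h := dvd_add this (dvd_refl k)
      rwa [sub_add_cancel] at h

theorem dvd_def (hind : LinearIndependent ℚ ![(1 : ℝ), α, α ^ 2]) {ε K : ℝ}
    {T : ℤ → ℤ → ℤ → Prop} (hε0 : 0 < ε) (hε : ε < 1 / 10) (hK : 0 < K)
    (hS : R2 g id (Sm α ε)) (hTd : R3 g id T)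
    (hT : Tsem α ε K T) (h0 : R1 g id (fun x => 0 ≤ x)) :
    R2 g id (fun k n => 1 ≤ k ∧ 0 ≤ n ∧ k ∣ n) := by
  have hle : R2 g id (fun x y : ℤ => x ≤ y) :=
    (DP.app1 h0 (DF.sub (z_v 1) (z_v 0))).congr fun v => by
      show 0 ≤ v 1 - v 0 ↔ v 0 ≤ v 1
      omega
  have hlt : R2 g id (fun x y : ℤ => x < y) :=
    (DP.not (DP.app2 hle (z_v 1) (z_v 0))).congr fun v => by
      show ¬ (v 1 ≤ v 0) ↔ v 0 < v 1
      omega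
  have hX : R3 g id (fun m t x => ∃ w, Sm α ε w t ∧ T m x w) :=
    DP.ex (P := fun v w => Sm α ε w (v 1) ∧ T (v 0) (v 2) w)
      (DP.and (DP.app2 hS (z_v 0) (z_v 2)) (DP.app3 hTd (z_v 1) (z_v 3) (z_v 0)))
  set X : ℤ → ℤ → ℤ → Prop := fun m t x => ∃ w, Sm α ε w t ∧ T m x w with hXd
  have hD : R2 g id (fun k n => ∃ m t, (∀ x, 0 < x ∧ x < k → ¬ X m t x) ∧
      (∀ x, 0 ≤ x ∧ x + k ≤ n → (X m t x ↔ X m t (x + k))) ∧ X m t n) := by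
    refine DP.ex (P := fun v m => ∃ t, (∀ x, 0 < x ∧ x < v 0 → ¬ X m t x) ∧
      (∀ x, 0 ≤ x ∧ x + v 0 ≤ v 1 → (X m t x ↔ X m t (x + v 0))) ∧ X m t (v 1)) ?_
    refine DP.ex (P := fun v t => (∀ x, 0 < x ∧ x < v 1 → ¬ X (v 0) t x) ∧
      (∀ x, 0 ≤ x ∧ x + v 1 ≤ v 2 → (X (v 0) t x ↔ X (v 0) t (x + v 1))) ∧ X (v 0) t (v 2)) ?_
    refine DP.and ?_ (DP.and ?_ (DP.app3 hX (z_v 1) (z_v 0) (z_v 3)))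
    · refine DP.all (P := fun v x => 0 < x ∧ x < v 2 → ¬ X (v 1) (v 0) x) ?_
      exact DP.imp (DP.and (DP.app2 hlt z_c0 (z_v 0)) (DP.app2 hlt (z_v 0) (z_v 3)))
        (DP.not (DP.app3 hX (z_v 2) (z_v 1) (z_v 0)))
    · refine DP.all (P := fun v x => 0 ≤ x ∧ x + v 2 ≤ v 3 →
        (X (v 1) (v 0) x ↔ X (v 1) (v 0) (x + v 2))) ?_
      exact DP.imp (DP.and (DP.app2 hle z_c0 (z_v 0))
        (DP.app2 hle (DF.add (z_v 0) (z_v 3)) (z_v 4)))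
        (DP.iff (DP.app3 hX (z_v 2) (z_v 1) (z_v 0))
          (DP.app3 hX (z_v 2) (z_v 1) (DF.add (z_v 0) (z_v 3))))
  refine (DP.and (DP.app2 hle z_c1 (z_v 0)) (DP.and (DP.app2 hle z_c0 (z_v 1)) hD)).congr
    fun v => ?_
  generalize v 0 = k
  generalize v 1 = n
  refine and_congr_right fun hk => and_congr_right fun hn => ?_
  constructor
  · rintro ⟨m, t, h1, h2, h3⟩
    exact dvd_of_period hk n.toNat n (by omega) h1 h2 h3
  · intro hkn
    obtain ⟨m, t, ht, hm, h⟩ := div_ex hind hε0 hε hK k hk (n + k).toNat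
    have hXi : ∀ x, 0 ≤ x → x ≤ n + k → (X m t x ↔ k ∣ x) := fun x hx hx' => by
      obtain ⟨e1, e2⟩ := h x hx (by omega)
      rw [← e2]
      exact T_ex_sm hT ht hm e1
    refine ⟨m, t, fun x hx hX => ?_, fun x hx => ?_, (hXi n hn (by omega)).2 hkn⟩
    · have := Int.le_of_dvd hx.1 ((hXi x (by omega) (by omega)).1 hX)
      omega
    · rw [hXi x hx.1 (by omega), hXi (x + k) (by omega) (by omega)]
      exact (dvd_add_self_right).symm

/-- Coercion of naturals. -/
def nc : ℕ → ℤ := fun n : ℕ => (n : ℤ)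

theorem nc_inj : Function.Injective nc := fun _ _ h => Int.ofNat.inj h

theorem DP.toNat {P : (ℕ → ℤ) → Prop} (h : DP g id P) :
    DP g nc (fun v => P (fun i => (v i : ℤ))) := by
  obtain ⟨φ, hφ⟩ := h
  exact ⟨φ, fun v => hφ (fun i => (v i : ℤ))⟩

theorem conclude (g : ℤ → ℤ) (h0 : R1 g id (fun x => 0 ≤ x))
    (hd : R2 g id (fun k n => 1 ≤ k ∧ 0 ≤ n ∧ k ∣ n)) :
    ¬ ComputablePred (fun c => c ∈ theoryCodes g) := by
  have hHR : HR g nc := by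
    obtain ⟨φ, hφ⟩ := h0
    refine ⟨⟨φ, fun v => ?_⟩⟩
    refine Iff.trans (hφ v) ?_
    constructor
    · intro h
      exact ⟨(v 0).toNat, by show ((v 0).toNat : ℤ) = v 0; exact Int.toNat_of_nonneg h⟩
    · rintro ⟨m, hm⟩
      show (0 : ℤ) ≤ v 0
      rw [← hm]; exact Int.natCast_nonneg m
  have hadd : F2 g nc (fun x y => x + y) :=
    (DP.toNat z_add).congr fun v => by
      show (v 0 : ℤ) = (v 1 : ℤ) + (v 2 : ℤ) ↔ v 0 = v 1 + v 2
      omega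
  have hc : ∀ c : ℕ, DF g nc (fun _ => c) := fun c =>
    DF.const nc_inj ((DP.toNat (DP.zeq (z_v 0) (z_c (c : ℤ)))).congr fun v => by
      show (v 0 : ℤ) = c ↔ v 0 = c
      omega)
  have hv : ∀ i, DF g nc (fun v => v i) := DF.var nc_inj
  have ha : ∀ {f h : (ℕ → ℕ) → ℕ}, DF g nc f → DF g nc h → DF g nc (fun v => f v + h v) :=
    fun hf hh => DF.app2 nc_inj hadd hf hh
  have hdv : R2 g nc (fun k n => k ∣ n) := by
    refine (DP.or (DP.toNat hd) (DP.and (DP.eq nc_inj (hv 0) (hc 0))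
      (DP.eq nc_inj (hv 1) (hc 0)))).congr fun v => ?_
    show ((1 : ℤ) ≤ (v 0 : ℤ) ∧ 0 ≤ (v 1 : ℤ) ∧ (v 0 : ℤ) ∣ (v 1 : ℤ)) ∨ (v 0 = 0 ∧ v 1 = 0) ↔
      v 0 ∣ v 1
    rw [Int.natCast_dvd_natCast]
    rcases Nat.eq_zero_or_pos (v 0) with h | h
    · rw [h, zero_dvd_iff]; simp
    · have h1 : (1 : ℤ) ≤ v 0 := by omega
      have h2 : v 0 ≠ 0 := by omega
      simp [h1, h2]
  have hob : F1 g nc (fun n => n * (n + 1)) := by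
    refine (DP.all (P := fun v w => v 0 ∣ w ↔ (v 1 ∣ w ∧ (v 1 + 1) ∣ w))
      (DP.iff (DP.app2 hdv (hv 1) (hv 0)) (DP.and (DP.app2 hdv (hv 2) (hv 0))
        (DP.app2 hdv (ha (hv 2) (hc 1)) (hv 0))))).congr fun v => ?_
    show (∀ w, v 0 ∣ w ↔ (v 1 ∣ w ∧ (v 1 + 1) ∣ w)) ↔ v 0 = v 1 * (v 1 + 1)
    have key : ∀ w, (v 1 ∣ w ∧ (v 1 + 1) ∣ w) ↔ v 1 * (v 1 + 1) ∣ w := fun w =>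
      ⟨fun h => Nat.Coprime.mul_dvd_of_dvd_of_dvd (by simp) h.1 h.2,
        fun h => ⟨(dvd_mul_right _ _).trans h, (dvd_mul_left _ _).trans h⟩⟩
    simp only [key]
    constructor
    · intro h
      exact Nat.dvd_antisymm ((h _).2 dvd_rfl) ((h _).1 dvd_rfl)
    · intro h w
      rw [h]
  have hmul : F2 g nc (fun x y => x * y) := by
    refine (DP.eq nc_inj (DF.app1 nc_inj hob (ha (hv 1) (hv 2)))
      (ha (ha (DF.app1 nc_inj hob (hv 1)) (DF.app1 nc_inj hob (hv 2)))
        (ha (hv 0) (hv 0)))).congr fun v => ?_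
    show (v 1 + v 2) * (v 1 + v 2 + 1) = v 1 * (v 1 + 1) + v 2 * (v 2 + 1) + (v 0 + v 0) ↔
      v 0 = v 1 * v 2
    constructor <;> intro h <;> nlinarith
  have : HR g (fun n : ℕ => (n : ℤ)) := hHR
  exact undec_of_arith g hadd hmul

end fin

theorem undecidable (α β : ℝ) (hβ : β ≠ 0)
    (hind : LinearIndependent ℚ ![(1 : ℝ), α, α ^ 2])
    (g : ℤ → ℤ) (hg : ∀ n : ℤ, g n = round (β * n * round (α * n))) :
    ¬ ComputablePred (fun c => c ∈ theoryCodes g) := by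
  obtain ⟨a, ε, K, T, ha0, ha8, ha1, ha2, hε0, hε, hK, hKa, hB, hS, hTd, hT1, hT2⟩ :=
    setup hβ hind hg
  have h0 := order_def hind ha0 ha8 ha1 ha2 hε0 hε hK hKa hB hS hTd ⟨hT1, hT2⟩
  exact conclude g h0 (dvd_def hind hε0 hε hK hS hTd ⟨hT1, hT2⟩ h0)

end Stmt1
end

section
/- Let α, ρ ∈ ℝ with 0 < ρ < 1/4 and such that α is not a linear combination of 1 and ρ with rational coefficients, and let g : ℤ → ℤ be given by g(n) = 1 if ‖α·n²‖ < ρ and g(n) = 0 otherwise. Then the first-order theory of the structure (ℤ; <, +, g) is undecidable; that is, the set of sentences of the first-order language with one binary relation symbol <, one binary function symbol +, and one unary function symbol g that are true in ℤ (with the standard order and addition, and g interpreted as above) is not a computable set of sentences (under an effective encoding of sentences). -/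
/-!
STATEMENT 2: Let α, ρ ∈ ℝ with 0 < ρ < 1/4 and α not a rational linear combination of
1 and ρ, and g : ℤ → ℤ given by g(n) = 1 if ‖α·n²‖ < ρ and 0 otherwise, where
‖x‖ = |x - round x| is the distance to the nearest integer. Then the first-order theory
of (ℤ; <, +, g) is undecidable.
-/

open FirstOrder Language

namespace Stmt2

/-- The language with one binary relation `<`, one binary function `+`,
and one unary function `g`. -/
def L : Language :=
  ⟨fun n => match n with | 1 => Unit | 2 => Unit | _ => Empty,
   fun n => match n with | 2 => Unit | _ => Empty⟩

instance instEncF : (n : ℕ) → Encodable (L.Functions n)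
  | 0 => inferInstanceAs (Encodable Empty)
  | 1 => inferInstanceAs (Encodable Unit)
  | 2 => inferInstanceAs (Encodable Unit)
  | (_ + 3) => inferInstanceAs (Encodable Empty)

instance instEncR : (n : ℕ) → Encodable (L.Relations n)
  | 0 => inferInstanceAs (Encodable Empty)
  | 1 => inferInstanceAs (Encodable Empty)
  | 2 => inferInstanceAs (Encodable Unit)
  | (_ + 3) => inferInstanceAs (Encodable Empty)

/-- Partial inverse to `BoundedFormula.listEncode` on sentences. -/
def decodeSentence
    (l : List ((Σ k, L.Term (Empty ⊕ Fin k)) ⊕ ((Σ n, L.Relations n) ⊕ ℕ))) :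
    Option L.Sentence :=
  (BoundedFormula.listDecode l)[0]?.bind
    (fun x => if h : x.1 = 0 then
      some (cast (congrArg (L.BoundedFormula Empty) h) x.2) else none)

/-- An effective encoding of sentences (via their encodings as lists of symbols). -/
instance instEncSentence : Encodable L.Sentence :=
  Encodable.ofLeftInjection
    (fun φ => BoundedFormula.listEncode φ)
    decodeSentence
    (fun φ => by
      have h := BoundedFormula.listDecode_encode_list (L := L) (α := Empty) [⟨0, φ⟩]
      rw [List.flatMap_singleton] at h
      have h' : BoundedFormula.listDecode (BoundedFormula.listEncode φ) =
          [⟨0, φ⟩] := h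
      simp [decodeSentence, h'])

/-- The structure on ℤ interpreting `<`, `+` and `g`. -/
def S (g : ℤ → ℤ) : L.Structure ℤ where
  funMap {n} f x :=
    match n, f with
    | 1, _ => g (x 0)
    | 2, _ => x 0 + x 1
  RelMap {n} r x :=
    match n, r with
    | 2, _ => x 0 < x 1

/-- The first-order theory of (ℤ; <, +, g), as a set of codes of sentences. -/
def theoryCodes (g : ℤ → ℤ) : Set ℕ :=
  {c | ∃ φ : L.Sentence, Encodable.encode φ = c ∧ @Sentence.Realize L ℤ (S g) φ}

section
open Filter Topology
theorem bohr_syndetic {A : Type*} [SeminormedAddCommGroup A] [CompactSpace A] (θ : A)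
    {ε : ℝ} (hε : 0 < ε) : ∃ G : ℝ, 0 ≤ G ∧ ∀ n : ℤ, ∃ m : ℤ, |(m : ℝ) - n| ≤ G ∧ ‖m • θ‖ < ε := by
  have htb : TotallyBounded (Set.range fun n : ℤ => n • θ) :=
    isCompact_univ.totallyBounded.subset (Set.subset_univ _)
  obtain ⟨t, hts, htf, hcov⟩ := Metric.finite_approx_of_totallyBounded htb ε hε
  have hch : ∀ x ∈ t, ∃ n : ℤ, n • θ = x := fun x hx => hts hx
  choose! c hc using hch
  obtain ⟨G, hG⟩ := ((htf.image fun x => |(c x : ℝ)|)).bddAbove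
  refine ⟨max G 0, le_max_right _ _, fun n => ?_⟩
  have hn := hcov ⟨n, rfl⟩
  simp only [Set.mem_iUnion, Metric.mem_ball] at hn
  obtain ⟨x, hx, hd⟩ := hn
  refine ⟨n - c x, ?_, ?_⟩
  · push_cast
    have : |(c x : ℝ)| ≤ G := hG ⟨x, hx, rfl⟩
    rw [show (n : ℝ) - c x - n = -(c x : ℝ) by ring, abs_neg]
    exact this.trans (le_max_left _ _)
  · rw [sub_smul, hc x hx, ← dist_eq_norm]; exact hd

theorem bohr_pos {A : Type*} [SeminormedAddCommGroup A] [CompactSpace A] (θ : A)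
    {ε : ℝ} (hε : 0 < ε) : ∃ q : ℤ, 0 < q ∧ ‖q • θ‖ < ε := by
  obtain ⟨G, hG, h⟩ := bohr_syndetic θ hε
  obtain ⟨m, hm, hm'⟩ := h (⌈G⌉ + 1)
  refine ⟨m, ?_, hm'⟩
  have h1 := (abs_le.1 hm).1
  push_cast at h1
  have := Int.le_ceil G
  have : (0 : ℝ) < m := by linarith
  exact_mod_cast this

/-- quadratic recurrence -/
theorem quad_rec {A : Type*} [SeminormedAddCommGroup A] [CompactSpace A] (θ : A)
    (a : UnitAddCircle) (ha : ∀ n : ℤ, ‖n • a‖ ≤ ‖n • θ‖) {ε : ℝ} (hε : 0 < ε) :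
    ∃ q : ℤ, 0 < q ∧ ‖q • θ‖ < ε ∧ ‖(q ^ 2) • a‖ < ε := by
  let C : Set UnitAddCircle :=
    {w | ∀ ε : ℝ, 0 < ε → ∃ q : ℤ, 0 < q ∧ ‖q • θ‖ < ε ∧ ‖(q ^ 2) • a - w‖ < ε}
  have hne : ∃ w, w ∈ C := by
    have h1 : ∀ n : ℕ, ∃ q : ℤ, 0 < q ∧ ‖q • θ‖ < 1 / ((n : ℝ) + 1) := fun n =>
      bohr_pos θ (by positivity)
    choose q hq hq' using h1
    obtain ⟨w, hw⟩ := exists_clusterPt_of_compactSpace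
      (Filter.map (fun n => (q n ^ 2) • a) Filter.atTop)
    refine ⟨w, fun δ hδ => ?_⟩
    have hw' : MapClusterPt w Filter.atTop (fun n => (q n ^ 2) • a) := hw
    have hf := hw'.frequently (Metric.ball_mem_nhds w hδ)
    have he : ∀ᶠ n : ℕ in Filter.atTop, 1 / ((n : ℝ) + 1) < δ :=
      tendsto_one_div_add_atTop_nhds_zero_nat.eventually (gt_mem_nhds hδ)
    obtain ⟨n, hn, hn'⟩ := (hf.and_eventually he).exists
    refine ⟨q n, hq n, (hq' n).trans hn', ?_⟩
    rw [← dist_eq_norm]; exact hn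
  have hadd : ∀ w ∈ C, ∀ w' ∈ C, w + w' ∈ C := by
    intro w hw w' hw' δ hδ
    obtain ⟨q, hq, h1, h2⟩ := hw (δ / 4) (by linarith)
    have hqR : (0 : ℝ) < q := by exact_mod_cast hq
    obtain ⟨q', hq', h1', h2'⟩ := hw' (min (δ / 4) (δ / (8 * q))) (by positivity)
    refine ⟨q + q', by omega, ?_, ?_⟩
    · rw [add_smul]
      have := norm_add_le (q • θ) (q' • θ)
      have := lt_of_lt_of_le h1' (min_le_left _ _)
      linarith
    · have e : ((q + q') ^ 2) • a - (w + w') =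
          ((q ^ 2) • a - w) + ((q' ^ 2) • a - w') + (2 * q) • (q' • a) := by
        rw [smul_smul, show (q + q') ^ 2 = q ^ 2 + q' ^ 2 + 2 * q * q' by ring, add_smul, add_smul]
        abel
      rw [e]
      have t1 := norm_add₃_le (a := (q ^ 2) • a - w) (b := (q' ^ 2) • a - w')
        (c := (2 * q) • (q' • a))
      have t2 : ‖(2 * q) • (q' • a)‖ ≤ 2 * q * ‖q' • a‖ := by
        have := norm_zsmul_le (n := 2 * q) (a := q' • a)
        rw [Int.norm_eq_abs] at this
        push_cast at this
        rwa [abs_of_pos (by positivity)] at this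
      have t3 := lt_of_le_of_lt (ha q') (lt_of_lt_of_le h1' (min_le_right _ _))
      have t4 : 2 * q * ‖q' • a‖ ≤ δ / 4 := by
        have := mul_le_mul_of_nonneg_left t3.le (show (0 : ℝ) ≤ 2 * q by positivity)
        refine this.trans (le_of_eq ?_)
        field_simp; norm_num
      have := lt_of_lt_of_le h2' (min_le_left _ _)
      linarith
  obtain ⟨w, hw⟩ := hne
  have hmul : ∀ n : ℕ, (n + 1) • w ∈ C := by
    intro n
    induction n with
    | zero => simpa using hw
    | succ n ih => rw [succ_nsmul]; exact hadd _ ih _ hw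
  obtain ⟨k, hk, hkw⟩ := bohr_pos w (show 0 < ε / 2 by linarith)
  obtain ⟨n, rfl⟩ : ∃ n : ℕ, k = (n : ℤ) + 1 := ⟨(k - 1).toNat, by omega⟩
  obtain ⟨q, hq, h1, h2⟩ := hmul n (ε / 2) (by linarith)
  refine ⟨q, hq, by linarith, ?_⟩
  have e : (q ^ 2) • a = ((q ^ 2) • a - (n + 1) • w) + ((n : ℤ) + 1) • w := by
    rw [show ((n : ℤ) + 1) • w = (n + 1) • w by exact_mod_cast natCast_zsmul w (n + 1)]; abel
  rw [e]
  have := norm_add_le ((q ^ 2) • a - (n + 1) • w) (((n : ℤ) + 1) • w)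
  linarith

theorem exists_rep (x : UnitAddCircle) : ∃ t : ℝ, (t : UnitAddCircle) = x ∧ |t| = ‖x‖ := by
  induction x using QuotientAddGroup.induction_on with
  | H z =>
    refine ⟨z - round z, ?_, (UnitAddCircle.norm_eq).symm⟩
    rw [AddCircle.coe_sub]
    have : ((round z : ℝ) : UnitAddCircle) = 0 :=
      (AddCircle.coe_eq_zero_iff (p := (1:ℝ))).2 ⟨round z, by simp⟩
    rw [this, sub_zero]

theorem norm_coe_le (t : ℝ) : ‖(t : UnitAddCircle)‖ ≤ |t| := by
  rw [UnitAddCircle.norm_eq]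
  simpa using round_le t 0

theorem norm_zsmul_le_of_nonneg {B : Type*} [SeminormedAddCommGroup B] (n : ℤ) (b : B)
    (hn : 0 ≤ n) : ‖n • b‖ ≤ n * ‖b‖ := by
  have := norm_zsmul_le (n := n) (a := b)
  rwa [Int.norm_eq_abs, abs_of_nonneg (by exact_mod_cast hn)] at this

/-- values of the quadratic phase on a Bohr set are dense -/
theorem quad_dense {A : Type*} [SeminormedAddCommGroup A] [CompactSpace A] (θ : A)
    (a : UnitAddCircle) (ha : ∀ n : ℤ, ‖n • a‖ ≤ ‖n • θ‖) (hinf : ∀ n : ℤ, n ≠ 0 → n • a ≠ 0)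
    (x : UnitAddCircle) {ε : ℝ} (hε : 0 < ε) :
    ∃ j : ℤ, ‖j • θ‖ < ε ∧ ‖(j ^ 2) • a - x‖ < ε := by
  obtain ⟨L, hL⟩ := exists_nat_gt (4 / ε)
  have hL0 : (0 : ℝ) < L := lt_trans (by positivity) hL
  have hL1 : 1 / (L : ℝ) < ε / 4 := by
    rw [div_lt_iff₀ hε] at hL
    rw [div_lt_iff₀ hL0]; linarith
  obtain ⟨G, hG0, hG⟩ := bohr_syndetic θ (show 0 < ε / 2 by linarith)
  obtain ⟨η, hη0, hη1, hη2, hη3⟩ : ∃ η : ℝ, 0 < η ∧ L * η ≤ ε / 2 ∧ L ^ 2 * η ≤ ε / 4 ∧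
      L * (η * (1 + 2 * G)) ≤ ε / 4 := by
    refine ⟨min (ε / 2 / L) (min (ε / 4 / L ^ 2) (ε / 4 / (L * (1 + 2 * G)))), by positivity,
      ?_, ?_, ?_⟩
    · have := min_le_left (ε / 2 / L) (min (ε / 4 / L ^ 2) (ε / 4 / (L * (1 + 2 * G))))
      rw [le_div_iff₀ hL0] at this; linarith
    · have := (min_le_right (ε / 2 / L) (min (ε / 4 / L ^ 2) (ε / 4 / (L * (1 + 2 * G))))).trans
        (min_le_left _ _)
      rw [le_div_iff₀ (by positivity)] at this; linarith
    · have := (min_le_right (ε / 2 / L) (min (ε / 4 / L ^ 2) (ε / 4 / (L * (1 + 2 * G))))).trans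
        (min_le_right _ _)
      rw [le_div_iff₀ (by positivity)] at this; linarith
  obtain ⟨p, hp, hp1, hp2⟩ := quad_rec θ a ha hη0
  obtain ⟨τ, hτ, hτn⟩ := exists_rep (p • a)
  have hτη : |τ| < η := by rw [hτn]; exact (ha p).trans_lt hp1
  have hτ0 : τ ≠ 0 := by
    rintro rfl
    exact hinf p hp.ne' (by rw [← hτ]; rfl)
  obtain ⟨q, hq1, hq2⟩ := hG (round (1 / (2 * τ * L)))
  have hq3 : |2 * τ * q - 1 / L| ≤ η * (1 + 2 * G) := by
    have e : 2 * τ * q - 1 / L = 2 * τ * (q - round (1 / (2 * τ * L))) -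
        2 * τ * (1 / (2 * τ * L) - round (1 / (2 * τ * L))) := by field_simp; ring
    rw [e]
    have h1 := abs_sub (2 * τ * (q - round (1 / (2 * τ * L))))
      (2 * τ * (1 / (2 * τ * L) - round (1 / (2 * τ * L))))
    rw [abs_mul (2 * τ), abs_mul (2 * τ), abs_mul 2 τ, abs_two] at h1
    have h2 := abs_sub_round (1 / (2 * τ * L))
    have h3 : 2 * |τ| * |(q : ℝ) - round (1 / (2 * τ * L))| ≤ 2 * η * G := by gcongr
    have h4 : 2 * |τ| * |1 / (2 * τ * L) - round (1 / (2 * τ * L))| ≤ 2 * η * (1 / 2) := by gcongr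
    linarith
  obtain ⟨t, ht⟩ : ∃ t : ℝ, (t : UnitAddCircle) = x - (q ^ 2) • a :=
    ⟨_, (exists_rep (x - (q ^ 2) • a)).choose_spec.1⟩
  have ht' : ((Int.fract t : ℝ) : UnitAddCircle) = x - (q ^ 2) • a := by
    rw [← ht, ← Int.self_sub_floor, AddCircle.coe_sub]
    have : ((⌊t⌋ : ℝ) : UnitAddCircle) = 0 :=
      (AddCircle.coe_eq_zero_iff (p := (1:ℝ))).2 ⟨⌊t⌋, by simp⟩
    rw [this, sub_zero]
  set s := Int.fract t
  have hs0 : 0 ≤ s := Int.fract_nonneg t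
  have hs1 : s < 1 := Int.fract_lt_one t
  set l : ℤ := ⌊s * L⌋ with hl
  have hl0 : 0 ≤ l := Int.floor_nonneg.2 (by positivity)
  have hlL : (l : ℝ) ≤ L := (Int.floor_le _).trans (by nlinarith)
  have hlR : (0 : ℝ) ≤ l := by exact_mod_cast hl0
  have hls : |(l : ℝ) / L - s| ≤ 1 / L := by
    have h1 := Int.floor_le (s * L)
    have h2 := Int.lt_floor_add_one (s * L)
    rw [show (l : ℝ) / L - s = (l - s * L) / L by field_simp, abs_div, abs_of_pos hL0]
    gcongr
    rw [abs_le]; constructor <;> linarith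
  refine ⟨q + l * p, ?_, ?_⟩
  · rw [add_smul, mul_smul]
    have h1 := norm_add_le (q • θ) (l • p • θ)
    have h2 := norm_zsmul_le_of_nonneg l (p • θ) hl0
    have h3 : (l : ℝ) * ‖p • θ‖ ≤ L * η := by gcongr
    linarith
  · have e : ((q + l * p) ^ 2) • a - x = (((l : ℝ) / L - s : ℝ) : UnitAddCircle) +
        ((l * (2 * τ * q - 1 / L) : ℝ) : UnitAddCircle) + (l ^ 2) • ((p ^ 2) • a) := by
      have e1 : (2 * q * l) • (p • a) = ((l * (2 * τ * q) : ℝ) : UnitAddCircle) := by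
        rw [← hτ, ← AddCircle.coe_zsmul]; congr 1; simp only [zsmul_eq_mul]; push_cast; ring
      have e2 : ((q + l * p) ^ 2) • a = (q ^ 2) • a + (2 * q * l) • (p • a) +
          (l ^ 2) • ((p ^ 2) • a) := by
        rw [smul_smul, smul_smul, ← add_smul, ← add_smul]; congr 1; ring
      have e3 : x = (q ^ 2) • a + ((s : ℝ) : UnitAddCircle) := by rw [ht']; abel
      rw [e2, e1, e3, ← AddCircle.coe_add]
      rw [show (l : ℝ) / L - s + l * (2 * τ * q - 1 / L) = l * (2 * τ * q) - s by ring,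
        AddCircle.coe_sub]
      abel
    rw [e]
    have t1 := norm_add₃_le (a := (((l : ℝ) / L - s : ℝ) : UnitAddCircle))
      (b := ((l * (2 * τ * q - 1 / L) : ℝ) : UnitAddCircle)) (c := (l ^ 2) • ((p ^ 2) • a))
    have t2 := norm_coe_le ((l : ℝ) / L - s)
    have t3 := norm_coe_le ((l * (2 * τ * q - 1 / L) : ℝ))
    rw [abs_mul, abs_of_nonneg hlR] at t3
    have t4 : (l : ℝ) * |2 * τ * q - 1 / L| ≤ L * (η * (1 + 2 * G)) := by gcongr
    have t5 := norm_zsmul_le_of_nonneg (l ^ 2) ((p ^ 2) • a) (by positivity)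
    push_cast at t5
    have t6 : (l : ℝ) ^ 2 * ‖(p ^ 2) • a‖ ≤ L ^ 2 * η := by gcongr
    linarith
end

section
open Filter Topology
open Filter Topology

theorem norm_coe_gt {σ c : ℝ} (h1 : σ < c) (h2 : c < 1 - σ) : σ < ‖(c : UnitAddCircle)‖ := by
  rw [UnitAddCircle.norm_eq]
  rcases le_or_gt (round c) 0 with h | h
  · have : (round c : ℝ) ≤ 0 := by exact_mod_cast h
    exact lt_of_lt_of_le (by linarith) (le_abs_self _)
  · have : (1 : ℝ) ≤ round c := by exact_mod_cast h
    exact lt_of_lt_of_le (by linarith) (neg_le_abs _)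

theorem sep_pos {σ t : ℝ} (h0 : 0 < σ) (h1 : σ < 1 / 2) (ht : 0 < t) (ht1 : t ≤ 1 / 2) :
    ∃ p : ℝ, ‖(p : UnitAddCircle)‖ < σ ∧ σ < ‖((p + t : ℝ) : UnitAddCircle)‖ := by
  have hm : max 0 (t - (1 - 2 * σ)) < min t (2 * σ) := by
    rw [max_lt_iff, lt_min_iff, lt_min_iff]
    refine ⟨⟨ht, by linarith⟩, by linarith, by linarith⟩
  obtain ⟨η, ha, hb⟩ := exists_between hm
  rw [max_lt_iff] at ha
  rw [lt_min_iff] at hb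
  refine ⟨σ - η, (norm_coe_le _).trans_lt ?_, norm_coe_gt (by linarith) (by linarith)⟩
  rw [abs_lt]; constructor <;> linarith

theorem norm_le_half (z : UnitAddCircle) : ‖z‖ ≤ 1 / 2 := by
  have := AddCircle.norm_le_half_period (p := (1 : ℝ)) (x := z) one_ne_zero
  simpa using this

theorem sep {σ : ℝ} (h0 : 0 < σ) (h1 : σ < 1 / 2) {z : UnitAddCircle} (hz : z ≠ 0) :
    ∃ p : UnitAddCircle, ‖p‖ < σ ∧ σ < ‖p + z‖ := by
  obtain ⟨t, rfl, ht⟩ := exists_rep z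
  have ht1 := norm_le_half (t : UnitAddCircle)
  rw [← ht] at ht1
  rcases lt_trichotomy t 0 with h | h | h
  · obtain ⟨p, hp, hp'⟩ := sep_pos h0 h1 (t := -t) (by linarith) (by rwa [abs_of_neg h] at ht1)
    refine ⟨-(p : UnitAddCircle), by rwa [norm_neg], ?_⟩
    rw [← norm_neg, neg_add, neg_neg, ← AddCircle.coe_neg, ← AddCircle.coe_add]
    exact hp'
  · exact absurd (by rw [h]; rfl) hz
  · obtain ⟨p, hp, hp'⟩ := sep_pos h0 h1 h (by rwa [abs_of_pos h] at ht1)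
    exact ⟨p, hp, by rwa [← AddCircle.coe_add]⟩

theorem norm_eq_cases {σ : ℝ} {z : UnitAddCircle} (h : ‖z‖ = σ) :
    z = (σ : UnitAddCircle) ∨ z = -(σ : UnitAddCircle) := by
  obtain ⟨t, rfl, ht⟩ := exists_rep z
  rw [h] at ht
  rcases abs_choice t with h' | h'
  · left; rw [← ht, h']
  · right; rw [← ht, h', AddCircle.coe_neg, neg_neg]

section
variable (a : UnitAddCircle) (ρ : ℝ)

def Gp (n : ℤ) : Prop := ‖(n ^ 2) • a‖ < ρ

end

def Sym (G : ℤ → Prop) (K r : ℤ) : Prop := ∀ i, -K ≤ i → i ≤ K → (G (r + i) ↔ G (r - i))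

def BB (G : ℤ → Prop) (h k : ℤ) : Prop :=
  ∀ K, ∃ r, Sym G K r ∧ G (r + (h + k) + (h + k)) ∧ G (r + (h - k) + (h - k))

def AP (G : ℤ → Prop) (M n k : ℤ) : Prop :=
  ∀ l, -M ≤ l → l ≤ M → (BB G l k ↔ BB G (l + n) k)

def Dv (G : ℤ → Prop) (k k' : ℤ) : Prop := ∀ N, ∃ M, ∀ n, AP G M n k → AP G N n k'

section
variable {a : UnitAddCircle} {ρ : ℝ}

theorem ne_bdry (h0 : 0 < ρ) (hb : ∀ m j : ℤ, m ≠ 0 → m • a ≠ j • (ρ : UnitAddCircle))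
    (m : ℤ) (c : ℕ) (hc : 0 < c) : ‖m • a‖ ≠ c * ρ := by
  intro h
  have hcR : (0 : ℝ) < c := by exact_mod_cast hc
  rcases eq_or_ne m 0 with rfl | hm
  · rw [zero_smul, norm_zero] at h
    have : 0 < c * ρ := by positivity
    linarith
  · have e : ((c * ρ : ℝ) : UnitAddCircle) = (c : ℤ) • (ρ : UnitAddCircle) := by
      rw [← AddCircle.coe_zsmul]; simp
    rcases norm_eq_cases h with h | h
    · exact hb m c hm (by rw [h, e])
    · exact hb m (-c) hm (by rw [h, e, neg_smul])

theorem inf_order (hb : ∀ m j : ℤ, m ≠ 0 → m • a ≠ j • (ρ : UnitAddCircle)) :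
    ∀ n : ℤ, n ≠ 0 → n • a ≠ 0 := fun n hn h => hb n 0 hn (by rw [h, zero_smul])

theorem eventually_iff_of_ne {c : UnitAddCircle} {σ : ℝ} (h : ‖c‖ ≠ σ) :
    ∀ᶠ t in 𝓝 c, (‖t‖ < σ ↔ ‖c‖ < σ) := by
  have hc : Tendsto (fun t : UnitAddCircle => ‖t‖) (𝓝 c) (𝓝 ‖c‖) := continuous_norm.tendsto c
  rcases lt_or_gt_of_ne h with h | h
  · filter_upwards [hc.eventually (gt_mem_nhds h)] with t ht
    exact ⟨fun _ => h, fun _ => ht⟩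
  · filter_upwards [hc.eventually (lt_mem_nhds h)] with t ht
    exact ⟨fun h' => absurd h' (not_lt.2 ht.le), fun h' => absurd h' (not_lt.2 h.le)⟩

theorem eventually_Icc {X : Type*} {l : Filter X} (K : ℤ) {p : ℤ → X → Prop}
    (h : ∀ i, ∀ᶠ x in l, p i x) : ∀ᶠ x in l, ∀ i, -K ≤ i → i ≤ K → p i x := by
  have := (Finset.eventually_all (Finset.Icc (-K) K)).2 fun i _ => h i
  filter_upwards [this] with x hx i h1 h2
  exact hx i (Finset.mem_Icc.2 ⟨h1, h2⟩)

theorem Gp_add (r i : ℤ) : Gp a ρ (r + i) ↔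
    ‖(r ^ 2) • a + (i ^ 2) • a + (2 * i) • (r • a)‖ < ρ := by
  unfold Gp
  rw [smul_smul, ← add_smul, ← add_smul, show (r + i) ^ 2 = r ^ 2 + i ^ 2 + 2 * i * r by ring]

theorem sym_sound (h0 : 0 < ρ) (h1 : ρ < 1 / 4)
    (hb : ∀ m j : ℤ, m ≠ 0 → m • a ≠ j • (ρ : UnitAddCircle)) {ε : ℝ} (hε : 0 < ε) :
    ∃ K : ℤ, ∀ r, Sym (Gp a ρ) K r → ‖(4 * r) • a‖ < ε := by
  let U : ℕ → Set (UnitAddCircle × UnitAddCircle) := fun K =>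
    {z | ∃ i : ℤ, -(K : ℤ) ≤ i ∧ i ≤ K ∧ ‖z.1 + (i ^ 2) • a + (2 * i) • z.2‖ < ρ ∧
      ρ < ‖z.1 + (i ^ 2) • a + (2 * -i) • z.2‖}
  have hUo : ∀ K, IsOpen (U K) := by
    intro K
    have : U K = ⋃ i : ℤ, {z | -(K : ℤ) ≤ i ∧ i ≤ K ∧
      ‖z.1 + (i ^ 2) • a + (2 * i) • z.2‖ < ρ ∧
      ρ < ‖z.1 + (i ^ 2) • a + (2 * -i) • z.2‖} := by
      ext z; simp [U]
    rw [this]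
    refine isOpen_iUnion fun i => ?_
    refine (isOpen_const (p := _)).and ((isOpen_const (p := _)).and (IsOpen.and ?_ ?_))
    · exact isOpen_lt (by fun_prop) continuous_const
    · exact isOpen_lt continuous_const (by fun_prop)
  have hUm : Monotone U := by
    intro K K' hK z ⟨i, h1, h2, h3⟩
    have : (K : ℤ) ≤ K' := by exact_mod_cast hK
    exact ⟨i, by omega, by omega, h3⟩
  have hcl : IsClosed {z : UnitAddCircle × UnitAddCircle | ε ≤ ‖(4 : ℤ) • z.2‖} :=
    isClosed_le continuous_const (by fun_prop)
  obtain ⟨K, hK⟩ := hcl.isCompact.elim_directed_cover U hUo (by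
    rintro ⟨x, y⟩ hz
    simp only [Set.mem_setOf_eq] at hz
    have hy : (4 : ℤ) • y ≠ 0 := by
      intro h; rw [h, norm_zero] at hz; linarith
    obtain ⟨p, hp1, hp2⟩ := sep h0 (by linarith : ρ < 1 / 2) (z := -((4 : ℤ) • y))
      (neg_ne_zero.2 hy)
    -- i = 1 + j
    let F : UnitAddCircle × UnitAddCircle × UnitAddCircle → UnitAddCircle × UnitAddCircle :=
      fun w => (x + a + (2 : ℤ) • w.2.1 + w.1 + (2 : ℤ) • y + (2 : ℤ) • w.2.2,
        x + a + (2 : ℤ) • w.2.1 + w.1 - (2 : ℤ) • y - (2 : ℤ) • w.2.2)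
    have hF : Continuous F := by fun_prop
    let q : UnitAddCircle := p - (x + a + (2 : ℤ) • y)
    have hFq : F (q, 0, 0) = (p, p + -((4 : ℤ) • y)) := by
      simp only [F, q, smul_zero]
      refine Prod.ext ?_ ?_
      · simp only [add_zero]; abel
      · simp only [add_zero, sub_zero]
        rw [show (4 : ℤ) • y = (2 : ℤ) • y + (2 : ℤ) • y by rw [← add_smul]; norm_num]
        abel
    have hO : IsOpen {v : UnitAddCircle × UnitAddCircle | ‖v.1‖ < ρ ∧ ρ < ‖v.2‖} :=
      (isOpen_lt (by fun_prop) continuous_const).and (isOpen_lt continuous_const (by fun_prop))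
    have hev : ∀ᶠ w in 𝓝 (q, (0 : UnitAddCircle), (0 : UnitAddCircle)),
        ‖(F w).1‖ < ρ ∧ ρ < ‖(F w).2‖ := by
      refine hF.continuousAt.eventually (hO.mem_nhds ?_)
      rw [Set.mem_setOf_eq, hFq]; exact ⟨hp1, hp2⟩
    obtain ⟨δ, hδ, hball⟩ := Metric.eventually_nhds_iff.1 hev
    obtain ⟨j, hj1, hj2⟩ := quad_dense (a, y) a
      (fun n => by simp [Prod.norm_def]) (inf_order hb) q hδ
    have hj := @hball ((j ^ 2) • a, j • a, j • y) (by
      rw [Prod.smul_mk, Prod.norm_def, max_lt_iff] at hj1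
      rw [Prod.dist_eq, Prod.dist_eq, max_lt_iff, max_lt_iff, dist_eq_norm, dist_zero_right,
        dist_zero_right]
      exact ⟨hj2, hj1.1, hj1.2⟩)
    refine Set.mem_iUnion.2 ⟨(1 + j).natAbs, 1 + j, by omega, by omega, ?_, ?_⟩
    · convert hj.1 using 2
      simp only [F]
      rw [show (1 + j) ^ 2 = 1 + 2 * j + j ^ 2 by ring, show 2 * (1 + j) = 2 + 2 * j by ring,
        add_smul, add_smul, add_smul, one_smul, mul_smul, mul_smul]
      abel
    · convert hj.2 using 2
      simp only [F]
      rw [show (1 + j) ^ 2 = 1 + 2 * j + j ^ 2 by ring, show 2 * -(1 + j) = -(2 + 2 * j) by ring,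
        neg_smul, add_smul, add_smul, add_smul, one_smul, mul_smul, mul_smul]
      abel) hUm.directed_le
  refine ⟨K, fun r hr => ?_⟩
  by_contra hcon
  push Not at hcon
  have hmem : ((r ^ 2) • a, r • a) ∈ U K := hK (by
    simp only [Set.mem_setOf_eq, smul_smul]; exact hcon)
  obtain ⟨i, h1, h2, h3, h4⟩ := hmem
  have h5 := hr i h1 h2
  rw [Gp_add, sub_eq_add_neg, Gp_add, neg_sq] at h5
  exact absurd (h5.1 h3) (not_lt.2 h4.le)

theorem sym_complete (h0 : 0 < ρ)
    (hb : ∀ m j : ℤ, m ≠ 0 → m • a ≠ j • (ρ : UnitAddCircle)) (K u v : ℤ)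
    (huv : ‖(u ^ 2) • a - (v ^ 2) • a‖ < 2 * ρ) :
    ∃ r, Sym (Gp a ρ) K r ∧ Gp a ρ (r + u) ∧ Gp a ρ (r + v) := by
  obtain ⟨d, hd, hd'⟩ := exists_rep ((u ^ 2) • a - (v ^ 2) • a)
  -- choose `s` with `f s` in the open set
  obtain ⟨s, hs1, hs2⟩ : ∃ s : ℤ, ‖(s ^ 2) • a + (u ^ 2) • a‖ < ρ ∧
      ‖(s ^ 2) • a + (v ^ 2) • a‖ < ρ := by
    obtain ⟨s, -, hs⟩ := quad_dense a a (fun _ => le_rfl) (inf_order hb)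
      (((d / 2 : ℝ) : UnitAddCircle) - (u ^ 2) • a) (ε := ρ - |d| / 2) (by rw [hd']; linarith)
    have e1 : (s ^ 2) • a + (u ^ 2) • a = ((s ^ 2) • a -
      (((d / 2 : ℝ) : UnitAddCircle) - (u ^ 2) • a)) + ((d / 2 : ℝ) : UnitAddCircle) := by abel
    have e2 : (s ^ 2) • a + (v ^ 2) • a = ((s ^ 2) • a -
      (((d / 2 : ℝ) : UnitAddCircle) - (u ^ 2) • a)) - ((d / 2 : ℝ) : UnitAddCircle) := by
      have : (v ^ 2) • a = (u ^ 2) • a - (d : UnitAddCircle) := by rw [hd]; abel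
      rw [this]
      conv_lhs => rw [show d = d / 2 + d / 2 by ring, AddCircle.coe_add]
      abel
    have hn := norm_coe_le (d / 2)
    rw [abs_div, abs_two] at hn
    refine ⟨s, ?_, ?_⟩
    · rw [e1]; refine (norm_add_le _ _).trans_lt (by linarith)
    · rw [e2]; refine (norm_sub_le _ _).trans_lt (by linarith)
  have key : ∀ i : ℤ, ∀ᶠ z in 𝓝 ((s ^ 2) • a, (0 : UnitAddCircle)),
      (‖z.1 + (i ^ 2) • a + (2 * i) • z.2‖ < ρ ↔ ‖(s ^ 2) • a + (i ^ 2) • a‖ < ρ) := by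
    intro i
    have hc : Continuous fun z : UnitAddCircle × UnitAddCircle =>
      z.1 + (i ^ 2) • a + (2 * i) • z.2 := by fun_prop
    have ht := hc.tendsto ((s ^ 2) • a, (0 : UnitAddCircle))
    simp only [smul_zero, add_zero] at ht
    refine ht.eventually (eventually_iff_of_ne ?_)
    rw [← add_smul]
    have := ne_bdry h0 hb (s ^ 2 + i ^ 2) 1 one_pos
    simpa using this
  have hall := (eventually_Icc K key).and ((key u).and ((key v).and
    (eventually_Icc K fun i => key (-i))))
  obtain ⟨δ, hδ, hball⟩ := Metric.eventually_nhds_iff.1 hall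
  obtain ⟨r, hr1, hr2⟩ := quad_dense a a (fun _ => le_rfl) (inf_order hb) ((s ^ 2) • a) hδ
  obtain ⟨k1, k2, k3, k4⟩ := @hball ((r ^ 2) • a, r • a) (by
      rw [Prod.dist_eq, max_lt_iff, dist_eq_norm, dist_zero_right]
      exact ⟨hr2, hr1⟩)
  refine ⟨r, fun i hi1 hi2 => ?_, ?_, ?_⟩
  · have h1 := k1 i hi1 hi2
    have h2 := k4 i hi1 hi2
    rw [neg_sq] at h2
    rw [sub_eq_add_neg, Gp_add, Gp_add, neg_sq, h1, h2]
  · rw [Gp_add]; exact k2.2 hs1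
  · rw [Gp_add]; exact k3.2 hs2

theorem BB_iff (h0 : 0 < ρ) (h1 : ρ < 1 / 4)
    (hb : ∀ m j : ℤ, m ≠ 0 → m • a ≠ j • (ρ : UnitAddCircle)) (h k : ℤ) :
    BB (Gp a ρ) h k ↔ ‖(16 * h * k) • a‖ < 2 * ρ := by
  have e : (((2 * (h + k)) ^ 2) • a - ((2 * (h - k)) ^ 2) • a) = (16 * h * k) • a := by
    rw [← sub_smul]; congr 1; ring
  constructor
  · intro hB
    refine lt_of_le_of_ne ?_ (by
      have := ne_bdry h0 hb (16 * h * k) 2 two_pos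
      simpa using this)
    by_contra hcon
    push Not at hcon
    obtain ⟨ε, hε, hε'⟩ : ∃ ε : ℝ, 0 < ε ∧ |(2 * k : ℝ)| * ε ≤ ‖(16 * h * k) • a‖ - 2 * ρ := by
      refine ⟨(‖(16 * h * k) • a‖ - 2 * ρ) / (|(2 * k : ℝ)| + 1), div_pos (by linarith) (by positivity), ?_⟩
      rw [mul_div_assoc', div_le_iff₀ (by positivity)]
      nlinarith [abs_nonneg (2 * k : ℝ)]
    obtain ⟨K, hK⟩ := sym_sound h0 h1 hb hε
    obtain ⟨r, hr, hr1, hr2⟩ := hB K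
    have hr3 := hK r hr
    unfold Gp at hr1 hr2
    have e2 : (16 * h * k) • a = ((r + (h + k) + (h + k)) ^ 2) • a -
        ((r + (h - k) + (h - k)) ^ 2) • a - (2 * k) • ((4 * r) • a) := by
      rw [smul_smul, ← sub_smul, ← sub_smul]; congr 1; ring
    have t1 : ‖(2 * k) • ((4 * r) • a)‖ ≤ |(2 * k : ℝ)| * ‖(4 * r) • a‖ := by
      have := norm_zsmul_le (n := 2 * k) (a := (4 * r) • a)
      rw [Int.norm_eq_abs] at this
      push_cast at this; exact this
    have t2 : |(2 * k : ℝ)| * ‖(4 * r) • a‖ ≤ |(2 * k : ℝ)| * ε := by gcongr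
    have t3 := norm_sub_le (((r + (h + k) + (h + k)) ^ 2) • a -
        ((r + (h - k) + (h - k)) ^ 2) • a) ((2 * k) • ((4 * r) • a))
    have t4 := norm_sub_le (((r + (h + k) + (h + k)) ^ 2) • a)
        (((r + (h - k) + (h - k)) ^ 2) • a)
    rw [← e2] at t3
    linarith
  · intro hlt K
    rw [← e] at hlt
    obtain ⟨r, hr, hr1, hr2⟩ := sym_complete h0 hb K _ _ hlt
    refine ⟨r, hr, ?_, ?_⟩
    · convert hr1 using 1; ring
    · convert hr2 using 1; ring

theorem dense_mul (hinf : ∀ n : ℤ, n ≠ 0 → n • a ≠ 0) {c : ℤ} (hc : c ≠ 0) :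
    DenseRange (fun n : ℤ => n • (c • a)) := by
  rw [AddCircle.denseRange_zsmul_iff, addOrderOf_eq_zero_iff']
  intro n hn h
  refine hinf (n * c) (mul_ne_zero (by exact_mod_cast hn.ne') hc) ?_
  rw [mul_smul, natCast_zsmul]; exact h

theorem AP_sound (h0 : 0 < ρ) (h1 : ρ < 1 / 4)
    (hb : ∀ m j : ℤ, m ≠ 0 → m • a ≠ j • (ρ : UnitAddCircle)) {k : ℤ} (hk : k ≠ 0)
    {ε : ℝ} (hε : 0 < ε) :
    ∃ M : ℤ, ∀ n, AP (Gp a ρ) M n k → ‖(16 * n * k) • a‖ < ε := by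
  let U : ℕ → Set UnitAddCircle := fun K =>
    {z | ∃ i : ℤ, -(K : ℤ) ≤ i ∧ i ≤ K ∧ ‖i • (16 * k) • a‖ < 2 * ρ ∧
      2 * ρ < ‖i • (16 * k) • a + z‖}
  have hUo : ∀ K, IsOpen (U K) := by
    intro K
    have : U K = ⋃ i : ℤ, {z | -(K : ℤ) ≤ i ∧ i ≤ K ∧
      ‖i • (16 * k) • a‖ < 2 * ρ ∧ 2 * ρ < ‖i • (16 * k) • a + z‖} := by
      ext z; simp [U]
    rw [this]
    refine isOpen_iUnion fun i => ?_
    refine (isOpen_const (p := _)).and ((isOpen_const (p := _)).and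
      ((isOpen_const (p := _)).and ?_))
    exact isOpen_lt continuous_const (by fun_prop)
  have hUm : Monotone U := by
    intro K K' hK z ⟨i, h1, h2, h3⟩
    have : (K : ℤ) ≤ K' := by exact_mod_cast hK
    exact ⟨i, by omega, by omega, h3⟩
  have hcl : IsClosed {z : UnitAddCircle | ε ≤ ‖z‖} :=
    isClosed_le continuous_const (by fun_prop)
  obtain ⟨M, hM⟩ := hcl.isCompact.elim_directed_cover U hUo (by
    intro z hz
    have hz0 : z ≠ 0 := by
      rintro rfl
      rw [Set.mem_setOf_eq, norm_zero] at hz; linarith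
    obtain ⟨p, hp⟩ := sep (by linarith : 0 < 2 * ρ) (by linarith) hz0
    have hO : IsOpen {p : UnitAddCircle | ‖p‖ < 2 * ρ ∧ 2 * ρ < ‖p + z‖} :=
      (isOpen_lt (by fun_prop) continuous_const).and (isOpen_lt continuous_const (by fun_prop))
    obtain ⟨i, hi1, hi2⟩ := (dense_mul (inf_order hb) (c := 16 * k) (by omega)).exists_mem_open hO
      ⟨p, hp⟩
    exact Set.mem_iUnion.2 ⟨i.natAbs, i, by omega, by omega, hi1, hi2⟩) hUm.directed_le
  refine ⟨M, fun n hn => ?_⟩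
  by_contra hcon
  push Not at hcon
  obtain ⟨i, h2, h3, h4, h5⟩ := hM (show (16 * n * k) • a ∈ {z | ε ≤ ‖z‖} from hcon)
  have h6 := hn i h2 h3
  rw [BB_iff h0 h1 hb, BB_iff h0 h1 hb] at h6
  rw [smul_smul, show i * (16 * k) = 16 * i * k by ring] at h4
  rw [smul_smul, ← add_smul, show i * (16 * k) + 16 * n * k = 16 * (i + n) * k by ring] at h5
  exact absurd (h6.1 h4) (not_lt.2 h5.le)

theorem AP_complete (h0 : 0 < ρ) (h1 : ρ < 1 / 4)
    (hb : ∀ m j : ℤ, m ≠ 0 → m • a ≠ j • (ρ : UnitAddCircle)) (k M : ℤ) :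
    ∃ δ : ℝ, 0 < δ ∧ ∀ n, ‖(16 * n * k) • a‖ < δ → AP (Gp a ρ) M n k := by
  have key : ∀ l : ℤ, ∀ᶠ z in 𝓝 (0 : UnitAddCircle),
      (‖(16 * l * k) • a + z‖ < 2 * ρ ↔ ‖(16 * l * k) • a‖ < 2 * ρ) := by
    intro l
    have hc : Continuous fun z : UnitAddCircle => (16 * l * k) • a + z := by fun_prop
    have ht := hc.tendsto 0
    rw [add_zero] at ht
    refine ht.eventually (eventually_iff_of_ne ?_)
    have := ne_bdry h0 hb (16 * l * k) 2 two_pos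
    simpa using this
  obtain ⟨δ, hδ, hball⟩ := Metric.eventually_nhds_iff.1 (eventually_Icc M key)
  refine ⟨δ, hδ, fun n hn l hl1 hl2 => ?_⟩
  have := hball (y := (16 * n * k) • a) (by rwa [dist_zero_right]) l hl1 hl2
  rw [BB_iff h0 h1 hb, BB_iff h0 h1 hb, ← this, ← add_smul]
  rw [show 16 * l * k + 16 * n * k = 16 * (l + n) * k by ring]

theorem Dv_iff (h0 : 0 < ρ) (h1 : ρ < 1 / 4)
    (hb : ∀ m j : ℤ, m ≠ 0 → m • a ≠ j • (ρ : UnitAddCircle)) {k : ℤ} (hk : k ≠ 0) (k' : ℤ) :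
    Dv (Gp a ρ) k k' ↔ k ∣ k' := by
  constructor
  · intro hD
    by_contra hdvd
    have hk' : k' ≠ 0 := by rintro rfl; exact hdvd (dvd_zero k)
    have hkR : (k : ℝ) ≠ 0 := by exact_mod_cast hk
    have hk'R : (k' : ℝ) ≠ 0 := by exact_mod_cast hk'
    -- the limit point
    have hne : (((k' : ℝ) / k : ℝ) : UnitAddCircle) ≠ 0 := by
      intro h
      obtain ⟨n, hn⟩ := (AddCircle.coe_eq_zero_iff (p := (1 : ℝ))).1 h
      apply hdvd
      refine ⟨n, ?_⟩
      rw [zsmul_eq_mul, mul_one, eq_div_iff hkR] at hn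
      have : n * k = k' := by exact_mod_cast hn
      rw [← this]; ring
    set ε := ‖(((k' : ℝ) / k : ℝ) : UnitAddCircle)‖ / 2 with hεd
    have hε : 0 < ε := half_pos (norm_pos_iff.2 hne)
    obtain ⟨N, hN⟩ := AP_sound h0 h1 hb hk' hε
    obtain ⟨M, hM⟩ := hD N
    obtain ⟨δ, hδ, hδ'⟩ := AP_complete h0 h1 hb k M
    set w : UnitAddCircle := ((1 / (k : ℝ) : ℝ) : UnitAddCircle) with hw
    have hw1 : k • w = 0 := by
      rw [hw, ← AddCircle.coe_zsmul]
      refine (AddCircle.coe_eq_zero_iff (p := (1 : ℝ))).2 ⟨1, ?_⟩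
      simp [zsmul_eq_mul, hkR]
    have hw2 : k' • w = (((k' : ℝ) / k : ℝ) : UnitAddCircle) := by
      rw [hw, ← AddCircle.coe_zsmul, zsmul_eq_mul]; congr 1; field_simp
    have hO : IsOpen {z : UnitAddCircle | ‖k • z‖ < δ ∧ ε < ‖k' • z‖} :=
      (isOpen_lt (by fun_prop) continuous_const).and (isOpen_lt continuous_const (by fun_prop))
    obtain ⟨n, hn1, hn2⟩ := (dense_mul (inf_order hb) (c := 16) (by norm_num)).exists_mem_open hO
      ⟨w, by rw [hw1, norm_zero]; exact hδ, by rw [hw2]; linarith⟩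
    have h2 := hN n (hM n (hδ' n (by
      rwa [smul_smul, smul_smul, show k * n * 16 = 16 * n * k by ring] at hn1)))
    rw [smul_smul, smul_smul, show k' * n * 16 = 16 * n * k' by ring] at hn2
    linarith
  · rintro ⟨c, rfl⟩ N
    obtain ⟨δ, hδ, hδ'⟩ := AP_complete h0 h1 hb (k * c) N
    obtain ⟨M, hM⟩ := AP_sound h0 h1 hb hk (ε := δ / (|c| + 1)) (by positivity)
    refine ⟨M, fun n hn => hδ' n ?_⟩
    have h2 := hM n hn
    rw [lt_div_iff₀ (by positivity)] at h2
    have h3 := norm_zsmul_le (n := c) (a := (16 * n * k) • a)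
    rw [Int.norm_eq_abs, smul_smul, show c * (16 * n * k) = 16 * n * (k * c) by ring] at h3
    have := norm_nonneg ((16 * n * k) • a)
    have e : ((|c| : ℤ) : ℝ) = |(c : ℝ)| := by push_cast; rfl
    rw [e] at h2
    nlinarith
end
end

/-- A class of predicates on assignments closed under first-order operations. -/
structure Cl {M : Type} (D : ((ℕ → M) → Prop) → Prop) : Prop where
  not : ∀ {P}, D P → D (fun v => ¬ P v)
  and : ∀ {P Q}, D P → D Q → D (fun v => P v ∧ Q v)
  ex : ∀ {P : (ℕ → M) → M → Prop}, D (fun v => P (fun i => v (i + 1)) (v 0)) →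
    D (fun v => ∃ x, P v x)
  sub : ∀ {P} (σ : ℕ → ℕ), D P → D (fun v => P (fun i => v (σ i)))
  eq : D (fun v => v 0 = v 1)

/-- Definable functions. -/
def DF {M : Type} (D : ((ℕ → M) → Prop) → Prop) (t : (ℕ → M) → M) : Prop :=
  D (fun v => v 0 = t (fun i => v (i + 1)))

namespace Cl
variable {M : Type} {D : ((ℕ → M) → Prop) → Prop} (h : Cl D)
include h

theorem congr {P Q : (ℕ → M) → Prop} (hP : D P) (e : ∀ v, Q v ↔ P v) : D Q := by
  rwa [funext fun v => propext (e v)]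

theorem or {P Q} (hP : D P) (hQ : D Q) : D (fun v => P v ∨ Q v) :=
  h.congr (h.not (h.and (h.not hP) (h.not hQ))) fun v => by tauto

theorem imp {P Q} (hP : D P) (hQ : D Q) : D (fun v => P v → Q v) :=
  h.congr (h.not (h.and hP (h.not hQ))) fun v => by tauto

theorem iff {P Q} (hP : D P) (hQ : D Q) : D (fun v => P v ↔ Q v) :=
  h.congr (h.and (h.imp hP hQ) (h.imp hQ hP)) fun v => by tauto

theorem all {P : (ℕ → M) → M → Prop} (hP : D (fun v => P (fun i => v (i + 1)) (v 0))) :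
    D (fun v => ∀ x, P v x) :=
  h.congr (h.not (h.ex (P := fun v x => ¬ P v x) (h.not hP))) fun v => by push Not; rfl

theorem wk {P} (hP : D P) : D (fun v => P (fun i => v (i + 1))) := h.sub (fun i => i + 1) hP

theorem var (k : ℕ) : DF D (fun v => v k) :=
  h.sub (fun i => if i = 0 then 0 else k + 1) h.eq

theorem wkF {t} (ht : DF D t) : DF D (fun v => t (fun i => v (i + 1))) :=
  h.sub (P := fun v => v 0 = t (fun i => v (i + 1))) (fun i => if i = 0 then 0 else i + 1) ht

theorem lt' {P : M → (ℕ → M) → Prop} {s} (hs : DF D s)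
    (hP : D (fun v => P (v 0) (fun i => v (i + 1)))) : D (fun v => P (s v) v) :=
  h.congr (h.ex (P := fun v x => x = s v ∧ P x v) (h.and hs hP)) fun v => by simp

theorem rel1 {R : M → Prop} (hR : D (fun v => R (v 0))) {s} (hs : DF D s) :
    D (fun v => R (s v)) :=
  h.lt' (P := fun x _ => R x) hs hR

theorem rel2 {R : M → M → Prop} (hR : D (fun v => R (v 0) (v 1))) {s t} (hs : DF D s)
    (ht : DF D t) : D (fun v => R (s v) (t v)) :=
  h.lt' (P := fun x v => R x (t v)) hs <|
    h.lt' (P := fun x v => R (v 0) x) (h.wkF ht) (h.sub (fun i => 1 - i) hR)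

theorem rel3 {R : M → M → M → Prop} (hR : D (fun v => R (v 0) (v 1) (v 2))) {s t u}
    (hs : DF D s) (ht : DF D t) (hu : DF D u) : D (fun v => R (s v) (t v) (u v)) :=
  h.lt' (P := fun x v => R x (t v) (u v)) hs <|
    h.lt' (P := fun x v => R (v 0) x (u (fun i => v (i + 1)))) (h.wkF ht) <|
    h.lt' (P := fun x v => R (v 1) (v 0) x) (h.wkF (h.wkF hu))
      (h.sub (P := fun v => R (v 0) (v 1) (v 2)) (fun i => 2 - i) hR)

theorem eq' {s t} (hs : DF D s) (ht : DF D t) : D (fun v => s v = t v) := h.rel2 h.eq hs ht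

theorem fn1 {f : M → M} (hf : D (fun v => v 0 = f (v 1))) {s} (hs : DF D s) :
    DF D (fun v => f (s v)) :=
  h.rel2 (R := fun x y => x = f y) hf (h.var 0) (h.wkF hs)

theorem fn2 {f : M → M → M} (hf : D (fun v => v 0 = f (v 1) (v 2))) {s t} (hs : DF D s)
    (ht : DF D t) : DF D (fun v => f (s v) (t v)) :=
  h.rel3 (R := fun x y z => x = f y z) hf (h.var 0) (h.wkF hs) (h.wkF ht)

end Cl

section nat
variable {D : ((ℕ → ℕ) → Prop) → Prop} (h : Cl D) (hadd : D (fun v => v 0 = v 1 + v 2))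
include h hadd

theorem nat_le {s t} (hs : DF D s) (ht : DF D t) : D (fun v => s v ≤ t v) :=
  h.congr (h.ex (P := fun v x => t v = s v + x) (h.eq' (h.wkF ht) (h.fn2 hadd (h.wkF hs) (h.var 0))))
    fun v => by rw [le_iff_exists_add]

theorem nat_zero : DF D (fun _ => 0) :=
  h.congr (h.eq' (h.var 0) (h.fn2 hadd (h.var 0) (h.var 0))) fun v => by
    show v 0 = 0 ↔ _
    omega

theorem nat_lt {s t} (hs : DF D s) (ht : DF D t) : D (fun v => s v < t v) :=
  h.congr (h.not (nat_le h hadd ht hs)) fun v => by simp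

theorem nat_one : DF D (fun _ => 1) :=
  h.congr (h.and (nat_lt h hadd (nat_zero h hadd) (h.var 0))
    (h.all (P := fun v x => 0 < x → v 0 ≤ x)
      (h.imp (nat_lt h hadd (nat_zero h hadd) (h.var 0)) (nat_le h hadd (h.var 1) (h.var 0)))))
    fun v => ⟨fun e => by rw [e]; exact ⟨one_pos, fun x hx => hx⟩, fun ⟨h1, h2⟩ => by
      have := h2 1 one_pos
      show v 0 = 1
      omega⟩

/-- Multiplication from divisibility. -/
theorem nat_mul_of_dvd (hd : D (fun v => v 0 ∣ v 1)) : D (fun v => v 0 = v 1 * v 2) := by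
  have z := nat_zero h hadd
  have hs : ∀ {s t}, DF D s → DF D t → DF D (fun v => s v + t v) := h.fn2 hadd
  have hT : D (fun v => v 0 = v 1 * (v 1 + 1)) := by
    refine h.congr (h.or (h.and (h.eq' (h.var 1) z) (h.eq' (h.var 0) z))
      (h.and (h.not (h.eq' (h.var 1) z)) (h.and (nat_lt h hadd z (h.var 0))
      (h.and (h.rel2 hd (h.var 1) (h.var 0)) (h.and (h.rel2 hd (hs (h.var 1) (nat_one h hadd)) (h.var 0))
      (h.all (P := fun v x => 0 < x → v 1 ∣ x → v 1 + 1 ∣ x → v 0 ≤ x)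
        (h.imp (nat_lt h hadd z (h.var 0)) (h.imp (h.rel2 hd (h.var 2) (h.var 0))
          (h.imp (h.rel2 hd (hs (h.var 2) (nat_one h hadd)) (h.var 0))
            (nat_le h hadd (h.var 1) (h.var 0))))))))))) fun v => ?_
    rcases Nat.eq_zero_or_pos (v 1) with h0 | h0
    · simp [h0]
    · have hco : Nat.Coprime (v 1) (v 1 + 1) := by simp
      constructor
      · intro e
        refine Or.inr ⟨h0.ne', by rw [e]; positivity, by rw [e]; exact dvd_mul_right _ _,
          by rw [e]; exact dvd_mul_left _ _, fun x hx h1 h2 => ?_⟩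
        rw [e]
        exact Nat.le_of_dvd hx (hco.mul_dvd_of_dvd_of_dvd h1 h2)
      · rintro (⟨h1, _⟩ | ⟨_, h1, h2, h3, h4⟩)
        · omega
        · refine le_antisymm (h4 _ (by positivity) (dvd_mul_right _ _) (dvd_mul_left _ _))
            (Nat.le_of_dvd h1 (hco.mul_dvd_of_dvd_of_dvd h2 h3))
  have hT' : ∀ {s}, DF D s → DF D (fun v => s v * (s v + 1)) :=
    h.fn1 (f := fun x => x * (x + 1)) hT
  refine h.congr (h.eq' (hT' (hs (h.var 1) (h.var 2)))
    (hs (hs (hs (hT' (h.var 1)) (hT' (h.var 2))) (h.var 0)) (h.var 0))) fun v => ?_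
  constructor
  · intro e; rw [e]; ring
  · intro e; nlinarith

variable (hmul : D (fun v => v 0 = v 1 * v 2))
include hmul

theorem nat_pair : D (fun v => v 0 = Nat.pair (v 1) (v 2)) := by
  have A : ∀ {s t}, DF D s → DF D t → DF D (fun v => s v + t v) := h.fn2 hadd
  have B : ∀ {s t}, DF D s → DF D t → DF D (fun v => s v * t v) := h.fn2 hmul
  have l := nat_lt h hadd (h.var 1) (h.var 2)
  refine h.congr (h.or (h.and l (h.eq' (h.var 0) (A (B (h.var 2) (h.var 2)) (h.var 1))))
    (h.and (h.not l) (h.eq' (h.var 0) (A (A (B (h.var 1) (h.var 1)) (h.var 1)) (h.var 2)))))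
    fun v => ?_
  unfold Nat.pair
  split_ifs with hl <;> simp [hl]

theorem nat_left : D (fun v => v 0 = (Nat.unpair (v 1)).1) := by
  refine h.congr (h.ex (P := fun v x => v 1 = Nat.pair (v 0) x)
    (h.eq' (h.var 2) (h.fn2 (nat_pair h hadd hmul) (h.var 1) (h.var 0)))) fun v => ?_
  constructor
  · intro e; exact ⟨(Nat.unpair (v 1)).2, by rw [e, Nat.pair_unpair]⟩
  · rintro ⟨x, e⟩; rw [e, Nat.unpair_pair]

theorem nat_right : D (fun v => v 0 = (Nat.unpair (v 1)).2) := by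
  refine h.congr (h.ex (P := fun v x => v 1 = Nat.pair x (v 0))
    (h.eq' (h.var 2) (h.fn2 (nat_pair h hadd hmul) (h.var 0) (h.var 1)))) fun v => ?_
  constructor
  · intro e; exact ⟨(Nat.unpair (v 1)).1, by rw [e, Nat.pair_unpair]⟩
  · rintro ⟨x, e⟩; rw [e, Nat.unpair_pair]

theorem nat_mod : D (fun v => v 0 = v 1 % v 2) := by
  have A : ∀ {s t}, DF D s → DF D t → DF D (fun v => s v + t v) := h.fn2 hadd
  have B : ∀ {s t}, DF D s → DF D t → DF D (fun v => s v * t v) := h.fn2 hmul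
  refine h.congr (h.or (h.and (h.eq' (h.var 2) (nat_zero h hadd)) (h.eq' (h.var 0) (h.var 1)))
    (h.and (nat_lt h hadd (h.var 0) (h.var 2)) (h.ex (P := fun v q => v 1 = v 0 + v 2 * q)
      (h.eq' (h.var 2) (A (h.var 1) (B (h.var 3) (h.var 0))))))) fun v => ?_
  rcases Nat.eq_zero_or_pos (v 2) with h0 | h0
  · simp [h0]
  · constructor
    · intro e
      exact Or.inr ⟨by rw [e]; exact Nat.mod_lt _ h0, v 1 / v 2, by
        rw [e]; exact (Nat.mod_add_div _ _).symm⟩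
    · rintro (⟨h1, _⟩ | ⟨h1, q, h2⟩)
      · omega
      · rw [h2, Nat.add_mul_mod_self_left, Nat.mod_eq_of_lt h1]

theorem nat_beta : D (fun v => v 0 = Nat.beta (v 1) (v 2)) := by
  have A : ∀ {s t}, DF D s → DF D t → DF D (fun v => s v + t v) := h.fn2 hadd
  have B : ∀ {s t}, DF D s → DF D t → DF D (fun v => s v * t v) := h.fn2 hmul
  have o := nat_one h hadd
  exact h.eq' (h.var 0) (h.fn2 (f := fun x y => x % y) (nat_mod h hadd hmul)
    (h.fn1 (f := fun x => (Nat.unpair x).1) (nat_left h hadd hmul) (h.var 1))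
    (A (B (A (h.var 2) o) (h.fn1 (f := fun x => (Nat.unpair x).2) (nat_right h hadd hmul) (h.var 1))) o))

omit hadd hmul h in
theorem rec_beta (f g : ℕ →. ℕ) (a n m : ℕ) :
    m ∈ (n.rec (f a) fun y IH => do let i ← IH; g (Nat.pair a (Nat.pair y i)) : Part ℕ) ↔
    ∃ c, Nat.beta c 0 ∈ f a ∧ (∀ y, y < n →
      Nat.beta c (y + 1) ∈ g (Nat.pair a (Nat.pair y (Nat.beta c y)))) ∧ m = Nat.beta c n := by
  let F : ℕ → Part ℕ := fun n => n.rec (f a) fun y IH => do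
    let i ← IH; g (Nat.pair a (Nat.pair y i))
  have F0 : F 0 = f a := rfl
  have Fs : ∀ n x, x ∈ F (n + 1) ↔ ∃ i, i ∈ F n ∧ x ∈ g (Nat.pair a (Nat.pair n i)) := by
    intro n x
    show x ∈ (F n >>= fun i => g (Nat.pair a (Nat.pair n i))) ↔ _
    simp
  change m ∈ F n ↔ _
  constructor
  · intro hm
    have key : ∀ n m, m ∈ F n → ∃ s : ℕ → ℕ, s 0 ∈ f a ∧ (∀ y, y < n →
        s (y + 1) ∈ g (Nat.pair a (Nat.pair y (s y)))) ∧ s n = m := by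
      intro n
      induction n with
      | zero => intro m hm; exact ⟨fun _ => m, hm, by simp, rfl⟩
      | succ n ih =>
        intro m hm
        obtain ⟨i, hi, hm⟩ := (Fs _ _).1 hm
        obtain ⟨s, h0, h1, h2⟩ := ih i hi
        refine ⟨fun k => if k = n + 1 then m else s k, by simpa using h0, fun y hy => ?_, by simp⟩
        rcases Nat.lt_succ_iff_lt_or_eq.1 hy with hy' | rfl
        · have e1 : y + 1 ≠ n + 1 := by omega
          have e2 : y ≠ n + 1 := by omega
          simp only [e1, e2, if_false]
          exact h1 y hy'
        · simp [h2, hm]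
    obtain ⟨s, h0, h1, h2⟩ := key n m hm
    let l := (List.range (n + 1)).map s
    have hl : ∀ i, i ≤ n → Nat.beta (Nat.unbeta l) i = s i := by
      intro i hi
      have := Nat.beta_unbeta_coe l ⟨i, by simp [l]; omega⟩
      simpa [l] using this
    refine ⟨Nat.unbeta l, by rw [hl 0 (Nat.zero_le _)]; exact h0, fun y hy => ?_, ?_⟩
    · rw [hl y (by omega), hl (y + 1) (by omega)]; exact h1 y hy
    · rw [hl n le_rfl, h2]
  · rintro ⟨c, h0, h1, rfl⟩
    have : ∀ k, k ≤ n → Nat.beta c k ∈ F k := by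
      intro k
      induction k with
      | zero => intro _; exact h0
      | succ k ih => intro hk; exact (Fs _ _).2 ⟨_, ih (by omega), h1 k (by omega)⟩
    exact this n le_rfl

theorem nat_partrec {f : ℕ →. ℕ} (hf : Nat.Partrec f) : D (fun v => v 1 ∈ f (v 0)) := by
  have A : ∀ {s t}, DF D s → DF D t → DF D (fun v => s v + t v) := h.fn2 hadd
  have o := nat_one h hadd
  have z := nat_zero h hadd
  have p : ∀ {s t}, DF D s → DF D t → DF D (fun v => Nat.pair (s v) (t v)) :=
    h.fn2 (nat_pair h hadd hmul)
  have be : ∀ {s t}, DF D s → DF D t → DF D (fun v => Nat.beta (s v) (t v)) :=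
    h.fn2 (nat_beta h hadd hmul)
  have le : ∀ {s}, DF D s → DF D (fun v => (Nat.unpair (s v)).1) :=
    h.fn1 (f := fun x => (Nat.unpair x).1) (nat_left h hadd hmul)
  have ri : ∀ {s}, DF D s → DF D (fun v => (Nat.unpair (s v)).2) :=
    h.fn1 (f := fun x => (Nat.unpair x).2) (nat_right h hadd hmul)
  have ap : ∀ {f : ℕ →. ℕ}, D (fun v => v 1 ∈ f (v 0)) → ∀ {s t}, DF D s → DF D t →
      D (fun v => t v ∈ f (s v)) := fun {f} hf {s t} hs ht =>
    h.rel2 (R := fun x y => y ∈ f x) hf hs ht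
  induction hf with
  | zero => exact h.congr (h.eq' (h.var 1) z) fun v => by simp [pure, PFun.pure]
  | succ => exact h.congr (h.eq' (h.var 1) (A (h.var 0) o)) fun v => by simp
  | left => exact h.congr (h.eq' (h.var 1) (le (h.var 0))) fun v => by simp
  | right => exact h.congr (h.eq' (h.var 1) (ri (h.var 0))) fun v => by simp
  | @pair f g _ _ hf hg =>
    refine h.congr (h.ex (P := fun v x => ∃ y, x ∈ f (v 0) ∧ y ∈ g (v 0) ∧ v 1 = Nat.pair x y)
      (h.ex (P := fun v y => v 0 ∈ f (v 1) ∧ y ∈ g (v 1) ∧ v 2 = Nat.pair (v 0) y)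
      (h.and (ap hf (h.var 2) (h.var 1)) (h.and (ap hg (h.var 2) (h.var 0))
        (h.eq' (h.var 3) (p (h.var 1) (h.var 0))))))) fun v => ?_
    simp [Seq.seq, eq_comm]
  | @comp f g _ _ hf hg =>
    refine h.congr (h.ex (P := fun v x => x ∈ g (v 0) ∧ v 1 ∈ f x)
      (h.and (ap hg (h.var 1) (h.var 0)) (ap hf (h.var 0) (h.var 2)))) fun v => ?_
    exact Part.mem_bind_iff.trans (by simp)
  | @prec f g _ _ hf hg =>
    refine h.congr (h.ex (P := fun v c => Nat.beta c 0 ∈ f (Nat.unpair (v 0)).1 ∧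
      (∀ y, y < (Nat.unpair (v 0)).2 → Nat.beta c (y + 1) ∈
        g (Nat.pair (Nat.unpair (v 0)).1 (Nat.pair y (Nat.beta c y)))) ∧
      v 1 = Nat.beta c (Nat.unpair (v 0)).2)
      (h.and (ap hf (le (h.var 1)) (be (h.var 0) z)) (h.and
        (h.all (P := fun v y => y < (Nat.unpair (v 1)).2 → Nat.beta (v 0) (y + 1) ∈
          g (Nat.pair (Nat.unpair (v 1)).1 (Nat.pair y (Nat.beta (v 0) y))))
          (h.imp (nat_lt h hadd (h.var 0) (ri (h.var 2)))
            (ap hg (p (le (h.var 2)) (p (h.var 0) (be (h.var 1) (h.var 0))))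
              (be (h.var 1) (A (h.var 0) o)))))
        (h.eq' (h.var 2) (be (h.var 0) (ri (h.var 1))))))) fun v => ?_
    exact rec_beta f g _ _ _
  | @rfind f _ hf =>
    refine h.congr (h.and (ap hf (p (h.var 0) (h.var 1)) z)
      (h.all (P := fun v k => k < v 1 → ∃ x, x ∈ f (Nat.pair (v 0) k) ∧ x ≠ 0)
        (h.imp (nat_lt h hadd (h.var 0) (h.var 2))
        (h.ex (P := fun v x => x ∈ f (Nat.pair (v 1) (v 0)) ∧ x ≠ 0)
          (h.and (ap hf (p (h.var 2) (h.var 1)) (h.var 0)) (h.not (h.eq' (h.var 0) z))))))) fun v => ?_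
    exact Nat.mem_rfind.trans (by simp)
end nat

/-- Definable predicates in the structure `S g`. -/
def DZ (g : ℤ → ℤ) (P : (ℕ → ℤ) → Prop) : Prop :=
  ∃ φ : L.Formula ℕ, ∀ v, @Formula.Realize L ℤ (S g) ℕ φ v ↔ P v

/-- The symbols. -/
def sAdd : L.Functions 2 := ()
def sG : L.Functions 1 := ()
def sLt : L.Relations 2 := ()

theorem DZ_cl (g : ℤ → ℤ) : Cl (DZ g) where
  not := by
    rintro P ⟨φ, hφ⟩
    refine ⟨∼φ, fun v => ?_⟩
    exact not_congr (hφ v)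
  and := by
    rintro P Q ⟨φ, hφ⟩ ⟨ψ, hψ⟩
    refine ⟨φ ⊓ ψ, fun v => ?_⟩
    exact (@Formula.realize_inf L ℤ (S g) ℕ φ ψ v).trans (and_congr (hφ v) (hψ v))
  ex := by
    rintro P ⟨φ, hφ⟩
    let f : ℕ → ℕ ⊕ Unit := fun i => Nat.casesOn i (Sum.inr ()) Sum.inl
    refine ⟨Formula.iExs Unit (φ.relabel f), fun v => ?_⟩
    rw [@Formula.realize_iExs L ℤ (S g)]
    constructor
    · rintro ⟨i, hi⟩
      rw [@Formula.realize_relabel L ℤ (S g), hφ] at hi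
      exact ⟨i (), hi⟩
    · rintro ⟨x, hx⟩
      refine ⟨fun _ => x, ?_⟩
      rw [@Formula.realize_relabel L ℤ (S g), hφ]
      exact hx
  sub := by
    rintro P σ ⟨φ, hφ⟩
    refine ⟨φ.relabel σ, fun v => ?_⟩
    rw [@Formula.realize_relabel L ℤ (S g), hφ]
    rfl
  eq := ⟨Term.equal (Term.var 0) (Term.var 1), fun v => by
    rw [@Formula.realize_equal L ℤ (S g)]; rfl⟩

theorem DZ_lt (g : ℤ → ℤ) : DZ g (fun v => v 0 < v 1) :=
  ⟨sLt.formula ![Term.var 0, Term.var 1], fun v => by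
    rw [@Formula.realize_rel L ℤ (S g)]; rfl⟩

theorem DZ_add (g : ℤ → ℤ) : DZ g (fun v => v 0 = v 1 + v 2) :=
  ⟨Term.equal (Term.var 0) (Term.func sAdd ![Term.var 1, Term.var 2]), fun v => by
    rw [@Formula.realize_equal L ℤ (S g)]; rfl⟩

theorem DZ_g (g : ℤ → ℤ) : DZ g (fun v => v 0 = g (v 1)) :=
  ⟨Term.equal (Term.var 0) (Term.func sG ![Term.var 1]), fun v => by
    rw [@Formula.realize_equal L ℤ (S g)]; rfl⟩

section
variable (g : ℤ → ℤ)

theorem DZ_lt' {s t} (hs : DF (DZ g) s) (ht : DF (DZ g) t) : DZ g (fun v => s v < t v) :=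
  (DZ_cl g).rel2 (DZ_lt g) hs ht

theorem DZ_le' {s t} (hs : DF (DZ g) s) (ht : DF (DZ g) t) : DZ g (fun v => s v ≤ t v) :=
  (DZ_cl g).congr ((DZ_cl g).not (DZ_lt' g ht hs)) fun v => by simp

theorem DZ_add' {s t} (hs : DF (DZ g) s) (ht : DF (DZ g) t) : DF (DZ g) (fun v => s v + t v) :=
  (DZ_cl g).fn2 (DZ_add g) hs ht

theorem DZ_sub' {s t} (hs : DF (DZ g) s) (ht : DF (DZ g) t) : DF (DZ g) (fun v => s v - t v) := by
  have h := DZ_cl g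
  refine h.fn2 (f := fun x y => x - y) (h.congr (h.eq' (h.var 1) (DZ_add' g (h.var 0) (h.var 2)))
    fun v => ?_) hs ht
  constructor <;> intro e <;> omega

theorem DZ_zero : DF (DZ g) (fun _ => 0) := by
  have h := DZ_cl g
  refine h.congr (h.eq' (h.var 0) (DZ_add' g (h.var 0) (h.var 0))) fun v => ?_
  show v 0 = 0 ↔ _
  omega

theorem DZ_one : DF (DZ g) (fun _ => 1) := by
  have h := DZ_cl g
  refine h.congr (h.and (DZ_lt' g (DZ_zero g) (h.var 0))
    (h.all (P := fun v x => 0 < x → v 0 ≤ x)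
      (h.imp (DZ_lt' g (DZ_zero g) (h.var 0)) (DZ_le' g (h.var 1) (h.var 0))))) fun v => ?_
  show v 0 = 1 ↔ _
  constructor
  · intro e
    rw [e]
    exact ⟨one_pos, fun x hx => hx⟩
  · rintro ⟨h1, h2⟩
    have := h2 1 one_pos
    omega

variable (G : ℤ → Prop) (hG : DZ g (fun v => G (v 0)))
include hG

theorem DZ_Sym {s t} (hs : DF (DZ g) s) (ht : DF (DZ g) t) :
    DZ g (fun v => Sym G (s v) (t v)) := by
  have h := DZ_cl g
  refine h.all (P := fun v i => -(s v) ≤ i → i ≤ s v → (G (t v + i) ↔ G (t v - i))) ?_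
  refine h.congr (h.imp (DZ_le' g (DZ_sub' g (DZ_zero g) (h.wkF hs)) (h.var 0))
    (h.imp (DZ_le' g (h.var 0) (h.wkF hs))
      (h.iff (h.rel1 hG (DZ_add' g (h.wkF ht) (h.var 0)))
        (h.rel1 hG (DZ_sub' g (h.wkF ht) (h.var 0)))))) fun v => ?_
  simp only [zero_sub]

theorem DZ_BB {s t} (hs : DF (DZ g) s) (ht : DF (DZ g) t) :
    DZ g (fun v => BB G (s v) (t v)) := by
  have h := DZ_cl g
  have A : ∀ {s t}, DF (DZ g) s → DF (DZ g) t → DF (DZ g) (fun v => s v + t v) := DZ_add' g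
  have B : ∀ {s t}, DF (DZ g) s → DF (DZ g) t → DF (DZ g) (fun v => s v - t v) := DZ_sub' g
  have hs2 := h.wkF (h.wkF hs)
  have ht2 := h.wkF (h.wkF ht)
  refine h.all (P := fun v K => ∃ r, Sym G K r ∧ G (r + (s v + t v) + (s v + t v)) ∧
    G (r + (s v - t v) + (s v - t v))) ?_
  refine h.ex (P := fun w r => Sym G (w 0) r ∧
    G (r + (s (fun i => w (i + 1)) + t (fun i => w (i + 1))) +
      (s (fun i => w (i + 1)) + t (fun i => w (i + 1)))) ∧
    G (r + (s (fun i => w (i + 1)) - t (fun i => w (i + 1))) +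
      (s (fun i => w (i + 1)) - t (fun i => w (i + 1))))) ?_
  exact h.and (DZ_Sym g G hG (h.var 1) (h.var 0))
    (h.and (h.rel1 hG (A (A (h.var 0) (A hs2 ht2)) (A hs2 ht2)))
      (h.rel1 hG (A (A (h.var 0) (B hs2 ht2)) (B hs2 ht2))))

theorem DZ_AP {M n k} (hM : DF (DZ g) M) (hn : DF (DZ g) n) (hk : DF (DZ g) k) :
    DZ g (fun v => AP G (M v) (n v) (k v)) := by
  have h := DZ_cl g
  refine h.all (P := fun v l => -(M v) ≤ l → l ≤ M v → (BB G l (k v) ↔ BB G (l + n v) (k v))) ?_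
  refine h.congr (h.imp (DZ_le' g (DZ_sub' g (DZ_zero g) (h.wkF hM)) (h.var 0))
    (h.imp (DZ_le' g (h.var 0) (h.wkF hM))
      (h.iff (DZ_BB g G hG (h.var 0) (h.wkF hk))
        (DZ_BB g G hG (DZ_add' g (h.var 0) (h.wkF hn)) (h.wkF hk))))) fun v => ?_
  simp only [zero_sub]

theorem DZ_Dv : DZ g (fun v => Dv G (v 0) (v 1)) := by
  have h := DZ_cl g
  refine h.all (P := fun v N => ∃ M, ∀ n, AP G M n (v 0) → AP G N n (v 1)) ?_
  refine h.ex (P := fun v M => ∀ n, AP G M n (v 1) → AP G (v 0) n (v 2)) ?_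
  refine h.all (P := fun v n => AP G (v 0) n (v 2) → AP G (v 1) n (v 3)) ?_
  exact h.imp (DZ_AP g G hG (h.var 1) (h.var 0) (h.var 3))
    (DZ_AP g G hG (h.var 2) (h.var 0) (h.var 4))

end

/-- Predicates on naturals definable in the structure. -/
def DN (g : ℤ → ℤ) (P : (ℕ → ℕ) → Prop) : Prop := DZ g (fun v => P (fun i => (v i).toNat))

theorem DZ_max (g : ℤ → ℤ) {s} (hs : DF (DZ g) s) : DF (DZ g) (fun v => ((s v).toNat : ℤ)) := by
  have h := DZ_cl g
  refine h.fn1 (f := fun x => (x.toNat : ℤ)) (h.congr (h.or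
    (h.and (DZ_le' g (DZ_zero g) (h.var 1)) (h.eq' (h.var 0) (h.var 1)))
    (h.and (DZ_lt' g (h.var 1) (DZ_zero g)) (h.eq' (h.var 0) (DZ_zero g)))) fun v => ?_) hs
  show v 0 = ((v 1).toNat : ℤ) ↔ _
  omega

theorem DN_cl (g : ℤ → ℤ) : Cl (DN g) where
  not := (DZ_cl g).not
  and := (DZ_cl g).and
  ex := by
    intro P hP
    refine (DZ_cl g).congr ((DZ_cl g).ex
      (P := fun v x => P (fun i => (v i).toNat) x.toNat) hP) fun v => ?_
    constructor
    · rintro ⟨x, hx⟩; exact ⟨x, by simpa using hx⟩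
    · rintro ⟨x, hx⟩; exact ⟨_, hx⟩
  sub := fun σ hP => (DZ_cl g).sub σ hP
  eq := by
    have h := DZ_cl g
    refine h.congr (h.eq' (DZ_max g (h.var 0)) (DZ_max g (h.var 1))) fun v => ?_
    simp only [Nat.cast_inj]

theorem DN_add (g : ℤ → ℤ) : DN g (fun v => v 0 = v 1 + v 2) := by
  have h := DZ_cl g
  refine h.congr (h.eq' (DZ_max g (h.var 0)) (DZ_add' g (DZ_max g (h.var 1)) (DZ_max g (h.var 2))))
    fun v => ?_
  show (v 0).toNat = (v 1).toNat + (v 2).toNat ↔ _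
  omega

theorem DN_mul (g : ℤ → ℤ) (hd : DZ g (fun v => v 0 ≠ 0 ∧ v 0 ∣ v 1)) :
    DN g (fun v => v 0 = v 1 * v 2) := by
  refine nat_mul_of_dvd (DN_cl g) (DN_add g) ?_
  have h := DZ_cl g
  have h0 := DZ_max g (h.var 0)
  have h1 := DZ_max g (h.var 1)
  refine h.congr (h.or (h.and (h.eq' h0 (DZ_zero g)) (h.eq' h1 (DZ_zero g)))
    (h.rel2 (R := fun x y => x ≠ 0 ∧ x ∣ y) hd h0 h1)) fun v => ?_
  show (v 0).toNat ∣ (v 1).toNat ↔ _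
  rw [Int.natCast_dvd_natCast]
  by_cases e : (v 0).toNat = 0
  · rw [e]; simp
  · have e' : ((v 0).toNat : ℤ) ≠ 0 := by exact_mod_cast e
    constructor
    · intro h2; exact Or.inr ⟨e', h2⟩
    · rintro (⟨h2, _⟩ | ⟨_, h2⟩)
      · exact absurd h2 e'
      · exact h2

/-- bridging -/
theorem dvd_def (α ρ : ℝ) (hρ0 : 0 < ρ) (hρ4 : ρ < 1 / 4)
    (hα : ¬ ∃ q r : ℚ, α = (q : ℝ) + (r : ℝ) * ρ) (g : ℤ → ℤ)
    (hg1 : ∀ n : ℤ, g n = 1 ↔ |α * n ^ 2 - round (α * n ^ 2)| < ρ) :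
    DZ g (fun v => v 0 ≠ 0 ∧ v 0 ∣ v 1) := by
  have h := DZ_cl g
  have hGp : ∀ n, Gp (α : UnitAddCircle) ρ n ↔ g n = 1 := by
    intro n
    rw [hg1, ← UnitAddCircle.norm_eq]
    unfold Gp
    rw [← AddCircle.coe_zsmul, zsmul_eq_mul, mul_comm]
    push_cast
    rfl
  have hG : DZ g (fun v => Gp (α : UnitAddCircle) ρ (v 0)) := by
    refine h.congr (h.eq' (h.fn1 (DZ_g g) (h.var 0)) (DZ_one g)) fun v => hGp _
  have hb : ∀ m j : ℤ, m ≠ 0 → m • (α : UnitAddCircle) ≠ j • (ρ : UnitAddCircle) := by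
    intro m j hm e
    rw [← sub_eq_zero, ← AddCircle.coe_zsmul, ← AddCircle.coe_zsmul, ← AddCircle.coe_sub,
      AddCircle.coe_eq_zero_iff] at e
    obtain ⟨n, hn⟩ := e
    simp only [zsmul_eq_mul, mul_one] at hn
    have hmR : (m : ℝ) ≠ 0 := by exact_mod_cast hm
    refine hα ⟨n / m, j / m, ?_⟩
    push_cast
    field_simp
    linarith
  refine h.congr (h.and (h.not (h.eq' (h.var 0) (DZ_zero g))) (DZ_Dv g _ hG)) fun v => ?_
  refine and_congr_right fun hk => ?_
  exact (Dv_iff hρ0 hρ4 hb hk _).symm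

/-- terms `x + (x + ...)`. -/
def tm : ℕ → L.Term (Empty ⊕ Fin 2)
  | 0 => Term.var (Sum.inr 0)
  | n + 1 => Term.func sAdd ![Term.var (Sum.inr 0), tm n]

theorem tm_realize (g : ℤ → ℤ) (v : Empty ⊕ Fin 2 → ℤ) (n : ℕ) :
    @Term.realize L ℤ (S g) _ v (tm n) = (n + 1) * v (Sum.inr 0) := by
  induction n with
  | zero => simp [tm]
  | succ n ih =>
    have : @Term.realize L ℤ (S g) _ v (tm (n + 1)) =
      v (Sum.inr 0) + @Term.realize L ℤ (S g) _ v (tm n) := rfl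
    rw [this, ih]; push_cast; ring

/-- the sentences -/
def sn (ψ : L.BoundedFormula Empty 2) (n : ℕ) : L.Sentence :=
  BoundedFormula.all (BoundedFormula.all (BoundedFormula.imp
    (BoundedFormula.equal (tm n) (Term.var (Sum.inr 1))) ψ))

theorem tm_encode (n : ℕ) : (tm (n + 1)).listEncode =
    Sum.inr (⟨2, sAdd⟩ : Σ i, L.Functions i) :: Sum.inl (Sum.inr 0) :: (tm n).listEncode := by
  show Term.listEncode (Term.func sAdd ![Term.var (Sum.inr 0), tm n]) = _
  simp [Term.listEncode, List.finRange_succ]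

theorem primrec_tm : Primrec (fun n => Encodable.encode (tm n)) := by
  have e : ∀ n, Encodable.encode (tm n) = Encodable.encode (tm n).listEncode := fun n => rfl
  let a := Encodable.encode (Sum.inr (⟨2, sAdd⟩ : Σ i, L.Functions i) :
    (Empty ⊕ Fin 2) ⊕ (Σ i, L.Functions i))
  let b := Encodable.encode (Sum.inl (Sum.inr 0) :
    (Empty ⊕ Fin 2) ⊕ (Σ i, L.Functions i))
  have hs : ∀ n, Encodable.encode (tm (n + 1)) =
      Nat.succ (Nat.pair a (Nat.succ (Nat.pair b (Encodable.encode (tm n))))) := by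
    intro n
    rw [e, e, tm_encode, Encodable.encode_list_cons, Encodable.encode_list_cons]
  have : Primrec (fun n : ℕ => (Nat.rec (Encodable.encode (tm 0))
      (fun _ x => Nat.succ (Nat.pair a (Nat.succ (Nat.pair b x)))) n : ℕ)) := by
    refine Primrec.nat_rec₁ _ ?_
    exact Primrec.succ.comp (Primrec₂.natPair.comp (Primrec.const _)
      (Primrec.succ.comp (Primrec₂.natPair.comp (Primrec.const _) Primrec.snd)))
  refine this.of_eq fun n => ?_
  induction n with
  | zero => rfl
  | succ n ih => rw [hs, ← ih]

theorem primrec_sn (ψ : L.BoundedFormula Empty 2) :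
    Primrec (fun n => Encodable.encode (sn ψ n)) := by
  have e : ∀ n, Encodable.encode (sn ψ n) = Encodable.encode (sn ψ n).listEncode := fun n => rfl
  have e2 : ∀ n, (sn ψ n).listEncode =
    Sum.inr (Sum.inr 1) :: Sum.inr (Sum.inr 1) :: Sum.inr (Sum.inr 0) ::
      Sum.inl (⟨2, tm n⟩ : Σ k, L.Term (Empty ⊕ Fin k)) ::
      Sum.inl (⟨2, Term.var (Sum.inr 1)⟩ : Σ k, L.Term (Empty ⊕ Fin k)) :: ψ.listEncode :=
    fun n => rfl
  simp only [e, e2, Encodable.encode_list_cons]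
  have P : ∀ {c : ℕ} {f : ℕ → ℕ}, Primrec f → Primrec (fun n => Nat.succ (Nat.pair c (f n))) :=
    fun hf => Primrec.succ.comp (Primrec₂.natPair.comp (Primrec.const _) hf)
  refine P (P (P (Primrec.succ.comp (Primrec₂.natPair.comp ?_ (Primrec.const _)))))
  simp only [Encodable.encode_inl, Encodable.encode_sigma_val]
  exact Primrec.nat_mul.comp (Primrec.const 2) (Primrec₂.natPair.comp (Primrec.const _) primrec_tm)

theorem not_computable (g : ℤ → ℤ) (hd : DZ g (fun v => v 0 ≠ 0 ∧ v 0 ∣ v 1)) :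
    ¬ ComputablePred (fun c => c ∈ theoryCodes g) := by
  intro hC
  let f : ℕ →. ℕ := fun y => Nat.Partrec.Code.eval (Denumerable.ofNat Nat.Partrec.Code (y - 1)) 0
  have hf : Nat.Partrec f := by
    rw [← Partrec.nat_iff]
    exact Nat.Partrec.Code.eval_part.comp ((Computable.ofNat _).comp
      (Primrec.to_comp Primrec.pred)) (Computable.const 0)
  have hN := nat_partrec (DN_cl g) (DN_add g) (DN_mul g hd) hf
  have hN2 : DN g (fun v => ∃ m, m ∈ f (v 0)) :=
    (DN_cl g).ex (P := fun v m => m ∈ f (v 0))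
      ((DN_cl g).sub (P := fun v => v 1 ∈ f (v 0)) (fun i => 1 - i) hN)
  have h := DZ_cl g
  obtain ⟨θ, hθ⟩ := h.imp (h.eq' (h.var 0) (DZ_one g)) (h.sub (fun i => i + 1) hN2)
  let ψ : L.BoundedFormula Empty 2 :=
    BoundedFormula.relabel (n := 2) (k := 0)
      (fun i : ℕ => (Sum.inr (if i = 0 then 0 else 1) : Empty ⊕ Fin 2)) θ
  have key : ∀ n : ℕ, Encodable.encode (sn ψ n) ∈ theoryCodes g ↔
      (Nat.Partrec.Code.eval (Denumerable.ofNat Nat.Partrec.Code n) 0).Dom := by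
    intro n
    have k1 : Encodable.encode (sn ψ n) ∈ theoryCodes g ↔
        @Sentence.Realize L ℤ (S g) (sn ψ n) := by
      constructor
      · rintro ⟨φ, hφ, h2⟩
        rwa [Encodable.encode_injective hφ] at h2
      · intro h2; exact ⟨_, rfl, h2⟩
    have k2 : ∀ xs : Fin 2 → ℤ, @BoundedFormula.Realize L ℤ (S g) _ _ ψ default xs ↔
        (xs 0 = 1 → ∃ m, m ∈ f (xs 1).toNat) := by
      intro xs
      rw [@BoundedFormula.realize_relabel L ℤ (S g)]
      refine Iff.trans (iff_of_eq ?_) (hθ (fun i => xs (if i = 0 then 0 else 1)))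
      unfold Formula.Realize
      congr 1
      exact Subsingleton.elim _ _
    rw [k1]
    have k3 : @Sentence.Realize L ℤ (S g) (sn ψ n) ↔ ∀ x y : ℤ, (n + 1) * x = y →
        (x = 1 → ∃ m, m ∈ f y.toNat) := by
      unfold sn Sentence.Realize Formula.Realize
      refine forall_congr' fun x => forall_congr' fun y => ?_
      refine imp_congr ?_ ((iff_of_eq ?_).trans (k2 ![x, y]))
      · show @Term.realize L ℤ (S g) _ _ (tm n) = _ ↔ _
        rw [tm_realize]
        simp [Fin.snoc]
      · congr 1
        · exact Subsingleton.elim _ _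
        · funext i
          fin_cases i <;> simp [Fin.snoc]
    rw [k3]
    constructor
    · intro H
      have := H 1 (n + 1) (by ring) rfl
      rw [show ((n : ℤ) + 1).toNat = n + 1 by omega] at this
      exact Part.dom_iff_mem.2 this
    · rintro H x y h1 rfl
      rw [← h1, show (((n : ℤ) + 1) * 1).toNat = n + 1 by omega]
      exact Part.dom_iff_mem.1 H
  apply ComputablePred.halting_problem 0
  obtain ⟨i, hi⟩ := hC
  have h3 : ComputablePred (fun c : Nat.Partrec.Code =>
      Encodable.encode (sn ψ (Encodable.encode c)) ∈ theoryCodes g) :=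
    ⟨fun c => i _, hi.comp ((primrec_sn ψ).to_comp.comp Computable.encode)⟩
  refine h3.of_eq fun c => ?_
  rw [key, Denumerable.ofNat_encode]

open scoped Classical in
theorem undecidable (α ρ : ℝ) (hρ0 : 0 < ρ) (hρ4 : ρ < 1 / 4)
    (hα : ¬ ∃ q r : ℚ, α = (q : ℝ) + (r : ℝ) * ρ)
    (g : ℤ → ℤ)
    (hg : ∀ n : ℤ, g n = if |α * n ^ 2 - round (α * n ^ 2)| < ρ then 1 else 0) :
    ¬ ComputablePred (fun c => c ∈ theoryCodes g) := by
  refine not_computable g (dvd_def α ρ hρ0 hρ4 hα g fun n => ?_)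
  rw [hg]
  split_ifs with hc <;> simp [hc]

end Stmt2
end
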